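/- If ψ > ψ*(0) := min_{c∈ℝ} F₀(c,1)², then there exists κ̄ > 0 such that P(κ_n(y,X) ≥ κ̄) → 1 as n → ∞; and if ψ ≤ ψ*(0), then for every κ̄ > 0 one has P(κ_n(y,X) ≥ κ̄) → 0 as n → ∞. In other words, the data are linearly separable with a margin bounded away from 0 if and only if ψ > ψ*(0). -/

import Mathlib

open MeasureTheory ProbabilityTheory Real Filter Set Topology

noncomputable section

namespace MaxMargin

/-- The standard Gaussian measure on `ℝ`. -/
def stdG : Measure ℝ := gaussianReal 0 1

/-- The function `F_κ(c₁,c₂) = (E[((κ − c₁·Y·G − c₂·Z)₊)²])^{1/2}` where `G, Z` are independent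
standard Gaussians and, conditionally on `G`, `Y ∈ {+1,−1}` with `P(Y = +1 | G) = f(G)`. -/
def Fk (f : ℝ → ℝ) (κ c₁ c₂ : ℝ) : ℝ :=
  Real.sqrt (∫ g, ∫ z,
    (f g * (max (κ - c₁ * g - c₂ * z) 0) ^ 2
      + (1 - f g) * (max (κ + c₁ * g - c₂ * z) 0) ^ 2) ∂stdG ∂stdG)

/-- Non-degeneracy of `f`: the variable `T = Y·G` satisfies `P(T < x) > 0` and `P(T > x) > 0`
for every `x ∈ ℝ`. -/
def NonDeg (f : ℝ → ℝ) : Prop :=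
  ∀ x : ℝ,
    (0 < ∫ g, (f g * (if g < x then (1:ℝ) else 0)
          + (1 - f g) * (if -g < x then (1:ℝ) else 0)) ∂stdG) ∧
    (0 < ∫ g, (f g * (if x < g then (1:ℝ) else 0)
          + (1 - f g) * (if x < -g then (1:ℝ) else 0)) ∂stdG)


/-- Points of `ℝ³` carrying the coordinates `(G, X, W)`. -/
abbrev Pt : Type := ℝ × ℝ × ℝ

/-- First coordinate `G`. -/
def Gc : Pt → ℝ := fun q => q.1

/-- Second coordinate `X`. -/
def Xc : Pt → ℝ := fun q => q.2.1

/-- Third coordinate `W`. -/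
def Wc : Pt → ℝ := fun q => q.2.2

/-- The inner product `⟨h₁,h₂⟩_P = E_P[h₁h₂]`. -/
def ip (P : Measure Pt) (h₁ h₂ : Pt → ℝ) : ℝ := ∫ q, h₁ q * h₂ q ∂P

/-- The norm `‖h‖_P = ⟨h,h⟩_P^{1/2}`. -/
def pnorm (P : Measure Pt) (h : Pt → ℝ) : ℝ := Real.sqrt (ip P h h)

/-- Projection onto the orthogonal complement of `W`: `Π_{W⊥}(h) = h − ⟨h,W⟩_P·W`. -/
def projW (P : Measure Pt) (h : Pt → ℝ) : Pt → ℝ := fun q => h q - ip P h Wc * Wc q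

/-- Partial derivative of `F_κ` in its first argument. -/
def d1F (f : ℝ → ℝ) (κ c₁ c₂ : ℝ) : ℝ := deriv (fun t => Fk f κ t c₂) c₁

/-- Partial derivative of `F_κ` in its second argument. -/
def d2F (f : ℝ → ℝ) (κ c₁ c₂ : ℝ) : ℝ := deriv (fun t => Fk f κ c₁ t) c₂

/-- `ψ*(0) = min_{c ∈ ℝ} F₀(c,1)²`. -/
def psiStar0 (f : ℝ → ℝ) : ℝ := ⨅ c : ℝ, (Fk f 0 c 1) ^ 2

/-- The functional `𝓡_{ψ,κ,P}(h) = ψ^{−1/2}·F_κ(⟨h, X^{1/2}W⟩_P, ‖Π_{W⊥}(X^{1/2}h)‖_P)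
+ ⟨h, X^{1/2}·Π_{W⊥}(G)⟩_P`. -/
def Rfun (f : ℝ → ℝ) (P : Measure Pt) (ψ κ : ℝ) (h : Pt → ℝ) : ℝ :=
  (Real.sqrt ψ)⁻¹ *
      Fk f κ (ip P h (fun q => Real.sqrt (Xc q) * Wc q))
        (pnorm P (projW P (fun q => Real.sqrt (Xc q) * h q)))
    + ip P h (fun q => Real.sqrt (Xc q) * projW P Gc q)

/-- `ζ(P) = ‖X^{−1/2}W‖_P^{−1}`. -/
def zetaP (P : Measure Pt) : ℝ := (pnorm P (fun q => (Real.sqrt (Xc q))⁻¹ * Wc q))⁻¹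

/-- The Euclidean (ℓ²) norm of a finitely-indexed vector. -/
def l2 {ι : Type*} [Fintype ι] (v : ι → ℝ) : ℝ := Real.sqrt (∑ i, v i ^ 2)

/-- The law of a `{+1,−1}`-valued variable taking the value `+1` with probability `q`. -/
def signBer (q : ℝ) : Measure ℝ :=
  ENNReal.ofReal q • Measure.dirac (1 : ℝ) + ENNReal.ofReal (1 - q) • Measure.dirac (-1 : ℝ)

/-- `ν` is the centered Gaussian law on `ℝ^p` with covariance matrix `S`: every linear
functional of `ν` has the corresponding one-dimensional centered Gaussian law
(Cramér–Wold characterization). -/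
def IsCGauss {p : ℕ} (ν : Measure (Fin p → ℝ)) (S : Matrix (Fin p) (Fin p) ℝ) : Prop :=
  ∀ a : Fin p → ℝ, ν.map (fun x => ∑ i, a i * x i)
    = gaussianReal 0 (Real.toNNReal (∑ i, ∑ j, a i * S i j * a j))

/-- Joint law of the i.i.d. data `((xᵢ)ᵢ, (yᵢ)ᵢ)` where `xᵢ ~ ν` and, conditionally on `xᵢ`,
`P(yᵢ = +1 | xᵢ) = f(⟨θ*, xᵢ⟩)`. -/
def dataLaw (n p : ℕ) (f : ℝ → ℝ) (θs : Fin p → ℝ) (ν : Measure (Fin p → ℝ)) :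
    Measure ((Fin n → Fin p → ℝ) × (Fin n → ℝ)) :=
  (Measure.pi fun _ : Fin n => ν).bind fun xs =>
    (Measure.pi fun i : Fin n => signBer (f (∑ j, θs j * xs i j))).map fun ys => (xs, ys)

/-- The maximum margin `κ_n(y,X) = max_{‖θ‖₂=1} min_{i≤n} yᵢ⟨θ,xᵢ⟩`. -/
def margin (n p : ℕ) (xs : Fin n → Fin p → ℝ) (ys : Fin n → ℝ) : ℝ :=
  sSup ((fun θ => ⨅ i : Fin n, ys i * ∑ j, θ j * xs i j) '' {θ : Fin p → ℝ | l2 θ = 1})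

/-- Empirical measure of finitely many points of `ℝ²`. -/
def empMeas (P : ℕ) (pt : Fin P → ℝ × ℝ) : Measure (ℝ × ℝ) :=
  ((P : ENNReal))⁻¹ • ∑ i : Fin P, Measure.dirac (pt i)

instance instProbStdG : IsProbabilityMeasure stdG := by unfold stdG; infer_instance

lemma memLp_stdG (q : ENNReal) (hq : q ≠ ⊤) : MemLp (fun x : ℝ => x) q stdG :=
  memLp_id_gaussianReal' q hq

lemma integrable_id_stdG : Integrable (fun x : ℝ => x) stdG :=
  (memLp_stdG 1 (by simp)).integrable le_rfl

lemma integrable_sq_stdG : Integrable (fun x : ℝ => x ^ 2) stdG :=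
  (memLp_stdG 2 (by simp)).integrable_sq

lemma integral_id_stdG : ∫ x, x ∂stdG = 0 := by
  simp [stdG]

lemma integral_sq_stdG : ∫ x, x ^ 2 ∂stdG = 1 := by
  have h := variance_id_gaussianReal (μ := 0) (v := 1)
  rw [variance_eq_sub (memLp_id_gaussianReal 2)] at h
  simpa [stdG] using h

lemma stdG_map_neg : stdG.map (fun x => -x) = stdG := by
  unfold stdG; rw [gaussianReal_map_neg]; simp

/-- One dimensional Gaussian integration by parts. -/
lemma stein_one (φ φ' : ℝ → ℝ) (hφ : ∀ x, HasDerivAt φ (φ' x) x) (hm : Continuous φ')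
    (C : ℝ) (hb : ∀ x, |φ x| ≤ C) (hb' : ∀ x, |φ' x| ≤ C) :
    ∫ x, x * φ x ∂stdG = ∫ x, φ' x ∂stdG := by
  have hcont : Continuous φ := continuous_iff_continuousAt.2 fun x => (hφ x).continuousAt
  have hpdf : ∀ x, HasDerivAt (gaussianPDFReal 0 1) (-x * gaussianPDFReal 0 1 x) x := by
    intro x
    have h1 : HasDerivAt (fun x : ℝ => (√(2 * π * 1))⁻¹ * rexp (-(x) ^ 2 / (2 * 1)))
        ((√(2 * π * 1))⁻¹ * (rexp (-(x) ^ 2 / (2 * 1)) * (-(2 * x) / (2 * 1)))) x := by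
      refine HasDerivAt.const_mul _ ?_
      refine HasDerivAt.exp ?_
      refine HasDerivAt.div_const ?_ _
      have := ((hasDerivAt_pow 2 x)).neg
      simp only [Nat.cast_ofNat, Nat.add_one_sub_one, pow_one] at this
      exact this
    have h2 : gaussianPDFReal 0 1 = fun x : ℝ => (√(2 * π * 1))⁻¹ * rexp (-(x) ^ 2 / (2 * 1)) := by
      ext y; simp [gaussianPDFReal]
    rw [h2]
    convert h1 using 1
    ring
  have hintg : ∀ g : ℝ → ℝ, Integrable g stdG → Integrable (fun x => gaussianPDFReal 0 1 x * g x) := by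
    intro g hg
    unfold stdG at hg
    rw [gaussianReal_of_var_ne_zero _ (by simp)] at hg
    have := (integrable_withDensity_iff_integrable_smul' (measurable_gaussianPDF 0 1)
      (ae_of_all _ fun x => gaussianPDF_lt_top)).1 hg
    simpa [toReal_gaussianPDF] using this
  have i1 : Integrable φ stdG := Integrable.of_bound hcont.aestronglyMeasurable C
    (ae_of_all _ hb)
  have i2 : Integrable φ' stdG := Integrable.of_bound hm.aestronglyMeasurable C
    (ae_of_all _ hb')
  have i3 : Integrable (fun x => x * φ x) stdG :=
    integrable_id_stdG.mul_bdd (c := C) hcont.aestronglyMeasurable (ae_of_all _ hb)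
  have key := integral_mul_deriv_eq_deriv_mul_of_integrable (u := φ) (u' := φ')
    (v := gaussianPDFReal 0 1) (v' := fun x => -x * gaussianPDFReal 0 1 x)
    (fun x _ => hφ x) (fun x _ => hpdf x)
    ((hintg _ i3).neg.congr (ae_of_all _ fun x => by simp; ring))
    ((hintg _ i2).congr (ae_of_all _ fun x => by simp; ring))
    ((hintg _ i1).congr (ae_of_all _ fun x => by simp; ring))
  unfold stdG
  rw [integral_gaussianReal_eq_integral_smul (by simp), integral_gaussianReal_eq_integral_smul (by simp)]
  simp only [smul_eq_mul]
  have e1 : ∫ x, φ' x * gaussianPDFReal 0 1 x = ∫ x, gaussianPDFReal 0 1 x * φ' x := by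
    congr 1; ext x; ring
  have e2 : ∫ x, gaussianPDFReal 0 1 x * (x * φ x) = - ∫ x, φ x * (-x * gaussianPDFReal 0 1 x) := by
    rw [← integral_neg]; congr 1; ext x; ring
  rw [e2, key, e1, neg_neg]

variable {K : Type*} [Fintype K] [DecidableEq K]

/-- standard Gaussian measure on `K → ℝ`. -/
abbrev gpi (K : Type*) [Fintype K] : Measure (K → ℝ) := Measure.pi fun _ => stdG

lemma mp_update (k : K) :
    MeasurePreserving (fun q : ℝ × (K → ℝ) => Function.update q.2 k q.1) (stdG.prod (gpi K))
      (gpi K) := by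
  have hm : Measurable (fun q : ℝ × (K → ℝ) => Function.update q.2 k q.1) := by
    refine measurable_pi_iff.2 fun j => ?_
    by_cases h : j = k
    · subst h; simpa using measurable_fst
    · simp only [Function.update_of_ne h]; fun_prop
  refine ⟨hm, ?_⟩
  symm
  refine Measure.pi_eq fun s hs => ?_
  rw [Measure.map_apply hm (MeasurableSet.univ_pi hs)]
  have : (fun q : ℝ × (K → ℝ) => Function.update q.2 k q.1) ⁻¹' (univ.pi s)
      = (s k) ×ˢ (univ.pi (Function.update s k univ)) := by
    ext ⟨x, w⟩
    simp only [mem_preimage, mem_univ_pi, mem_prod]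
    constructor
    · intro h
      refine ⟨by simpa using h k, fun i => ?_⟩
      by_cases hi : i = k
      · subst hi; simp
      · simpa [hi] using h i
    · rintro ⟨h1, h2⟩ i
      by_cases hi : i = k
      · subst hi; simpa using h1
      · simpa [hi] using h2 i
  rw [this, Measure.prod_prod, Measure.pi_pi, ← Finset.mul_prod_erase Finset.univ _ (Finset.mem_univ k),
    ← Finset.mul_prod_erase Finset.univ (fun i => stdG (s i)) (Finset.mem_univ k)]
  simp only [Function.update_self, measure_univ, one_mul]
  congr 1
  refine Finset.prod_congr rfl fun i hi => ?_
  rw [Function.update_of_ne (Finset.ne_of_mem_erase hi)]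

/-- Multivariate Gaussian integration by parts. -/
lemma stein_pi (k : K) (φ φ' : (K → ℝ) → ℝ) (hc : Continuous φ) (hc' : Continuous φ')
    (hd : ∀ w, HasDerivAt (fun x => φ (Function.update w k x)) (φ' w) (w k))
    (C : ℝ) (hb : ∀ x, |φ x| ≤ C) (hb' : ∀ x, |φ' x| ≤ C) :
    ∫ w, w k * φ w ∂(gpi K) = ∫ w, φ' w ∂(gpi K) := by
  have mp := mp_update (K := K) k
  have hupd : Continuous (fun q : ℝ × (K → ℝ) => Function.update q.2 k q.1) := by fun_prop
  have i1 : Integrable (fun w : K → ℝ => w k * φ w) (gpi K) := by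
    refine Integrable.mul_bdd (c := C) ?_ hc.aestronglyMeasurable (ae_of_all _ hb)
    exact integrable_comp_eval (μ := fun _ : K => stdG) integrable_id_stdG
  have i2 : Integrable φ' (gpi K) := Integrable.of_bound hc'.aestronglyMeasurable C (ae_of_all _ hb')
  have i1' : Integrable (fun q : ℝ × (K → ℝ) => Function.update q.2 k q.1 k *
      φ (Function.update q.2 k q.1)) (stdG.prod (gpi K)) := (mp.integrable_comp_of_integrable i1)
  have i2' : Integrable (fun q : ℝ × (K → ℝ) => φ' (Function.update q.2 k q.1))
      (stdG.prod (gpi K)) := (mp.integrable_comp_of_integrable i2)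
  rw [← mp.map_eq, integral_map mp.measurable.aemeasurable (by rw [mp.map_eq]; exact i1.1),
    integral_map mp.measurable.aemeasurable (by rw [mp.map_eq]; exact i2.1),
    integral_prod_symm _ i1', integral_prod_symm _ i2']
  congr 1; ext w
  simp only [Function.update_self]
  refine stein_one (fun x => φ (Function.update w k x)) _ (fun x => ?_)
    (hc'.comp (by fun_prop)) C (fun x => hb _) (fun x => hb' _)
  have := hd (Function.update w k x)
  simpa using this

section Interp
set_option linter.unusedSectionVars false
variable {K ι : Type*} [Fintype K] [DecidableEq K] [Fintype ι]

/-- the linear map with matrix `M`. -/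
def Lm (M : ι → K → ℝ) (w : K → ℝ) : ι → ℝ := fun a => ∑ k, M a k * w k

lemma Lm_cont (M : ι → K → ℝ) : Continuous (Lm M) := by unfold Lm; fun_prop

lemma Lm_update (M : ι → K → ℝ) (w : K → ℝ) (k : K) (x : ℝ) (a : ι) :
    Lm M (Function.update w k x) a = Lm M w a + M a k * (x - w k) := by
  unfold Lm
  rw [← Finset.add_sum_erase Finset.univ _ (Finset.mem_univ k),
    ← Finset.add_sum_erase Finset.univ (fun k => M a k * w k) (Finset.mem_univ k)]
  have : ∑ j ∈ Finset.univ.erase k, M a j * Function.update w k x j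
      = ∑ j ∈ Finset.univ.erase k, M a j * w j :=
    Finset.sum_congr rfl fun j hj => by rw [Function.update_of_ne (Finset.ne_of_mem_erase hj)]
  rw [this]; simp; ring

/-- Smooth test functions with bounded derivatives. -/
structure Test (F : (ι → ℝ) → ℝ) (F1 : ι → (ι → ℝ) → ℝ) (F2 : ι → ι → (ι → ℝ) → ℝ) (C : ℝ) :
    Prop where
  d1 : ∀ x, HasFDerivAt F (∑ a, F1 a x • (ContinuousLinearMap.proj a : (ι → ℝ) →L[ℝ] ℝ)) x
  d2 : ∀ a x, HasFDerivAt (F1 a) (∑ b, F2 a b x • (ContinuousLinearMap.proj b : (ι → ℝ) →L[ℝ] ℝ)) x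
  b0 : ∀ x, |F x| ≤ C
  b1 : ∀ a x, |F1 a x| ≤ C
  b2 : ∀ a b x, |F2 a b x| ≤ C
  c2 : ∀ a b, Continuous (F2 a b)

lemma stein_Lm (M : ι → K → ℝ) {F F1 F2 C} (h : Test (ι := ι) F F1 F2 C) (a : ι) (k : K) :
    ∫ w, w k * F1 a (Lm M w) ∂(gpi K) = ∑ b, M b k * ∫ w, F2 a b (Lm M w) ∂(gpi K) := by
  have hC : 0 ≤ C := (abs_nonneg _).trans (h.b0 0)
  have c1 : Continuous (F1 a) := continuous_iff_continuousAt.2 fun x => (h.d2 a x).continuousAt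
  rw [stein_pi k (fun w => F1 a (Lm M w)) (fun w => ∑ b, M b k * F2 a b (Lm M w))
    (c1.comp (Lm_cont M))
    (continuous_finsetSum _ fun b _ => continuous_const.mul ((h.c2 a b).comp (Lm_cont M)))
    ?_ (C + ∑ b, |M b k| * C) ?_ ?_]
  · rw [integral_finsetSum]
    · simp_rw [integral_const_mul]
    · intro b _
      exact (Integrable.of_bound ((h.c2 a b).comp (Lm_cont M)).aestronglyMeasurable C
        (ae_of_all _ fun w => h.b2 a b _)).const_mul _
  · intro w
    have hg : HasDerivAt (fun x => Lm M (Function.update w k x)) (fun b => M b k) (w k) := by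
      rw [hasDerivAt_pi]
      intro b
      simp_rw [Lm_update]
      simpa using (((hasDerivAt_id (w k)).sub_const (w k)).const_mul (M b k)).const_add (Lm M w b)
    have h1 : HasFDerivAt (F1 a) (∑ b, F2 a b (Lm M w) •
        (ContinuousLinearMap.proj b : (ι → ℝ) →L[ℝ] ℝ)) (Lm M (Function.update w k (w k))) := by
      rw [Function.update_eq_self]; exact h.d2 a _
    have := h1.comp_hasDerivAt (w k) hg
    refine this.congr_deriv ?_
    simp [mul_comm]
  · intro x
    refine (h.b1 a _).trans (le_add_of_nonneg_right (Finset.sum_nonneg fun b _ => by positivity))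
  · intro x
    refine (Finset.abs_sum_le_sum_abs _ _).trans ((Finset.sum_le_sum fun b _ => ?_).trans
      (le_add_of_nonneg_left hC))
    rw [abs_mul]
    exact mul_le_mul_of_nonneg_left (h.b2 a b _) (abs_nonneg _)

/-- The interpolating matrix. -/
def Mx (A B : ι → K → ℝ) (t : ℝ) : ι → K → ℝ := fun a k => Real.sin t * A a k + Real.cos t * B a k

lemma interp_deriv (A B : ι → K → ℝ) {F F1 F2 C} (h : Test (ι := ι) F F1 F2 C) (t : ℝ) :
    HasDerivAt (fun t => ∫ w, F (Lm (Mx A B t) w) ∂(gpi K))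
      (∫ w, (∑ a, F1 a (Lm (Mx A B t) w) * ∑ k, (Real.cos t * A a k - Real.sin t * B a k) * w k)
        ∂(gpi K)) t := by
  have hC : 0 ≤ C := (abs_nonneg _).trans (h.b0 0)
  have c1 : ∀ a, Continuous (F1 a) := fun a =>
    continuous_iff_continuousAt.2 fun x => (h.d2 a x).continuousAt
  have c0 : Continuous F := continuous_iff_continuousAt.2 fun x => (h.d1 x).continuousAt
  have hk : ∀ k : K, Integrable (fun w : K → ℝ => w k) (gpi K) := fun k =>
    integrable_comp_eval (μ := fun _ : K => stdG) integrable_id_stdG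
  refine (hasDerivAt_integral_of_dominated_loc_of_deriv_le (μ := gpi K) (s := univ)
    (F := fun t w => F (Lm (Mx A B t) w))
    (F' := fun t w => ∑ a, F1 a (Lm (Mx A B t) w) *
      ∑ k, (Real.cos t * A a k - Real.sin t * B a k) * w k)
    (bound := fun w => ∑ a : ι, C * ∑ k, (|A a k| + |B a k|) * |w k|) univ_mem
    (Eventually.of_forall fun s => (c0.comp (Lm_cont _)).aestronglyMeasurable)
    (Integrable.of_bound (c0.comp (Lm_cont _)).aestronglyMeasurable C
        (ae_of_all _ fun w => h.b0 _)) ?_ ?_ ?_ ?_).2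
  · refine Continuous.aestronglyMeasurable ?_
    refine continuous_finsetSum _ fun a _ => ((c1 a).comp (Lm_cont _)).mul (by fun_prop)
  · refine ae_of_all _ fun w s _ => ?_
    rw [Real.norm_eq_abs]
    refine (Finset.abs_sum_le_sum_abs _ _).trans (Finset.sum_le_sum fun a _ => ?_)
    rw [abs_mul]
    refine mul_le_mul (h.b1 a _) ?_ (abs_nonneg _) hC
    refine (Finset.abs_sum_le_sum_abs _ _).trans (Finset.sum_le_sum fun k _ => ?_)
    rw [abs_mul]
    refine mul_le_mul_of_nonneg_right ?_ (abs_nonneg _)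
    refine (abs_sub _ _).trans ?_
    rw [abs_mul, abs_mul]
    exact add_le_add (mul_le_of_le_one_left (abs_nonneg _) (Real.abs_cos_le_one _))
      (mul_le_of_le_one_left (abs_nonneg _) (Real.abs_sin_le_one _))
  · refine integrable_finsetSum _ fun a _ => Integrable.const_mul ?_ _
    exact integrable_finsetSum _ fun k _ => (hk k).abs.const_mul _
  · refine ae_of_all _ fun w s _ => ?_
    have hg : HasDerivAt (fun t => Lm (Mx A B t) w)
        (fun a => ∑ k, (Real.cos s * A a k - Real.sin s * B a k) * w k) s := by
      rw [hasDerivAt_pi]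
      intro a
      unfold Lm Mx
      refine HasDerivAt.fun_sum fun k _ => ?_
      have := ((((Real.hasDerivAt_sin s).mul_const (A a k)).add
        ((Real.hasDerivAt_cos s).mul_const (B a k))).mul_const (w k))
      refine this.congr_deriv ?_
      ring
    have := (h.d1 (Lm (Mx A B s) w)).comp_hasDerivAt s hg
    refine this.congr_deriv ?_
    simp

lemma interp_deriv_eq (A B : ι → K → ℝ) (hAB : ∀ a b, ∑ k, A a k * B b k = 0)
    {F F1 F2 C} (h : Test (ι := ι) F F1 F2 C) (t : ℝ) :
    (∫ w, (∑ a, F1 a (Lm (Mx A B t) w) * ∑ k, (Real.cos t * A a k - Real.sin t * B a k) * w k)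
        ∂(gpi K)) = Real.sin t * Real.cos t * ∑ a, ∑ b, ((∑ k, A a k * A b k) - ∑ k, B a k * B b k)
        * ∫ w, F2 a b (Lm (Mx A B t) w) ∂(gpi K) := by
  have c1 : ∀ a, Continuous (F1 a) := fun a =>
    continuous_iff_continuousAt.2 fun x => (h.d2 a x).continuousAt
  have hk : ∀ (a : ι) (k : K), Integrable (fun w : K → ℝ => w k * F1 a (Lm (Mx A B t) w)) (gpi K) :=
    fun a k => Integrable.mul_bdd (c := C)
      (integrable_comp_eval (μ := fun _ : K => stdG) integrable_id_stdG)
      ((c1 a).comp (Lm_cont _)).aestronglyMeasurable (ae_of_all _ fun w => h.b1 a _)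
  have e1 : ∀ w : K → ℝ, (∑ a, F1 a (Lm (Mx A B t) w) *
      ∑ k, (Real.cos t * A a k - Real.sin t * B a k) * w k)
      = ∑ a, ∑ k, (Real.cos t * A a k - Real.sin t * B a k) * (w k * F1 a (Lm (Mx A B t) w)) := by
    intro w
    refine Finset.sum_congr rfl fun a _ => ?_
    rw [Finset.mul_sum]
    refine Finset.sum_congr rfl fun k _ => by ring
  simp_rw [e1]
  rw [integral_finsetSum _ fun a _ => integrable_finsetSum _ fun k _ => (hk a k).const_mul _]
  rw [Finset.mul_sum]
  refine Finset.sum_congr rfl fun a _ => ?_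
  rw [integral_finsetSum _ fun k _ => (hk a k).const_mul _]
  simp_rw [integral_const_mul, stein_Lm _ h, Finset.mul_sum]
  rw [Finset.sum_comm]
  refine Finset.sum_congr rfl fun b _ => ?_
  have hba : ∑ k, B a k * A b k = 0 := by rw [← hAB b a]; exact Finset.sum_congr rfl fun k _ => mul_comm _ _
  have e2 : ∑ k, (Real.cos t * A a k - Real.sin t * B a k) * Mx A B t b k
      = Real.sin t * Real.cos t * ((∑ k, A a k * A b k) - ∑ k, B a k * B b k) := by
    have : ∀ k, (Real.cos t * A a k - Real.sin t * B a k) * Mx A B t b k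
      = Real.sin t * Real.cos t * (A a k * A b k) - Real.sin t * Real.cos t * (B a k * B b k)
        + Real.cos t ^ 2 * (A a k * B b k) - Real.sin t ^ 2 * (B a k * A b k) := by
      intro k; unfold Mx; ring
    simp_rw [this, Finset.sum_sub_distrib, Finset.sum_add_distrib, Finset.sum_sub_distrib,
      ← Finset.mul_sum, hAB, hba]
    ring
  simp_rw [← mul_assoc, ← Finset.sum_mul]
  rw [e2]

lemma interp_mono (A B : ι → K → ℝ) (hAB : ∀ a b, ∑ k, A a k * B b k = 0)
    {F F1 F2 C} (h : Test (ι := ι) F F1 F2 C)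
    (hs : ∀ a b, (∀ x, 0 ≤ ((∑ k, A a k * A b k) - ∑ k, B a k * B b k) * F2 a b x)) :
    ∫ w, F (Lm B w) ∂(gpi K) ≤ ∫ w, F (Lm A w) ∂(gpi K) := by
  have hmono : MonotoneOn (fun t => ∫ w, F (Lm (Mx A B t) w) ∂(gpi K)) (Icc 0 (π / 2)) := by
    refine monotoneOn_of_deriv_nonneg (convex_Icc _ _)
      (fun t _ => (interp_deriv A B h t).continuousAt.continuousWithinAt)
      (fun t _ => (interp_deriv A B h t).differentiableAt.differentiableWithinAt) ?_
    intro t ht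
    rw [interior_Icc] at ht
    rw [(interp_deriv A B h t).deriv, interp_deriv_eq A B hAB h t]
    refine mul_nonneg (mul_nonneg (sin_nonneg_of_nonneg_of_le_pi ht.1.le (by linarith [ht.2, pi_pos]))
      (cos_nonneg_of_neg_pi_div_two_le_of_le (by linarith [ht.1, pi_pos]) ht.2.le)) ?_
    refine Finset.sum_nonneg fun a _ => Finset.sum_nonneg fun b _ => ?_
    rw [← integral_const_mul]
    exact integral_nonneg fun w => hs a b _
  have := hmono (left_mem_Icc.2 (by positivity)) (right_mem_Icc.2 (by positivity))
    (by positivity : (0:ℝ) ≤ π / 2)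
  have eA : Mx A B (π / 2) = A := by ext; simp [Mx]
  have eB : Mx A B 0 = B := by ext; simp [Mx]
  simpa [eA, eB] using this
end Interp

section GordonFinite
set_option linter.unusedSectionVars false
set_option linter.unusedVariables false
open scoped NNReal

/-- bounded Lipschitz functions -/
def BL {X : Type*} [PseudoMetricSpace X] (f : X → ℝ) : Prop :=
  ∃ C : ℝ, 0 ≤ C ∧ (∀ x, |f x| ≤ C) ∧ ∀ x y, |f x - f y| ≤ C * dist x y

lemma BL.mul {X : Type*} [PseudoMetricSpace X] {f g : X → ℝ} (hf : BL f) (hg : BL g) :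
    BL (fun x => f x * g x) := by
  obtain ⟨C, hC, h1, h2⟩ := hf
  obtain ⟨D, hD, h3, h4⟩ := hg
  refine ⟨C * D + (C * D + C * D), by positivity, fun x => ?_, fun x y => ?_⟩
  · rw [abs_mul]
    have := mul_le_mul (h1 x) (h3 x) (abs_nonneg _) hC
    nlinarith [mul_nonneg hC hD]
  · have e : f x * g x - f y * g y = f x * (g x - g y) + (f x - f y) * g y := by ring
    rw [e]
    have a1 : |f x * (g x - g y)| ≤ C * (D * dist x y) := by
      rw [abs_mul]; exact mul_le_mul (h1 x) (h4 x y) (abs_nonneg _) hC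
    have a2 : |(f x - f y) * g y| ≤ (C * dist x y) * D := by
      rw [abs_mul]; exact mul_le_mul (h2 x y) (h3 y) (abs_nonneg _) (by positivity)
    have := abs_add_le (f x * (g x - g y)) ((f x - f y) * g y)
    have := mul_nonneg (mul_nonneg hC hD) (dist_nonneg (x := x) (y := y))
    nlinarith

lemma BL.const {X : Type*} [PseudoMetricSpace X] (c : ℝ) : BL (fun _ : X => c) :=
  ⟨|c|, abs_nonneg _, fun _ => le_rfl, fun x y => by simp; positivity⟩

lemma BL.sub {X : Type*} [PseudoMetricSpace X] {f g : X → ℝ} (hf : BL f) (hg : BL g) :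
    BL (fun x => f x - g x) := by
  obtain ⟨C, hC, h1, h2⟩ := hf
  obtain ⟨D, hD, h3, h4⟩ := hg
  refine ⟨C + D, by positivity, fun x => ?_, fun x y => ?_⟩
  · exact (abs_sub _ _).trans (add_le_add (h1 x) (h3 x))
  · have e : f x - g x - (f y - g y) = (f x - f y) - (g x - g y) := by ring
    rw [e, add_mul]
    exact (abs_sub _ _).trans (add_le_add (h2 x y) (h4 x y))

lemma BL.prod {X A : Type*} [PseudoMetricSpace X] [DecidableEq A] (s : Finset A) {f : A → X → ℝ}
    (hf : ∀ a, BL (f a)) : BL (fun x => ∏ a ∈ s, f a x) := by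
  induction s using Finset.induction_on with
  | empty => simpa using BL.const 1
  | insert a s ha ih => simp_rw [Finset.prod_insert ha]; exact (hf a).mul ih

lemma BL.comp_eval {ι : Type*} [Fintype ι] {f : ℝ → ℝ} (hf : BL f) (a : ι) :
    BL (fun x : ι → ℝ => f (x a)) := by
  obtain ⟨C, hC, h1, h2⟩ := hf
  exact ⟨C, hC, fun x => h1 _, fun x y => (h2 _ _).trans
    (mul_le_mul_of_nonneg_left (dist_le_pi_dist x y a) hC)⟩

/-- a smooth decreasing step -/
structure Step (s : ℝ → ℝ) : Prop where
  cd : ContDiff ℝ 2 s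
  anti : Antitone s
  nonneg : ∀ x, 0 ≤ s x
  le_one : ∀ x, s x ≤ 1
  bl : BL s
  bl' : BL (deriv s)

variable {I J : Type*} [Fintype I] [DecidableEq I] [Fintype J] [DecidableEq J]

def Qf (σ : I × J → ℝ → ℝ) (i : I) (x : I × J → ℝ) : ℝ := 1 - ∏ j, σ (i, j) (x (i, j))
def Ff (σ : I × J → ℝ → ℝ) (x : I × J → ℝ) : ℝ := ∏ i, Qf σ i x
def Ff1 (σ : I × J → ℝ → ℝ) (a : I × J) (x : I × J → ℝ) : ℝ :=
  (∏ i ∈ Finset.univ.erase a.1, Qf σ i x) *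
    ((∏ j ∈ Finset.univ.erase a.2, σ (a.1, j) (x (a.1, j))) * (- deriv (σ a) (x a)))
def Ff2 (σ : I × J → ℝ → ℝ) (a b : I × J) (x : I × J → ℝ) : ℝ :=
  fderiv ℝ (Ff1 σ a) x (Pi.single b 1)

lemma hasFDerivAt_coord {ι : Type*} [Fintype ι] [DecidableEq ι] {F : (ι → ℝ) → ℝ} {x : ι → ℝ}
    (hF : DifferentiableAt ℝ F x) (c : ι → ℝ) (hc : ∀ a, fderiv ℝ F x (Pi.single a 1) = c a) :
    HasFDerivAt F (∑ a, c a • (ContinuousLinearMap.proj a : (ι → ℝ) →L[ℝ] ℝ)) x := by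
  refine hF.hasFDerivAt.congr_fderiv ?_
  refine ContinuousLinearMap.ext fun v => ?_
  rw [← ContinuousLinearMap.coe_coe (fderiv ℝ F x), LinearMap.pi_apply_eq_sum_univ]
  simp only [ContinuousLinearMap.coe_coe, smul_eq_mul]
  rw [ContinuousLinearMap.sum_apply]
  refine Finset.sum_congr rfl fun a _ => ?_
  have : (fun j => if a = j then (1:ℝ) else 0) = Pi.single a 1 := by
    ext j; by_cases h : a = j
    · subst h; simp
    · simp [h, Pi.single_apply, Ne.symm h, eq_comm]
  rw [this, hc]
  simp [mul_comm]

variable {σ : I × J → ℝ → ℝ}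

lemma Qf_nonneg (hσ : ∀ a, Step (σ a)) (i : I) (x) : 0 ≤ Qf σ i x :=
  sub_nonneg.2 (Finset.prod_le_one (fun j _ => (hσ _).nonneg _) fun j _ => (hσ _).le_one _)

lemma Qf_le_one (hσ : ∀ a, Step (σ a)) (i : I) (x) : Qf σ i x ≤ 1 :=
  sub_le_self _ (Finset.prod_nonneg fun j _ => (hσ _).nonneg _)

lemma Qf_mono (hσ : ∀ a, Step (σ a)) (i : I) : Monotone (Qf σ i) := fun x y hxy =>
  sub_le_sub_left (Finset.prod_le_prod (fun j _ => (hσ _).nonneg _)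
    fun j _ => (hσ _).anti (hxy _)) _

lemma Qf_BL (hσ : ∀ a, Step (σ a)) (i : I) : BL (Qf σ i) :=
  (BL.const 1).sub (BL.prod _ fun j => ((hσ (i, j)).bl.comp_eval (i, j)))

lemma Ff1_BL (hσ : ∀ a, Step (σ a)) (a : I × J) : BL (Ff1 σ a) := by
  refine (BL.prod _ fun i => Qf_BL hσ i).mul (BL.mul (BL.prod _ fun j =>
    ((hσ (a.1, j)).bl.comp_eval (a.1, j))) ?_)
  have := ((BL.const 0).sub (hσ a).bl').comp_eval a
  simpa using this

lemma Qf_cd (hσ : ∀ a, Step (σ a)) (i : I) : ContDiff ℝ 2 (Qf σ i) := by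
  unfold Qf
  refine contDiff_const.sub (contDiff_prod fun j _ => (hσ (i, j)).cd.comp (contDiff_apply ℝ ℝ (i, j)))

lemma Ff_cd (hσ : ∀ a, Step (σ a)) : ContDiff ℝ 2 (Ff σ) := contDiff_prod fun i _ => Qf_cd hσ i

lemma Ff1_cd (hσ : ∀ a, Step (σ a)) (a : I × J) : ContDiff ℝ 1 (Ff1 σ a) := by
  have h12 : (1 : WithTop ℕ∞) ≤ 2 := by norm_num
  refine (contDiff_prod fun i _ => (Qf_cd hσ i).of_le h12).mul (ContDiff.mul
    (contDiff_prod fun j _ => ((hσ (a.1, j)).cd.comp (contDiff_apply ℝ ℝ (a.1, j))).of_le h12)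
    (ContDiff.neg ?_))
  have : ContDiff ℝ 1 (deriv (σ a)) := by
    have := (hσ a).cd
    rw [show (2 : WithTop ℕ∞) = 1 + 1 by norm_num] at this
    exact (contDiff_succ_iff_deriv.1 this).2.2
  exact this.comp (contDiff_apply ℝ ℝ a)

lemma Qf_update_ne (a : I × J) (x) (t : ℝ) (i : I) (hi : i ≠ a.1) :
    Qf σ i (Function.update x a t) = Qf σ i x := by
  unfold Qf
  congr 1
  refine Finset.prod_congr rfl fun j _ => ?_
  rw [Function.update_of_ne]
  rintro rfl; exact hi rfl

lemma Ff_coord (hσ : ∀ a, Step (σ a)) (a : I × J) (x) : fderiv ℝ (Ff σ) x (Pi.single a 1) = Ff1 σ a x := by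
  have hd : DifferentiableAt ℝ (Ff σ) x := (Ff_cd hσ).differentiable (by norm_num) x
  have h1 : HasDerivAt (fun t => Ff σ (Function.update x a t)) (fderiv ℝ (Ff σ) x (Pi.single a 1)) (x a) := by
    have hd' : HasFDerivAt (Ff σ) (fderiv ℝ (Ff σ) x) (Function.update x a (x a)) := by
      rw [Function.update_eq_self]; exact hd.hasFDerivAt
    exact hd'.comp_hasDerivAt (x a) (hasDerivAt_update x a (x a))
  have h2 : HasDerivAt (fun t => Ff σ (Function.update x a t)) (Ff1 σ a x) (x a) := by
    have e : (fun t => Ff σ (Function.update x a t)) = fun t =>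
      (∏ i ∈ Finset.univ.erase a.1, Qf σ i x) *
        (1 - (∏ j ∈ Finset.univ.erase a.2, σ (a.1, j) (x (a.1, j))) * σ a t) := by
      ext t
      unfold Ff
      rw [← Finset.prod_erase_mul _ _ (Finset.mem_univ a.1)]
      congr 1
      · exact Finset.prod_congr rfl fun i hi => Qf_update_ne a x t i (Finset.ne_of_mem_erase hi)
      · unfold Qf
        rw [← Finset.prod_erase_mul _ _ (Finset.mem_univ a.2)]
        congr 2
        · refine Finset.prod_congr rfl fun j hj => ?_
          rw [Function.update_of_ne]
          intro h; exact Finset.ne_of_mem_erase hj (by rw [← h])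
        · simp
    rw [e]
    unfold Ff1
    refine HasDerivAt.const_mul _ ?_
    have := (((((hσ a).cd.differentiable (by norm_num)) (x a)).hasDerivAt.const_mul
      (∏ j ∈ Finset.univ.erase a.2, σ (a.1, j) (x (a.1, j)))).const_sub 1)
    refine this.congr_deriv (by ring)
  exact h1.unique h2

lemma Ff2_bound (hσ : ∀ a, Step (σ a)) (a b : I × J) {C : ℝ} (hC : 0 ≤ C) (h : ∀ x y, |Ff1 σ a x - Ff1 σ a y| ≤ C * dist x y)
    (x) : |Ff2 σ a b x| ≤ C := by
  have hl : LipschitzWith C.toNNReal (Ff1 σ a) := LipschitzWith.of_dist_le_mul fun x y => by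
    rw [Real.coe_toNNReal _ hC]; exact h x y
  have := norm_fderiv_le_of_lipschitz ℝ hl (x₀ := x)
  have h2 := (fderiv ℝ (Ff1 σ a) x).le_opNorm (Pi.single b 1)
  rw [Pi.norm_single] at h2
  simp only [norm_one, mul_one] at h2
  rw [Real.coe_toNNReal _ hC] at this
  exact h2.trans this

lemma Ff2_nonneg (hσ : ∀ a, Step (σ a)) (a b : I × J) (hab : a.1 ≠ b.1) (x) : 0 ≤ Ff2 σ a b x := by
  have hd : DifferentiableAt ℝ (Ff1 σ a) x := (Ff1_cd hσ a).differentiable (by norm_num) x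
  have h1 : HasDerivAt (fun t => Ff1 σ a (Function.update x b t)) (Ff2 σ a b x) (x b) := by
    have hd' : HasFDerivAt (Ff1 σ a) (fderiv ℝ (Ff1 σ a) x) (Function.update x b (x b)) := by
      rw [Function.update_eq_self]; exact hd.hasFDerivAt
    exact hd'.comp_hasDerivAt (x b) (hasDerivAt_update x b (x b))
  rw [← h1.deriv]
  refine Monotone.deriv_nonneg ?_
  intro s t hst
  have hne : ∀ j, (a.1, j) ≠ b := fun j h => hab (by rw [← h])
  simp only [Ff1]
  have e1 : ∀ t, (∏ j ∈ Finset.univ.erase a.2, σ (a.1, j) (Function.update x b t (a.1, j)))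
      = ∏ j ∈ Finset.univ.erase a.2, σ (a.1, j) (x (a.1, j)) := fun t =>
    Finset.prod_congr rfl fun j _ => by rw [Function.update_of_ne (hne j)]
  have e2 : ∀ t, Function.update x b t a = x a := fun t => Function.update_of_ne (hne a.2) _ _
  rw [e1, e1, e2, e2]
  refine mul_le_mul_of_nonneg_right ?_ (mul_nonneg (Finset.prod_nonneg fun j _ => (hσ _).nonneg _)
    (neg_nonneg.2 (hσ a).anti.deriv_nonpos))
  exact Finset.prod_le_prod (fun i _ => Qf_nonneg hσ i _) fun i _ =>
    Qf_mono hσ i (update_le_update_iff.2 ⟨hst, fun _ _ => le_rfl⟩)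

lemma Ff_test (hσ : ∀ a, Step (σ a)) : ∃ C, Test (Ff σ) (Ff1 σ) (Ff2 σ) C := by
  choose C hC h1 h2 using fun a => Ff1_BL hσ a
  have hle : ∀ a, C a ≤ 1 + ∑ a, C a := fun a =>
    (Finset.single_le_sum (fun a _ => hC a) (Finset.mem_univ a)).trans (by linarith)
  have hs : 0 ≤ ∑ a, C a := Finset.sum_nonneg fun a _ => hC a
  refine ⟨1 + ∑ a, C a, ?_, ?_, ?_, ?_, ?_, ?_⟩
  · exact fun x => hasFDerivAt_coord ((Ff_cd hσ).differentiable (by norm_num) x) _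
      fun a => Ff_coord hσ a x
  · exact fun a x => hasFDerivAt_coord ((Ff1_cd hσ a).differentiable (by norm_num) x) _
      fun b => rfl
  · intro x
    unfold Ff
    rw [abs_of_nonneg (Finset.prod_nonneg fun i _ => Qf_nonneg hσ i x)]
    exact (Finset.prod_le_one (fun i _ => Qf_nonneg hσ i x) fun i _ => Qf_le_one hσ i x).trans
      (by linarith)
  · exact fun a x => (h1 a x).trans (hle a)
  · exact fun a b x => (Ff2_bound hσ a b (hC a) (h2 a) x).trans (hle a)
  · exact fun a b => ((Ff1_cd hσ a).continuous_fderiv (by norm_num)).clm_apply continuous_const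

end GordonFinite

lemma step_exists (δ : ℝ) (hδ : 0 < δ) (d : ℝ) :
    Step (fun x => 1 - Real.smoothTransition ((x + d) / δ)) := by
  have hcd : ∀ n : ℕ∞, ContDiff ℝ n (fun x => 1 - Real.smoothTransition ((x + d) / δ)) := fun n =>
    contDiff_const.sub (Real.smoothTransition.contDiff.comp (by fun_prop))
  have hsupp : HasCompactSupport (deriv (fun x => 1 - Real.smoothTransition ((x + d) / δ))) := by
    refine HasCompactSupport.intro (isCompact_Icc (a := -d) (b := δ - d)) fun x hx => ?_
    rw [mem_Icc, not_and_or, not_le, not_le] at hx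
    rcases hx with hx | hx
    · have : (fun x => 1 - Real.smoothTransition ((x + d) / δ)) =ᶠ[𝓝 x] fun _ => 1 := by
        filter_upwards [gt_mem_nhds hx] with y hy
        rw [Real.smoothTransition.zero_of_nonpos (div_nonpos_of_nonpos_of_nonneg (by linarith) hδ.le),
          sub_zero]
      rw [this.deriv_eq]; simp
    · have : (fun x => 1 - Real.smoothTransition ((x + d) / δ)) =ᶠ[𝓝 x] fun _ => 0 := by
        filter_upwards [lt_mem_nhds hx] with y hy
        rw [Real.smoothTransition.one_of_one_le ((one_le_div hδ).2 (by linarith)), sub_self]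
      rw [this.deriv_eq]; simp
  have hcd1 : ContDiff ℝ 1 (deriv (fun x => 1 - Real.smoothTransition ((x + d) / δ))) := by
    have := hcd 2
    rw [show (((2 : ℕ∞)) : WithTop ℕ∞) = 1 + 1 by norm_num] at this
    exact (contDiff_succ_iff_deriv.1 this).2.2
  obtain ⟨D, hD⟩ := hsupp.exists_bound_of_continuous hcd1.continuous
  have hD0 : 0 ≤ D := (norm_nonneg _).trans (hD 0)
  refine ⟨hcd 2, ?_, ?_, ?_, ?_, ?_⟩
  · intro x y hxy
    exact sub_le_sub_left (Real.smoothTransition.monotone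
      (div_le_div_of_nonneg_right (by linarith) hδ.le)) _
  · exact fun x => sub_nonneg.2 (Real.smoothTransition.le_one _)
  · exact fun x => sub_le_self _ (Real.smoothTransition.nonneg _)
  · refine ⟨1 + D, by positivity, fun x => ?_, fun x y => ?_⟩
    · rw [abs_of_nonneg (sub_nonneg.2 (Real.smoothTransition.le_one _))]
      linarith [Real.smoothTransition.nonneg ((x + d) / δ)]
    · have hl := lipschitzWith_of_nnnorm_deriv_le (C := D.toNNReal)
        ((hcd 1).differentiable (by norm_num)) (fun x => by
          rw [← NNReal.coe_le_coe, Real.coe_toNNReal _ hD0]; exact hD x)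
      have := hl.dist_le_mul x y
      rw [Real.dist_eq, Real.coe_toNNReal _ hD0] at this
      refine this.trans (mul_le_mul_of_nonneg_right ?_ dist_nonneg)
      linarith
  · obtain ⟨L, hL⟩ := ContDiff.lipschitzWith_of_hasCompactSupport hsupp hcd1 (by norm_num)
    refine ⟨D + L, by positivity, fun x => (hD x).trans (by simp), fun x y => ?_⟩
    have := hL.dist_le_mul x y
    rw [Real.dist_eq] at this
    exact this.trans (mul_le_mul_of_nonneg_right (by simpa using hD0) dist_nonneg)

section Gordon

lemma gordon_fin_aux {I J K : Type*} [Fintype I] [DecidableEq I] [Fintype J] [DecidableEq J]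
    [Fintype K] [DecidableEq K]
    (A B : I × J → K → ℝ) (hAB : ∀ a b, ∑ k, A a k * B b k = 0)
    (hge : ∀ a b, ∑ k, B a k * B b k ≤ ∑ k, A a k * A b k)
    (heq : ∀ a b, a.1 = b.1 → ∑ k, A a k * A b k = ∑ k, B a k * B b k) (d : I × J → ℝ)
    (δ : ℝ) (hδ : 0 < δ) :
    gpi K {w | ∀ i, ∃ j, δ ≤ Lm B w (i, j) + d (i, j)}
      ≤ gpi K {w | ∀ i, ∃ j, 0 < Lm A w (i, j) + d (i, j)} := by
  set σ : I × J → ℝ → ℝ := fun a x => 1 - Real.smoothTransition ((x + d a) / δ) with hσd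
  have hσ : ∀ a, Step (σ a) := fun a => step_exists δ hδ (d a)
  obtain ⟨C, hC⟩ := Ff_test hσ
  have key := interp_mono A B hAB hC (fun a b x => by
    by_cases h : a.1 = b.1
    · rw [heq a b h]; simp
    · exact mul_nonneg (sub_nonneg.2 (hge a b)) (Ff2_nonneg hσ a b h x))
  have hFc : Continuous (Ff σ) := (Ff_cd hσ).continuous
  have hintg : ∀ M : I × J → K → ℝ, Integrable (fun w => Ff σ (Lm M w)) (gpi K) := fun M =>
    Integrable.of_bound (hFc.comp (Lm_cont M)).aestronglyMeasurable C
      (Eventually.of_forall fun w => hC.b0 _)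
  have hLm : ∀ (M : I × J → K → ℝ) a, Measurable fun w => Lm M w a + d a := fun M a =>
    (((continuous_apply a).comp (Lm_cont M)).add continuous_const).measurable
  have m1 : MeasurableSet {w : K → ℝ | ∀ i, ∃ j, δ ≤ Lm B w (i, j) + d (i, j)} := by
    simp only [setOf_forall, setOf_exists]
    exact MeasurableSet.iInter fun i => MeasurableSet.iUnion fun j =>
      measurableSet_le measurable_const (hLm B _)
  have m2 : MeasurableSet {w : K → ℝ | ∀ i, ∃ j, 0 < Lm A w (i, j) + d (i, j)} := by
    simp only [setOf_forall, setOf_exists]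
    exact MeasurableSet.iInter fun i => MeasurableSet.iUnion fun j =>
      measurableSet_lt measurable_const (hLm A _)
  have hF0 : ∀ x, 0 ≤ Ff σ x := fun x => Finset.prod_nonneg fun i _ => Qf_nonneg hσ i x
  have hF1 : ∀ x, Ff σ x ≤ 1 := fun x =>
    Finset.prod_le_one (fun i _ => Qf_nonneg hσ i x) fun i _ => Qf_le_one hσ i x
  have l1 : (gpi K).real {w | ∀ i, ∃ j, δ ≤ Lm B w (i, j) + d (i, j)}
      ≤ ∫ w, Ff σ (Lm B w) ∂(gpi K) := by
    rw [← integral_indicator_one m1]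
    refine integral_mono ((integrable_const (1:ℝ)).indicator m1) (hintg B) fun w => ?_
    by_cases hw : w ∈ {w : K → ℝ | ∀ i, ∃ j, δ ≤ Lm B w (i, j) + d (i, j)}
    · rw [indicator_of_mem hw]
      refine le_of_eq (Eq.symm (Finset.prod_eq_one fun i _ => ?_))
      obtain ⟨j, hj⟩ := hw i
      unfold Qf
      rw [Finset.prod_eq_zero (Finset.mem_univ j), sub_zero]
      simp only [hσd]
      rw [Real.smoothTransition.one_of_one_le ((one_le_div hδ).2 hj), sub_self]
    · rw [indicator_of_notMem hw]; exact hF0 _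
  have l2 : ∫ w, Ff σ (Lm A w) ∂(gpi K)
      ≤ (gpi K).real {w | ∀ i, ∃ j, 0 < Lm A w (i, j) + d (i, j)} := by
    rw [← integral_indicator_one m2]
    refine integral_mono (hintg A) ((integrable_const (1:ℝ)).indicator m2) fun w => ?_
    by_cases hw : w ∈ {w : K → ℝ | ∀ i, ∃ j, 0 < Lm A w (i, j) + d (i, j)}
    · rw [indicator_of_mem hw]; exact hF1 _
    · rw [indicator_of_notMem hw]
      simp only [mem_setOf_eq, not_forall, not_exists, not_lt] at hw
      obtain ⟨i, hi⟩ := hw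
      refine le_of_eq (Finset.prod_eq_zero (Finset.mem_univ i) ?_)
      unfold Qf
      rw [Finset.prod_eq_one, sub_self]
      intro j _
      simp only [hσd]
      rw [Real.smoothTransition.zero_of_nonpos (div_nonpos_of_nonpos_of_nonneg (hi j) hδ.le), sub_zero]
  have := l1.trans (key.trans l2)
  simpa [Measure.real, ENNReal.toReal_le_toReal] using this

lemma gordon_fin {I J K : Type*} [Fintype I] [DecidableEq I] [Fintype J] [DecidableEq J]
    [Fintype K] [DecidableEq K]
    (A B : I × J → K → ℝ) (hAB : ∀ a b, ∑ k, A a k * B b k = 0)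
    (hge : ∀ a b, ∑ k, B a k * B b k ≤ ∑ k, A a k * A b k)
    (heq : ∀ a b, a.1 = b.1 → ∑ k, A a k * A b k = ∑ k, B a k * B b k) (d : I × J → ℝ) :
    gpi K {w | ∀ i, ∃ j, 0 < Lm B w (i, j) + d (i, j)}
      ≤ gpi K {w | ∀ i, ∃ j, 0 < Lm A w (i, j) + d (i, j)} := by
  set E : ℕ → Set (K → ℝ) := fun m => {w | ∀ i, ∃ j, 1 / ((m:ℝ) + 1) ≤ Lm B w (i, j) + d (i, j)}
  have hE : {w | ∀ i, ∃ j, 0 < Lm B w (i, j) + d (i, j)} = ⋃ m, E m := by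
    ext w
    simp only [mem_setOf_eq, mem_iUnion, E]
    constructor
    · intro h
      choose j hj using h
      have : ∀ i, ∀ᶠ m : ℕ in atTop, 1 / ((m:ℝ) + 1) ≤ Lm B w (i, j i) + d (i, j i) := fun i =>
        (tendsto_one_div_add_atTop_nhds_zero_nat.eventually (ge_mem_nhds (hj i)))
      obtain ⟨m, hm⟩ := (eventually_all.2 this).exists
      exact ⟨m, fun i => ⟨j i, hm i⟩⟩
    · rintro ⟨m, hm⟩ i
      obtain ⟨j, hj⟩ := hm i
      exact ⟨j, lt_of_lt_of_le (by positivity) hj⟩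
  have hmono : Monotone E := by
    intro m m' hmm w hw i
    obtain ⟨j, hj⟩ := hw i
    exact ⟨j, (Nat.one_div_le_one_div hmm).trans hj⟩
  rw [hE]
  exact le_of_tendsto' (tendsto_measure_iUnion_atTop hmono) fun m =>
    gordon_fin_aux A B hAB hge heq d _ (by positivity)

lemma gordon_nat {K : Type*} [Fintype K] [DecidableEq K]
    (A B : ℕ × ℕ → K → ℝ) (hAB : ∀ a b, ∑ k, A a k * B b k = 0)
    (hge : ∀ a b, ∑ k, B a k * B b k ≤ ∑ k, A a k * A b k)
    (heq : ∀ a b, a.1 = b.1 → ∑ k, A a k * A b k = ∑ k, B a k * B b k) (d : ℕ × ℕ → ℝ) :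
    gpi K {w | ∀ i, ∃ j, 0 < (∑ k, B (i, j) k * w k) + d (i, j)}
      ≤ gpi K {w | ∀ i, ∃ j, 0 < (∑ k, A (i, j) k * w k) + d (i, j)} := by
  have h1 : ∀ k l : ℕ, gpi K {w | ∀ i < k, ∃ j < l, 0 < (∑ k, B (i, j) k * w k) + d (i, j)}
      ≤ gpi K {w | ∀ i < k, ∃ j, 0 < (∑ k, A (i, j) k * w k) + d (i, j)} := by
    intro k l
    have := gordon_fin (I := Fin k) (J := Fin l) (fun a => A (a.1, a.2)) (fun a => B (a.1, a.2))
      (fun a b => hAB _ _) (fun a b => hge _ _) (fun a b h => heq _ _ (by simp [h]))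
      (fun a => d (a.1, a.2))
    refine le_trans (le_of_eq ?_) (this.trans (measure_mono ?_))
    · congr 1; ext w
      simp only [mem_setOf_eq, Lm]
      constructor
      · intro h i
        obtain ⟨j, hj, hh⟩ := h i i.2
        exact ⟨⟨j, hj⟩, hh⟩
      · intro h i hi
        obtain ⟨j, hh⟩ := h ⟨i, hi⟩
        exact ⟨j, j.2, hh⟩
    · intro w h i hi
      obtain ⟨j, hh⟩ := h ⟨i, hi⟩
      exact ⟨j, hh⟩
  have h2 : ∀ k : ℕ, gpi K {w | ∀ i < k, ∃ j, 0 < (∑ k, B (i, j) k * w k) + d (i, j)}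
      ≤ gpi K {w | ∀ i < k, ∃ j, 0 < (∑ k, A (i, j) k * w k) + d (i, j)} := by
    intro k
    have hmono : Monotone fun l : ℕ =>
        {w : K → ℝ | ∀ i < k, ∃ j < l, 0 < (∑ k, B (i, j) k * w k) + d (i, j)} := by
      intro l l' hl w hw i hi
      obtain ⟨j, hj, hh⟩ := hw i hi
      exact ⟨j, hj.trans_le hl, hh⟩
    refine le_trans (measure_mono ?_) (le_of_tendsto' (tendsto_measure_iUnion_atTop hmono) fun l => h1 k l)
    intro w hw
    simp only [mem_setOf_eq] at hw
    choose! j hj using hw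
    refine mem_iUnion.2 ⟨(Finset.range k).sup j + 1, fun i hi => ⟨j i, ?_, hj i hi⟩⟩
    exact Nat.lt_succ_of_le (Finset.le_sup (f := j) (Finset.mem_range.2 hi))
  have hanti : Antitone fun k : ℕ =>
      {w : K → ℝ | ∀ i < k, ∃ j, 0 < (∑ k, A (i, j) k * w k) + d (i, j)} :=
    fun k k' hk w hw i hi => hw i (hi.trans_le hk)
  have hI : {w : K → ℝ | ∀ i, ∃ j, 0 < (∑ k, A (i, j) k * w k) + d (i, j)} = ⋂ k : ℕ,
      {w : K → ℝ | ∀ i < k, ∃ j, 0 < (∑ k, A (i, j) k * w k) + d (i, j)} := by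
    ext w
    simp only [mem_setOf_eq, mem_iInter]
    exact ⟨fun h k i _ => h i, fun h i => h (i + 1) i (Nat.lt_succ_self i)⟩
  rw [hI]
  refine ge_of_tendsto' (tendsto_measure_iInter_atTop (fun k => ?_) hanti ⟨0, measure_ne_top _ _⟩)
    fun k => le_trans (measure_mono
      (t := {w : K → ℝ | ∀ i < k, ∃ j, 0 < (∑ k, B (i, j) k * w k) + d (i, j)})
      (by intro w hw i _; exact hw i)) (h2 k)
  refine MeasurableSet.nullMeasurableSet ?_
  simp only [setOf_forall, setOf_exists]
  exact MeasurableSet.iInter fun i => MeasurableSet.iInter fun _ => MeasurableSet.iUnion fun j =>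
    measurableSet_lt measurable_const (by fun_prop)

/-- dot product -/
def dt {ι : Type*} [Fintype ι] (v w : ι → ℝ) : ℝ := ∑ i, v i * w i

lemma l2_nonneg {ι : Type*} [Fintype ι] (v : ι → ℝ) : 0 ≤ l2 v := Real.sqrt_nonneg _
lemma l2_sq {ι : Type*} [Fintype ι] (v : ι → ℝ) : l2 v ^ 2 = ∑ i, v i ^ 2 :=
  Real.sq_sqrt (Finset.sum_nonneg fun _ _ => sq_nonneg _)
lemma l2_sq' {ι : Type*} [Fintype ι] (v : ι → ℝ) : l2 v * l2 v = dt v v := by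
  rw [← sq, l2_sq]; exact Finset.sum_congr rfl fun i _ => sq _
lemma dt_le {ι : Type*} [Fintype ι] (v w : ι → ℝ) : dt v w ≤ l2 v * l2 w := by
  unfold dt l2
  exact Real.sum_mul_le_sqrt_mul_sqrt _ _ _

/-- the index set of the Gaussian variables -/
abbrev KK (n p : ℕ) := ((Fin n × Fin p) ⊕ Unit) ⊕ (Fin p ⊕ Fin n)

lemma gordon_pre {n p : ℕ} (θ : ℕ × ℕ → Fin p → ℝ) (l : ℕ × ℕ → Fin n → ℝ) (d : ℕ × ℕ → ℝ)
    (hz : ∀ a b, a.1 = b.1 →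
      (l2 (θ a) * l2 (θ b) - dt (θ a) (θ b)) * (l2 (l a) * l2 (l b) - dt (l a) (l b)) = 0) :
    gpi (KK n p) {w | ∀ i, ∃ j, 0 < l2 (l (i,j)) * (∑ k, θ (i,j) k * w (.inr (.inl k)))
          + l2 (θ (i,j)) * (∑ k, l (i,j) k * w (.inr (.inr k))) + d (i,j)}
      ≤ gpi (KK n p) {w | ∀ i, ∃ j, 0 < (∑ k, l (i,j) k.1 * θ (i,j) k.2 * w (.inl (.inl k)))
          + l2 (θ (i,j)) * l2 (l (i,j)) * w (.inl (.inr ())) + d (i,j)} := by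
  have := gordon_nat (K := KK n p)
    (fun a => Sum.elim (Sum.elim (fun k => l a k.1 * θ a k.2) (fun _ => l2 (θ a) * l2 (l a))) (fun _ => 0))
    (fun a => Sum.elim (fun _ => 0) (Sum.elim (fun k => l2 (l a) * θ a k) (fun k => l2 (θ a) * l a k)))
    (fun a b => by simp) ?_ ?_ d
  · simpa only [Fintype.sum_sum_type, Sum.elim_inl, Sum.elim_inr, zero_mul, Finset.sum_const_zero,
      add_zero, zero_add, Finset.univ_unique, Finset.sum_singleton, mul_assoc, ← Finset.mul_sum] using this
  all_goals
    intro a b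
    have e1 : ∑ k : Fin n × Fin p, l a k.1 * θ a k.2 * (l b k.1 * θ b k.2)
        = dt (l a) (l b) * dt (θ a) (θ b) := by
      unfold dt
      rw [Finset.sum_mul_sum, Fintype.sum_prod_type]
      exact Finset.sum_congr rfl fun i _ => Finset.sum_congr rfl fun j _ => by ring
    have e2 : ∑ k, l2 (l a) * θ a k * (l2 (l b) * θ b k) = l2 (l a) * l2 (l b) * dt (θ a) (θ b) := by
      unfold dt; rw [Finset.mul_sum]; exact Finset.sum_congr rfl fun i _ => by ring
    have e3 : ∑ k, l2 (θ a) * l a k * (l2 (θ b) * l b k) = l2 (θ a) * l2 (θ b) * dt (l a) (l b) := by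
      unfold dt; rw [Finset.mul_sum]; exact Finset.sum_congr rfl fun i _ => by ring
    simp only [Fintype.sum_sum_type, Sum.elim_inl, Sum.elim_inr, zero_mul, Finset.sum_const_zero,
      add_zero, zero_add, Finset.univ_unique, Finset.sum_singleton, e1, e2, e3]
  · nlinarith [mul_nonneg (sub_nonneg.2 (dt_le (θ a) (θ b))) (sub_nonneg.2 (dt_le (l a) (l b)))]
  · intro h
    linarith [hz a b h]

lemma mp_KK (n p : ℕ) : MeasurePreserving
    (fun w : KK n p → ℝ => (((fun k => w (.inl (.inl k))), w (.inl (.inr ()))),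
      ((fun k => w (.inr (.inl k))), (fun k => w (.inr (.inr k))))))
    (gpi (KK n p)) (((gpi (Fin n × Fin p)).prod stdG).prod ((gpi (Fin p)).prod (gpi (Fin n)))) := by
  have a := measurePreserving_sumPiEquivProdPi (X := fun _ : KK n p => ℝ) (fun _ => stdG)
  have b := measurePreserving_sumPiEquivProdPi (X := fun _ : (Fin n × Fin p) ⊕ Unit => ℝ) (fun _ => stdG)
  have c := measurePreserving_sumPiEquivProdPi (X := fun _ : Fin p ⊕ Fin n => ℝ) (fun _ => stdG)
  have u := measurePreserving_funUnique stdG Unit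
  exact ((((MeasurePreserving.id (gpi (Fin n × Fin p))).prod u).comp b).prod c).comp a

/-- Gordon's inequality in the form used below. -/
lemma gordon {n p : ℕ} (θ : ℕ × ℕ → Fin p → ℝ) (l : ℕ × ℕ → Fin n → ℝ) (d : ℕ × ℕ → ℝ)
    (hz : ∀ a b, a.1 = b.1 →
      (l2 (θ a) * l2 (θ b) - dt (θ a) (θ b)) * (l2 (l a) * l2 (l b) - dt (l a) (l b)) = 0) :
    stdG (Iic 0) * gpi (Fin n × Fin p)
        {w | ∃ i, ∀ j, (∑ k, l (i,j) k.1 * θ (i,j) k.2 * w k) + d (i,j) ≤ 0}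
      ≤ ((gpi (Fin p)).prod (gpi (Fin n))) {q | ∃ i, ∀ j, l2 (l (i,j)) * dt (θ (i,j)) q.1
          + l2 (θ (i,j)) * dt (l (i,j)) q.2 + d (i,j) ≤ 0} := by
  have h := gordon_pre θ l d hz
  have mp := mp_KK n p
  have mp1 := measurePreserving_fst.comp mp
  have mp2 := measurePreserving_snd.comp mp
  have mY : MeasurableSet {q : (Fin p → ℝ) × (Fin n → ℝ) | ∃ i, ∀ j, l2 (l (i,j)) * dt (θ (i,j)) q.1
          + l2 (θ (i,j)) * dt (l (i,j)) q.2 + d (i,j) ≤ 0} := by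
    unfold dt
    simp only [setOf_forall, setOf_exists]
    exact MeasurableSet.iUnion fun i => MeasurableSet.iInter fun j =>
      measurableSet_le (by fun_prop) measurable_const
  have mX : MeasurableSet {q : (Fin n × Fin p → ℝ) × ℝ | ∃ i, ∀ j,
      (∑ k, l (i,j) k.1 * θ (i,j) k.2 * q.1 k) + l2 (θ (i,j)) * l2 (l (i,j)) * q.2 + d (i,j) ≤ 0} := by
    simp only [setOf_forall, setOf_exists]
    exact MeasurableSet.iUnion fun i => MeasurableSet.iInter fun j =>
      measurableSet_le (by fun_prop) measurable_const
  rw [← mp2.measure_preimage mY.nullMeasurableSet]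
  calc _ = ((gpi (Fin n × Fin p)).prod stdG)
        ({w | ∃ i, ∀ j, (∑ k, l (i,j) k.1 * θ (i,j) k.2 * w k) + d (i,j) ≤ 0} ×ˢ Iic 0) := by
        rw [Measure.prod_prod, mul_comm]
    _ ≤ ((gpi (Fin n × Fin p)).prod stdG) _ := measure_mono (t := {q | ∃ i, ∀ j,
      (∑ k, l (i,j) k.1 * θ (i,j) k.2 * q.1 k) + l2 (θ (i,j)) * l2 (l (i,j)) * q.2 + d (i,j) ≤ 0}) (by
        rintro ⟨w, s⟩ ⟨⟨i, hi⟩, hs⟩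
        refine ⟨i, fun j => ?_⟩
        have h1 := hi j
        have hs : s ≤ 0 := hs
        have h2 := mul_nonneg (mul_nonneg (l2_nonneg (θ (i,j))) (l2_nonneg (l (i,j)))) (neg_nonneg.2 hs)
        simp only
        nlinarith)
    _ = _ := (mp1.measure_preimage mX.nullMeasurableSet).symm
    _ ≤ _ := by
      have c1 := prob_compl_eq_one_sub (μ := gpi (KK n p)) (mp1.measurable mX)
      have c2 := prob_compl_eq_one_sub (μ := gpi (KK n p)) (mp2.measurable mY)
      rw [← compl_compl ((Prod.fst ∘ _) ⁻¹' _), prob_compl_eq_one_sub (mp1.measurable mX).compl,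
        ← compl_compl ((Prod.snd ∘ _) ⁻¹' _), prob_compl_eq_one_sub (mp2.measurable mY).compl]
      refine tsub_le_tsub_left ?_ 1
      refine le_trans (le_of_eq ?_) (h.trans (le_of_eq ?_))
      · congr 1; ext w; simp [dt]
      · congr 1; ext w; simp [dt]

end Gordon

section DataLaw

/-- law of `T = Y G` -/
def mT (f : ℝ → ℝ) (r : ℝ) : Measure ℝ :=
  stdG.withDensity (fun t => ENNReal.ofReal (f (r * t) + (1 - f (-(r * t)))))

/-- the linear map producing the features -/
def Lmap {p : ℕ} (A : Fin p → Fin p → ℝ) (u : Fin p → ℝ) (τ : ℝ) (g : Fin p → ℝ) : Fin p → ℝ :=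
  fun j => ∑ i, A j i * (u i * τ + (g i - u i * dt u g))

lemma Lmap_meas {p : ℕ} (A : Fin p → Fin p → ℝ) (u : Fin p → ℝ) :
    Measurable (fun q : ℝ × (Fin p → ℝ) => Lmap A u q.1 q.2) := by
  unfold Lmap dt
  fun_prop

lemma Lmap_neg {p : ℕ} (A : Fin p → Fin p → ℝ) (u : Fin p → ℝ) (τ : ℝ) (g : Fin p → ℝ) :
    Lmap A u (-τ) (-g) = - Lmap A u τ g := by
  ext j
  simp only [Lmap, dt, Pi.neg_apply, ← Finset.sum_neg_distrib]
  refine Finset.sum_congr rfl fun i _ => ?_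
  simp only [mul_neg, Finset.sum_neg_distrib]
  ring

lemma charFun_prod_lin {p : ℕ} (a : ℝ) (b : Fin p → ℝ) (t : ℝ) :
    charFun ((stdG.prod (gpi (Fin p))).map (fun q => a * q.1 + ∑ i, b i * q.2 i)) t
      = Complex.exp (-((a ^ 2 + ∑ i, b i ^ 2 : ℝ) * t ^ 2 / 2)) := by
  rw [charFun_apply_real, integral_map (by fun_prop) (by fun_prop)]
  have e : ∀ q : ℝ × (Fin p → ℝ), Complex.exp (t * ((a * q.1 + ∑ i, b i * q.2 i : ℝ) : ℂ) * Complex.I)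
      = Complex.exp ((t * a : ℝ) * q.1 * Complex.I) * ∏ i, Complex.exp ((t * b i : ℝ) * q.2 i * Complex.I) := by
    intro q
    rw [← Complex.exp_sum, ← Complex.exp_add]
    congr 1
    push_cast
    rw [mul_add, add_mul, Finset.mul_sum, Finset.sum_mul]
    congr 1
    · ring
    · exact Finset.sum_congr rfl fun i _ => by ring
  simp_rw [e]
  rw [integral_prod_mul (μ := stdG) (ν := gpi (Fin p)) (fun x : ℝ => Complex.exp ((t * a : ℝ) * x * Complex.I))
    (fun g : Fin p → ℝ => ∏ i, Complex.exp ((t * b i : ℝ) * g i * Complex.I))]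
  rw [integral_fintype_prod_eq_prod (fun i (x : ℝ) => Complex.exp ((t * b i : ℝ) * x * Complex.I))]
  have hc : ∀ s : ℝ, ∫ x, Complex.exp ((s:ℝ) * x * Complex.I) ∂stdG = Complex.exp (-(s ^ 2 / 2 : ℝ)) := by
    intro s
    rw [← charFun_apply_real]
    unfold stdG
    rw [charFun_gaussianReal]
    congr 1
    push_cast
    ring
  simp_rw [hc]
  rw [← Complex.exp_sum, ← Complex.exp_add]
  congr 1
  push_cast
  simp only [mul_pow, Finset.sum_neg_distrib, ← Finset.sum_div, ← Finset.mul_sum]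
  ring

lemma nu_eq {p : ℕ} (A : Fin p → Fin p → ℝ) (u : Fin p → ℝ) (hu : ∑ i, u i ^ 2 = 1)
    (S : Matrix (Fin p) (Fin p) ℝ) (hS : ∀ a b, S a b = ∑ i, A a i * A b i)
    (ν : Measure (Fin p → ℝ)) [IsProbabilityMeasure ν] (hν : IsCGauss ν S) :
    ν = (stdG.prod (gpi (Fin p))).map (fun q => Lmap A u q.1 q.2) := by
  have hm := Lmap_meas A u
  haveI : IsProbabilityMeasure ((stdG.prod (gpi (Fin p))).map (fun q => Lmap A u q.1 q.2)) :=
    Measure.isProbabilityMeasure_map hm.aemeasurable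
  refine Measure.ext_of_charFunDual ?_
  ext Lf
  set a : Fin p → ℝ := fun j => Lf (Pi.single j 1) with ha
  have hL : ∀ x : Fin p → ℝ, Lf x = ∑ j, a j * x j := by
    intro x
    conv_lhs => rw [← ContinuousLinearMap.coe_coe Lf, LinearMap.pi_apply_eq_sum_univ]
    refine Finset.sum_congr rfl fun i _ => ?_
    have : (fun j => if i = j then (1:ℝ) else 0) = Pi.single i 1 := by
      ext j; simp [Pi.single_apply, eq_comm]
    rw [this]; simp [ha, mul_comm]
  have hLf : (Lf : (Fin p → ℝ) → ℝ) = fun x => ∑ j, a j * x j := funext hL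
  rw [charFunDual_eq_charFun_map_one, charFunDual_eq_charFun_map_one, hLf, hν a,
    Measure.map_map (by fun_prop) hm]
  set b : Fin p → ℝ := fun i => ∑ j, a j * A j i with hb
  have e : ((fun x : Fin p → ℝ => ∑ j, a j * x j) ∘ fun q : ℝ × (Fin p → ℝ) => Lmap A u q.1 q.2)
      = fun q => dt b u * q.1 + ∑ i, (b i - dt b u * u i) * q.2 i := by
    ext q
    have h1 : ∑ j, a j * Lmap A u q.1 q.2 j = ∑ i, b i * (u i * q.1 + (q.2 i - u i * dt u q.2)) := by
      simp only [Lmap, hb, Finset.mul_sum, Finset.sum_mul]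
      rw [Finset.sum_comm]
      exact Finset.sum_congr rfl fun i _ => Finset.sum_congr rfl fun j _ => by ring
    simp only [Function.comp_apply, h1]
    have h2 : ∀ i, b i * (u i * q.1 + (q.2 i - u i * dt u q.2))
        = (b i * u i) * q.1 + b i * q.2 i - (b i * u i) * dt u q.2 := fun i => by ring
    have h3 : ∀ i, (b i - dt b u * u i) * q.2 i = b i * q.2 i - dt b u * (u i * q.2 i) :=
      fun i => by ring
    simp only [h2, h3, Finset.sum_sub_distrib, Finset.sum_add_distrib, ← Finset.sum_mul,
      ← Finset.mul_sum]
    rw [show ∑ i, b i * u i = dt b u from rfl, show ∑ i, u i * q.2 i = dt u q.2 from rfl]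
    ring
  rw [e, charFun_prod_lin, charFun_gaussianReal]
  have hnn : ∑ i, ∑ j, a i * S i j * a j = ∑ i, b i ^ 2 := by
    simp only [hS, hb, sq, Finset.sum_mul_sum, Finset.mul_sum, Finset.sum_mul]
    rw [Finset.sum_comm]
    have : ∀ j, ∑ x, ∑ i, a x * (A x i * A j i) * a j = ∑ i, ∑ x, a x * (A x i * A j i) * a j :=
      fun j => Finset.sum_comm
    simp only [this]
    rw [Finset.sum_comm]
    refine Finset.sum_congr rfl fun i _ => ?_
    rw [Finset.sum_comm]
    exact Finset.sum_congr rfl fun j _ => Finset.sum_congr rfl fun x _ => by ring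
  have hvar : dt b u ^ 2 + ∑ i, (b i - dt b u * u i) ^ 2 = ∑ i, b i ^ 2 := by
    have : ∀ i, (b i - dt b u * u i) ^ 2 = b i ^ 2 - 2 * dt b u * (b i * u i) + dt b u ^ 2 * u i ^ 2 :=
      fun i => by ring
    simp only [this, Finset.sum_add_distrib, Finset.sum_sub_distrib, ← Finset.mul_sum, hu]
    rw [show ∑ i, b i * u i = dt b u from rfl]
    ring
  rw [hvar, hnn]
  congr 1
  rw [Real.coe_toNNReal _ (Finset.sum_nonneg fun i _ => sq_nonneg _)]
  push_cast
  ring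

lemma signBer_apply (q : ℝ) (s : Set ℝ) (hs : MeasurableSet s) :
    signBer q s = ENNReal.ofReal q * s.indicator 1 1 + ENNReal.ofReal (1 - q) * s.indicator 1 (-1) := by
  unfold signBer
  simp [Measure.dirac_apply' _ hs]

lemma signBer_prob {q : ℝ} (hq : q ∈ Icc (0:ℝ) 1) : IsProbabilityMeasure (signBer q) := by
  constructor
  rw [signBer_apply _ _ MeasurableSet.univ]
  simp only [indicator_univ, Pi.one_apply, mul_one]
  rw [← ENNReal.ofReal_add hq.1 (by linarith [hq.2])]
  simp

lemma lintegral_pi_prod {n : ℕ} {X : Type*} [MeasurableSpace X] (ν : Measure X)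
    [IsProbabilityMeasure ν] (g : Fin n → X → ENNReal) (hg : ∀ i, Measurable (g i)) :
    ∫⁻ x, ∏ i, g i (x i) ∂(Measure.pi fun _ : Fin n => ν) = ∏ i, ∫⁻ x, g i x ∂ν := by
  have hind : iIndepFun (fun i (x : Fin n → X) => g i (x i)) (Measure.pi fun _ : Fin n => ν) :=
    iIndepFun_pi (μ := fun _ : Fin n => ν) (X := g) fun i => (hg i).aemeasurable
  have := lintegral_prod_eq_prod_lintegral_of_indepFun Finset.univ _ hind
    (fun i => (hg i).comp (measurable_pi_apply i))
  rw [this]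
  refine Finset.prod_congr rfl fun i _ => ?_
  exact (measurePreserving_eval (fun _ : Fin n => ν) i).lintegral_comp (hg i)

lemma kernel_meas {n p : ℕ} (f : ℝ → ℝ) (hf : Continuous f) (hf01 : ∀ x, f x ∈ Set.Icc (0:ℝ) 1)
    (θs : Fin p → ℝ) : Measurable fun xs : Fin n → Fin p → ℝ =>
      (Measure.pi fun i : Fin n => signBer (f (∑ j, θs j * xs i j))).map fun ys => (xs, ys) := by
  haveI : ∀ q, IsProbabilityMeasure (signBer (f q)) := fun q => signBer_prob (hf01 q)
  have h0 : Measurable fun xs : Fin n → Fin p → ℝ =>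
      (Measure.pi fun i : Fin n => signBer (f (∑ j, θs j * xs i j))) := by
    refine Measurable.measure_of_isPiSystem_of_isProbabilityMeasure generateFrom_pi.symm isPiSystem_pi ?_
    rintro _ ⟨s, hs, rfl⟩
    simp only [Measure.pi_pi]
    refine Finset.measurable_prod _ fun i _ => ?_
    simp only [signBer_apply _ _ (hs i (mem_univ i))]
    have : Measurable fun xs : Fin n → Fin p → ℝ => f (∑ j, θs j * xs i j) := by fun_prop
    fun_prop
  let κ : Kernel (Fin n → Fin p → ℝ) (Fin n → ℝ) := ⟨_, h0⟩
  haveI : IsMarkovKernel κ := ⟨fun xs => by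
    show IsProbabilityMeasure (Measure.pi fun i : Fin n => signBer (f (∑ j, θs j * xs i j)))
    infer_instance⟩
  have h1 := (Kernel.id ×ₖ κ).measurable
  convert h1 using 2 with xs
  rw [Kernel.prod_apply, Kernel.id_apply, Measure.dirac_prod]
  rfl

lemma mT_prob (f : ℝ → ℝ) (hf : Continuous f) (hf01 : ∀ x, f x ∈ Set.Icc (0:ℝ) 1) (r : ℝ) :
    IsProbabilityMeasure (mT f r) := by
  constructor
  unfold mT
  rw [withDensity_apply _ MeasurableSet.univ, Measure.restrict_univ]
  have h1 : ∀ t, ENNReal.ofReal (f (r * t) + (1 - f (-(r * t))))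
      = ENNReal.ofReal (f (r * t)) + ENNReal.ofReal (1 - f (-(r * t))) := fun t =>
    ENNReal.ofReal_add (hf01 _).1 (by linarith [(hf01 (-(r * t))).2])
  simp only [h1]
  rw [lintegral_add_left (by fun_prop)]
  have h2 : ∫⁻ t, ENNReal.ofReal (1 - f (-(r * t))) ∂stdG = ∫⁻ t, ENNReal.ofReal (1 - f (r * t)) ∂stdG := by
    conv_rhs => rw [← stdG_map_neg]
    rw [lintegral_map (by fun_prop) (by fun_prop)]
    simp
  rw [h2, ← lintegral_add_left (by fun_prop)]
  have h3 : ∀ t, ENNReal.ofReal (f (r * t)) + ENNReal.ofReal (1 - f (r * t)) = 1 := fun t => by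
    rw [← ENNReal.ofReal_add (hf01 _).1 (by linarith [(hf01 (r * t)).2])]; simp
  simp [h3]

lemma gpi_map_neg (K : Type*) [Fintype K] : (gpi K).map (fun w => -w) = gpi K := by
  have := (measurePreserving_pi (fun _ : K => stdG) (fun _ : K => stdG)
    (f := fun _ x => -x) (fun i => ⟨measurable_neg, stdG_map_neg⟩)).map_eq
  exact this

lemma omega_eq {p : ℕ} (f : ℝ → ℝ) (hf : Continuous f) (hf01 : ∀ x, f x ∈ Set.Icc (0:ℝ) 1)
    (θs : Fin p → ℝ) (r : ℝ)
    (A : Fin p → Fin p → ℝ) (u : Fin p → ℝ) (hu : ∑ i, u i ^ 2 = 1)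
    (hθ : ∀ i, ∑ j, θs j * A j i = r * u i)
    (S : Matrix (Fin p) (Fin p) ℝ) (hS : ∀ a b, S a b = ∑ i, A a i * A b i)
    (ν : Measure (Fin p → ℝ)) [IsProbabilityMeasure ν] (hν : IsCGauss ν S)
    (s : Set (Fin p → ℝ)) (hs : MeasurableSet s) :
    ∫⁻ x, (ENNReal.ofReal (f (∑ j, θs j * x j)) * s.indicator 1 x
      + ENNReal.ofReal (1 - f (∑ j, θs j * x j)) * s.indicator 1 (-x)) ∂ν
      = (((mT f r).prod (gpi (Fin p))).map (fun q => Lmap A u q.1 q.2)) s := by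
  have hm := Lmap_meas A u
  have mi : Measurable (s.indicator (1 : (Fin p → ℝ) → ENNReal)) := measurable_one.indicator hs
  have mi' : Measurable fun x : Fin p → ℝ => s.indicator (1 : (Fin p → ℝ) → ENNReal) (-x) :=
    mi.comp measurable_neg
  have hin : ∀ q : ℝ × (Fin p → ℝ), ∑ j, θs j * Lmap A u q.1 q.2 j = r * q.1 := by
    intro q
    have h1 : ∑ j, θs j * Lmap A u q.1 q.2 j
        = ∑ i, (∑ j, θs j * A j i) * (u i * q.1 + (q.2 i - u i * dt u q.2)) := by
      simp only [Lmap, Finset.mul_sum, Finset.sum_mul]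
      rw [Finset.sum_comm]
      exact Finset.sum_congr rfl fun i _ => Finset.sum_congr rfl fun j _ => by ring
    have h2 : ∀ i, r * u i * (u i * q.1 + (q.2 i - u i * dt u q.2))
        = (r * (q.1 - dt u q.2)) * u i ^ 2 + r * (u i * q.2 i) := fun i => by ring
    rw [h1]
    simp only [hθ, h2, Finset.sum_add_distrib, ← Finset.mul_sum, hu]
    rw [show ∑ i, u i * q.2 i = dt u q.2 from rfl]
    ring
  rw [nu_eq A u hu S hS ν hν, lintegral_map (by fun_prop) hm]
  simp only [hin]
  have mA : Measurable fun q : ℝ × (Fin p → ℝ) => ENNReal.ofReal (f (r * q.1)) *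
      s.indicator (1 : (Fin p → ℝ) → ENNReal) (Lmap A u q.1 q.2) :=
    Measurable.mul (by fun_prop) (mi.comp hm)
  have mB : Measurable fun q : ℝ × (Fin p → ℝ) => ENNReal.ofReal (1 - f (-(r * q.1))) *
      s.indicator (1 : (Fin p → ℝ) → ENNReal) (Lmap A u q.1 q.2) :=
    Measurable.mul (by fun_prop) (mi.comp hm)
  rw [lintegral_add_left mA]
  have hneg : (stdG.prod (gpi (Fin p))).map (Prod.map (fun x => -x) (fun w => -w))
      = stdG.prod (gpi (Fin p)) := by
    rw [← Measure.map_prod_map _ _ measurable_neg measurable_neg, stdG_map_neg, gpi_map_neg]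
  have h2 : ∫⁻ q, ENNReal.ofReal (1 - f (r * q.1)) *
        s.indicator (1 : (Fin p → ℝ) → ENNReal) (-Lmap A u q.1 q.2) ∂(stdG.prod (gpi (Fin p)))
      = ∫⁻ q, ENNReal.ofReal (1 - f (-(r * q.1))) *
        s.indicator (1 : (Fin p → ℝ) → ENNReal) (Lmap A u q.1 q.2) ∂(stdG.prod (gpi (Fin p))) := by
    conv_rhs => rw [← hneg]
    rw [lintegral_map mB (measurable_neg.prodMap measurable_neg)]
    simp only [Prod.map_fst, Prod.map_snd, Lmap_neg, mul_neg, neg_neg]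
  rw [h2, ← lintegral_add_left mA]
  have h3 : ∀ q : ℝ × (Fin p → ℝ), ENNReal.ofReal (f (r * q.1)) * s.indicator (1 : (Fin p → ℝ) → ENNReal) (Lmap A u q.1 q.2)
      + ENNReal.ofReal (1 - f (-(r * q.1))) * s.indicator (1 : (Fin p → ℝ) → ENNReal) (Lmap A u q.1 q.2)
      = ((fun q : ℝ × (Fin p → ℝ) => Lmap A u q.1 q.2) ⁻¹' s).indicator
        (fun q => ENNReal.ofReal (f (r * q.1) + (1 - f (-(r * q.1))))) q := by
    intro q
    rw [← add_mul, ← ENNReal.ofReal_add (hf01 _).1 (by linarith [(hf01 (-(r * q.1))).2])]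
    by_cases h : Lmap A u q.1 q.2 ∈ s
    · rw [indicator_of_mem h, indicator_of_mem (show q ∈ (fun q : ℝ × (Fin p → ℝ) => Lmap A u q.1 q.2) ⁻¹' s from h)]
      simp
    · rw [indicator_of_notMem h, indicator_of_notMem (show q ∉ (fun q : ℝ × (Fin p → ℝ) => Lmap A u q.1 q.2) ⁻¹' s from h)]
      simp
  simp only [h3]
  rw [lintegral_indicator (hm hs), Measure.map_apply hm hs]
  haveI := mT_prob f hf hf01 r
  unfold mT
  rw [prod_withDensity_left (by fun_prop), withDensity_apply _ (hm hs)]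

lemma gpi_uncurry (n p : ℕ) : MeasurePreserving
    (fun G : Fin n → Fin p → ℝ => fun k : Fin n × Fin p => G k.1 k.2)
    (Measure.pi fun _ : Fin n => gpi (Fin p)) (gpi (Fin n × Fin p)) := by
  have hm : Measurable (fun G : Fin n → Fin p → ℝ => fun k : Fin n × Fin p => G k.1 k.2) := by fun_prop
  refine ⟨hm, ?_⟩
  refine (Measure.pi_eq fun s hs => ?_).symm
  rw [Measure.map_apply hm (MeasurableSet.univ_pi hs)]
  have : (fun G : Fin n → Fin p → ℝ => fun k : Fin n × Fin p => G k.1 k.2) ⁻¹' (univ.pi s)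
      = univ.pi fun i => univ.pi fun j => s (i, j) := by
    ext G
    simp only [mem_preimage, mem_univ_pi, Prod.forall]
  rw [this, Measure.pi_pi]
  simp only [Measure.pi_pi]
  rw [Fintype.prod_prod_type]

lemma indicator_const_preimage_aux {X Y : Type*} {a : Set X} {b : Set Y} {x : X} {y : Y}
    (h : x ∈ a ↔ y ∈ b) : a.indicator (1 : X → ENNReal) x = b.indicator (1 : Y → ENNReal) y := by
  by_cases hb : y ∈ b
  · rw [indicator_of_mem hb, indicator_of_mem (h.2 hb)]; rfl
  · rw [indicator_of_notMem hb, indicator_of_notMem (fun hh => hb (h.1 hh))]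

lemma dataLaw_law {n p : ℕ} (f : ℝ → ℝ) (hf : Continuous f) (hf01 : ∀ x, f x ∈ Set.Icc (0:ℝ) 1)
    (θs : Fin p → ℝ) (r : ℝ)
    (A : Fin p → Fin p → ℝ) (u : Fin p → ℝ) (hu : ∑ i, u i ^ 2 = 1)
    (hθ : ∀ i, ∑ j, θs j * A j i = r * u i)
    (S : Matrix (Fin p) (Fin p) ℝ) (hS : ∀ a b, S a b = ∑ i, A a i * A b i)
    (ν : Measure (Fin p → ℝ)) [IsProbabilityMeasure ν] (hν : IsCGauss ν S)
    (E : Set (Fin n → Fin p → ℝ)) (hE : MeasurableSet E) :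
    dataLaw n p f θs ν {q | (fun i j => q.2 i * q.1 i j) ∈ E}
      = ((Measure.pi fun _ : Fin n => mT f r).prod (gpi (Fin n × Fin p)))
        {q | (fun i => Lmap A u (q.1 i) (fun j => q.2 (i, j))) ∈ E} := by
  haveI := mT_prob f hf hf01 r
  haveI : ∀ q, IsProbabilityMeasure (signBer (f q)) := fun q => signBer_prob (hf01 q)
  have hm := Lmap_meas A u
  set ω := ((mT f r).prod (gpi (Fin p))).map (fun q => Lmap A u q.1 q.2) with hω
  haveI : IsProbabilityMeasure ω := Measure.isProbabilityMeasure_map hm.aemeasurable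
  have hΦ : Measurable fun q : (Fin n → Fin p → ℝ) × (Fin n → ℝ) => (fun i j => q.2 i * q.1 i j) := by
    fun_prop
  have h1 : (dataLaw n p f θs ν).map (fun q => (fun i j => q.2 i * q.1 i j)) = Measure.pi fun _ : Fin n => ω := by
    refine (Measure.pi_eq fun s hs => ?_).symm
    rw [Measure.map_apply hΦ (MeasurableSet.univ_pi hs)]
    unfold dataLaw
    rw [Measure.bind_apply (hΦ (MeasurableSet.univ_pi hs)) (kernel_meas f hf hf01 θs).aemeasurable]
    have e : ∀ xs : Fin n → Fin p → ℝ,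
        ((Measure.pi fun i : Fin n => signBer (f (∑ j, θs j * xs i j))).map fun ys => (xs, ys))
          ((fun q : (Fin n → Fin p → ℝ) × (Fin n → ℝ) => (fun i j => q.2 i * q.1 i j)) ⁻¹' (univ.pi s))
        = ∏ i, (ENNReal.ofReal (f (∑ j, θs j * xs i j)) * (s i).indicator 1 (xs i)
          + ENNReal.ofReal (1 - f (∑ j, θs j * xs i j)) * (s i).indicator 1 (-xs i)) := by
      intro xs
      rw [Measure.map_apply (by fun_prop) (hΦ (MeasurableSet.univ_pi hs))]
      have : (fun ys : Fin n → ℝ => (xs, ys)) ⁻¹' ((fun q : (Fin n → Fin p → ℝ) × (Fin n → ℝ) =>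
          (fun i j => q.2 i * q.1 i j)) ⁻¹' (univ.pi s))
          = univ.pi fun i => (fun y : ℝ => fun j => y * xs i j) ⁻¹' (s i) := by
        ext ys; simp only [mem_preimage, mem_univ_pi]
      rw [this, Measure.pi_pi]
      refine Finset.prod_congr rfl fun i _ => ?_
      have hmi : Measurable fun y : ℝ => fun j => y * xs i j := by fun_prop
      rw [signBer_apply _ _ (hmi (hs i))]
      have a1 : ((fun y : ℝ => fun j => y * xs i j) ⁻¹' (s i)).indicator (1 : ℝ → ENNReal) 1
          = (s i).indicator 1 (xs i) := by
        refine indicator_const_preimage_aux ?_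
        simp only [mem_preimage, one_mul]
      have a2 : ((fun y : ℝ => fun j => y * xs i j) ⁻¹' (s i)).indicator (1 : ℝ → ENNReal) (-1)
          = (s i).indicator 1 (-xs i) := by
        refine indicator_const_preimage_aux ?_
        simp only [mem_preimage, neg_mul, one_mul]
        rfl
      rw [a1, a2]
    simp only [e]
    have mg : ∀ i, Measurable fun x : Fin p → ℝ =>
        (ENNReal.ofReal (f (∑ j, θs j * x j)) * (s i).indicator (1 : (Fin p → ℝ) → ENNReal) x
          + ENNReal.ofReal (1 - f (∑ j, θs j * x j)) * (s i).indicator (1 : (Fin p → ℝ) → ENNReal) (-x)) := by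
      intro i
      have mi : Measurable ((s i).indicator (1 : (Fin p → ℝ) → ENNReal)) := measurable_one.indicator (hs i)
      have mi' : Measurable fun x : Fin p → ℝ => (s i).indicator (1 : (Fin p → ℝ) → ENNReal) (-x) :=
        mi.comp measurable_neg
      have : Measurable fun x : Fin p → ℝ => f (∑ j, θs j * x j) := by fun_prop
      fun_prop
    rw [lintegral_pi_prod ν _ mg]
    exact Finset.prod_congr rfl fun i _ => omega_eq f hf hf01 θs r A u hu hθ S hS ν hν (s i) (hs i)
  have h2 : MeasurePreserving
      (fun q : (Fin n → ℝ) × (Fin n × Fin p → ℝ) => fun i => Lmap A u (q.1 i) (fun j => q.2 (i, j)))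
      ((Measure.pi fun _ : Fin n => mT f r).prod (gpi (Fin n × Fin p))) (Measure.pi fun _ : Fin n => ω) := by
    have a1 := measurePreserving_pi (fun _ : Fin n => (mT f r).prod (gpi (Fin p))) (fun _ => ω)
      (f := fun _ q => Lmap A u q.1 q.2) (fun i => ⟨hm, rfl⟩)
    have a2 := measurePreserving_arrowProdEquivProdArrow ℝ (Fin p → ℝ) (Fin n) (fun _ => mT f r)
      (fun _ => gpi (Fin p))
    have a3 := (MeasurePreserving.id (Measure.pi fun _ : Fin n => mT f r)).prod (gpi_uncurry n p)
    refine ⟨?_, ?_⟩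
    · unfold Lmap dt; fun_prop
    · rw [← a3.map_eq, ← a2.map_eq, Measure.map_map (by unfold Lmap dt; fun_prop) a3.measurable,
        Measure.map_map _ a2.measurable, ← a1.map_eq]
      · rfl
      · unfold Lmap dt; fun_prop
  have h3 := Measure.map_apply (μ := dataLaw n p f θs ν) hΦ hE
  have h4 := h2.measure_preimage hE.nullMeasurableSet
  rw [h1] at h3
  exact h3.symm.trans h4.symm

end DataLaw

section Reduction

/-- projection orthogonal to `u` -/
def Pj {p : ℕ} (u g : Fin p → ℝ) : Fin p → ℝ := fun i => g i - u i * dt u g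

lemma dt_comm {ι : Type*} [Fintype ι] (v w : ι → ℝ) : dt v w = dt w v :=
  Finset.sum_congr rfl fun i _ => mul_comm _ _

lemma l2_le_iff {ι : Type*} [Fintype ι] {v : ι → ℝ} {c : ℝ} (hc : 0 ≤ c) :
    c ≤ l2 v ↔ c ^ 2 ≤ ∑ i, v i ^ 2 := by
  rw [l2, Real.le_sqrt hc (Finset.sum_nonneg fun i _ => sq_nonneg _)]

lemma dt_Lmap {p : ℕ} (A : Fin p → Fin p → ℝ) (u θ : Fin p → ℝ) (τ : ℝ) (g : Fin p → ℝ) :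
    dt θ (Lmap A u τ g) = dt (fun i => ∑ j, θ j * A j i) u * τ
      + dt (Pj u (fun i => ∑ j, θ j * A j i)) g := by
  set b : Fin p → ℝ := fun i => ∑ j, θ j * A j i with hb
  have h1 : ∑ j, θ j * Lmap A u τ g j = ∑ i, b i * (u i * τ + (g i - u i * dt u g)) := by
    simp only [Lmap, hb, Finset.mul_sum, Finset.sum_mul]
    rw [Finset.sum_comm]
    exact Finset.sum_congr rfl fun i _ => Finset.sum_congr rfl fun j _ => by ring
  have h2 : ∀ i, b i * (u i * τ + (g i - u i * dt u g))
      = (b i * u i) * τ + b i * g i - (b i * u i) * dt u g := fun i => by ring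
  have h3 : ∀ i, (b i - u i * dt u b) * g i = b i * g i - dt u b * (u i * g i) := fun i => by ring
  unfold Pj
  rw [dt, h1]
  rw [show dt (fun i => b i - u i * dt u b) g = ∑ i, (b i - u i * dt u b) * g i from rfl]
  simp only [h2, h3, Finset.sum_sub_distrib, Finset.sum_add_distrib, ← Finset.sum_mul, ← Finset.mul_sum]
  rw [show ∑ i, b i * u i = dt b u from rfl, show ∑ i, u i * g i = dt u g from rfl, dt_comm u b]
  ring

lemma Pj_sq {p : ℕ} (u : Fin p → ℝ) (hu : ∑ i, u i ^ 2 = 1) (b : Fin p → ℝ) :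
    dt u b ^ 2 + ∑ i, (Pj u b i) ^ 2 = ∑ i, b i ^ 2 := by
  have : ∀ i, (Pj u b i) ^ 2 = b i ^ 2 - 2 * dt u b * (u i * b i) + dt u b ^ 2 * u i ^ 2 :=
    fun i => by unfold Pj; ring
  simp only [this, Finset.sum_add_distrib, Finset.sum_sub_distrib, ← Finset.mul_sum, hu]
  rw [show ∑ i, u i * b i = dt u b from rfl]
  ring

lemma Lmap_low {p : ℕ} (A : Fin p → Fin p → ℝ) (u : Fin p → ℝ) (hu : ∑ i, u i ^ 2 = 1) (cc : ℝ)
    (hA : ∀ w : Fin p → ℝ, cc * ∑ i, w i ^ 2 ≤ ∑ j, (∑ i, A j i * w i) ^ 2)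
    (τ : ℝ) (g : Fin p → ℝ) :
    cc * (τ ^ 2 + ∑ i, (Pj u g i) ^ 2) ≤ ∑ j, (Lmap A u τ g j) ^ 2 := by
  have h := hA (fun i => u i * τ + Pj u g i)
  have e : ∑ i, (u i * τ + Pj u g i) ^ 2 = τ ^ 2 + ∑ i, (Pj u g i) ^ 2 := by
    have h0 : ∑ i, u i * Pj u g i = 0 := by
      have : ∀ i, u i * Pj u g i = u i * g i - dt u g * u i ^ 2 := fun i => by unfold Pj; ring
      simp only [this, Finset.sum_sub_distrib, ← Finset.mul_sum, hu]
      rw [show ∑ i, u i * g i = dt u g from rfl]; ring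
    have : ∀ i, (u i * τ + Pj u g i) ^ 2 = τ ^ 2 * u i ^ 2 + 2 * τ * (u i * Pj u g i) + Pj u g i ^ 2 :=
      fun i => by ring
    simp only [this, Finset.sum_add_distrib, ← Finset.mul_sum, hu, h0]
    ring
  rw [e] at h
  exact h

lemma Lmap_sum {n p : ℕ} (A : Fin p → Fin p → ℝ) (u : Fin p → ℝ) (l t : Fin n → ℝ)
    (g : Fin n → Fin p → ℝ) (j : Fin p) :
    ∑ i, l i * Lmap A u (t i) (g i) j = Lmap A u (∑ i, l i * t i) (fun j => ∑ i, l i * g i j) j := by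
  have hd : dt u (fun j => ∑ i, l i * g i j) = ∑ i, l i * dt u (g i) := by
    simp only [dt, Finset.mul_sum]
    rw [Finset.sum_comm]
    exact Finset.sum_congr rfl fun i _ => Finset.sum_congr rfl fun j _ => by ring
  simp only [Lmap, hd]
  simp only [Finset.mul_sum]
  rw [Finset.sum_comm]
  refine Finset.sum_congr rfl fun k _ => ?_
  rw [← Finset.sum_sub_distrib, ← Finset.sum_add_distrib, Finset.mul_sum]
  exact Finset.sum_congr rfl fun i _ => by ring

/-- upper event -/
def Eb (n p : ℕ) (κ : ℝ) : Set (Fin n → Fin p → ℝ) :=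
  {W | ∃ θ : Fin p → ℝ, l2 θ = 1 ∧ ∀ i, κ < ∑ j, θ j * W i j}

lemma Eb_meas (n p : ℕ) (κ : ℝ) : MeasurableSet (Eb n p κ) := by
  refine IsOpen.measurableSet ?_
  have : Eb n p κ = ⋃ θ : Fin p → ℝ, ⋃ _ : l2 θ = 1, ⋂ i, {W | κ < ∑ j, θ j * W i j} := by
    ext W; simp [Eb]
  rw [this]
  refine isOpen_iUnion fun θ => isOpen_iUnion fun _ => isOpen_iInter_of_finite fun i => ?_
  exact isOpen_lt continuous_const (by fun_prop)

lemma margin_sub {n p : ℕ} (κ : ℝ) (hκ : 0 < κ) :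
    {q : (Fin n → Fin p → ℝ) × (Fin n → ℝ) | κ ≤ margin n p q.1 q.2}
      ⊆ {q | (fun i j => q.2 i * q.1 i j) ∈ Eb n p (κ / 2)} := by
  rintro ⟨xs, ys⟩ hq
  simp only [mem_setOf_eq] at hq ⊢
  have hne : ((fun θ : Fin p → ℝ => ⨅ i : Fin n, ys i * ∑ j, θ j * xs i j) '' {θ | l2 θ = 1}).Nonempty := by
    by_contra h
    rw [not_nonempty_iff_eq_empty] at h
    unfold margin at hq
    rw [h, Real.sSup_empty] at hq
    linarith
  obtain ⟨_, ⟨θ, hθ, rfl⟩, hlt⟩ := exists_lt_of_lt_csSup hne (show κ / 2 < margin n p xs ys by linarith)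
  refine ⟨θ, hθ, fun i => hlt.trans_le ?_⟩
  refine (ciInf_le (Set.finite_range _).bddBelow i).trans (le_of_eq ?_)
  simp only [Finset.mul_sum]
  exact Finset.sum_congr rfl fun j _ => by ring

/-- lower event -/
def Ea (n p : ℕ) (κ : ℝ) : Set (Fin n → Fin p → ℝ) :=
  {W | ∀ l : Fin n → ℝ, (∀ i, 0 ≤ l i) → κ ^ 2 * n * ∑ i, l i ^ 2 ≤ ∑ j, (∑ i, l i * W i j) ^ 2}

lemma Ea_meas (n p : ℕ) (κ : ℝ) : MeasurableSet (Ea n p κ) := by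
  refine IsClosed.measurableSet ?_
  have : Ea n p κ = ⋂ l : Fin n → ℝ, ⋂ _ : ∀ i, 0 ≤ l i,
      {W | κ ^ 2 * n * ∑ i, l i ^ 2 ≤ ∑ j, (∑ i, l i * W i j) ^ 2} := by
    ext W; simp [Ea]
  rw [this]
  refine isClosed_iInter fun l => isClosed_iInter fun _ => ?_
  exact isClosed_le continuous_const (by fun_prop)

lemma margin_sup {n p : ℕ} (hn : 0 < n) (κ : ℝ) (hκ : 0 < κ) :
    {q : (Fin n → Fin p → ℝ) × (Fin n → ℝ) | (fun i j => q.2 i * q.1 i j) ∈ Ea n p κ}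
      ⊆ {q | κ ≤ margin n p q.1 q.2} := by
  rintro ⟨xs, ys⟩ hq
  simp only [mem_setOf_eq] at hq ⊢
  haveI : Nonempty (Fin n) := ⟨⟨0, hn⟩⟩
  set W : Fin n → Fin p → ℝ := fun i j => ys i * xs i j with hW
  set N : (Fin n → ℝ) → ℝ := fun l => ∑ j, (∑ i, l i * W i j) ^ 2 with hN
  obtain ⟨l, hl, hmin⟩ := (isCompact_stdSimplex ℝ (Fin n)).exists_isMinOn
    ⟨_, single_mem_stdSimplex ℝ (Classical.arbitrary (Fin n))⟩
    (show ContinuousOn N _ from (by simp only [hN]; fun_prop : Continuous N).continuousOn)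
  set z : Fin p → ℝ := fun j => ∑ i, l i * W i j with hz
  have hNl : N l = dt z z := Finset.sum_congr rfl fun j _ => sq _
  have hNk : κ ^ 2 ≤ N l := by
    have h1 := hq l hl.1
    have h2 : (1:ℝ) ≤ n * ∑ i, l i ^ 2 := by
      have := sq_sum_le_card_mul_sum_sq (s := Finset.univ) (f := l)
      rw [hl.2] at this
      simpa using this
    calc κ ^ 2 = κ ^ 2 * 1 := by ring
      _ ≤ κ ^ 2 * (n * ∑ i, l i ^ 2) := mul_le_mul_of_nonneg_left h2 (sq_nonneg _)
      _ = κ ^ 2 * n * ∑ i, l i ^ 2 := by ring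
      _ ≤ N l := h1
  have hzz : l2 z * l2 z = dt z z := l2_sq' z
  have hzk : κ ≤ l2 z := (l2_le_iff hκ.le).2 hNk
  have hzpos : 0 < l2 z := hκ.trans_le hzk
  have hfo : ∀ i, dt z z ≤ dt z (W i) := by
    intro i
    by_contra hcon
    push_neg at hcon
    set D := dt z z - dt z (W i) with hD
    have hDpos : 0 < D := by simp only [hD]; linarith
    set Q := ∑ j, (W i j - z j) ^ 2 with hQ
    have hQ0 : 0 ≤ Q := Finset.sum_nonneg fun j _ => sq_nonneg _
    have hε : ∀ ε ∈ Icc (0:ℝ) 1, 2 * ε * D ≤ ε ^ 2 * Q := by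
      intro ε hε
      have hmem : (fun k => (1 - ε) * l k + ε * (Pi.single i 1 : Fin n → ℝ) k) ∈ stdSimplex ℝ (Fin n) := by
        have := convex_stdSimplex ℝ (Fin n) hl (single_mem_stdSimplex ℝ i) (sub_nonneg.2 hε.2) hε.1 (by ring)
        exact this
      have h1 : N l ≤ N _ := hmin hmem
      have h2 : ∀ j, ∑ k, ((1 - ε) * l k + ε * (Pi.single i 1 : Fin n → ℝ) k) * W k j
          = z j + ε * (W i j - z j) := by
        intro j
        have : ∀ k, ((1 - ε) * l k + ε * (Pi.single i 1 : Fin n → ℝ) k) * W k j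
          = (1 - ε) * (l k * W k j) + ε * ((Pi.single i 1 : Fin n → ℝ) k * W k j) := fun k => by ring
        simp only [this, Finset.sum_add_distrib, ← Finset.mul_sum]
        have h3 : ∑ k, (Pi.single i 1 : Fin n → ℝ) k * W k j = W i j := by
          simp [Pi.single_apply]
        rw [h3]; simp only [hz]; ring
      simp only [hN, h2] at h1
      have h3 : ∑ j, (z j + ε * (W i j - z j)) ^ 2 = dt z z + 2 * ε * (dt z (W i) - dt z z) + ε ^ 2 * Q := by
        simp only [dt, hQ, Finset.mul_sum, ← Finset.sum_sub_distrib, ← Finset.sum_add_distrib]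
        exact Finset.sum_congr rfl fun j _ => by ring
      rw [h3] at h1
      have h4 : ∑ j, (∑ i, l i * W i j) ^ 2 = dt z z := hNl
      rw [h4] at h1
      simp only [hD]
      linarith
    have h1 := hε (min 1 (D / (Q + 1))) ⟨by positivity, min_le_left _ _⟩
    set e := min 1 (D / (Q + 1)) with he
    have hepos : 0 < e := by positivity
    have : e * (Q + 1) ≤ D := by
      have := min_le_right 1 (D / (Q + 1))
      rw [← he, le_div_iff₀ (by positivity)] at this
      exact this
    nlinarith
  unfold margin
  have hbdd : BddAbove ((fun θ : Fin p → ℝ => ⨅ i : Fin n, ys i * ∑ j, θ j * xs i j) '' {θ | l2 θ = 1}) := by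
    refine ⟨l2 (W ⟨0, hn⟩), ?_⟩
    rintro _ ⟨θ, hθ, rfl⟩
    refine (ciInf_le (Set.finite_range _).bddBelow ⟨0, hn⟩).trans ?_
    have := dt_le θ (W ⟨0, hn⟩)
    rw [show l2 θ = 1 from hθ, one_mul] at this
    refine le_trans (le_of_eq ?_) this
    simp only [dt, hW, Finset.mul_sum]
    exact Finset.sum_congr rfl fun j _ => by ring
  refine le_csSup_of_le hbdd ⟨fun j => z j / l2 z, ?_, rfl⟩ ?_
  · show l2 _ = 1
    rw [l2]
    simp only [div_pow, ← Finset.sum_div]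
    rw [← l2_sq, div_self (by positivity), Real.sqrt_one]
  · refine le_ciInf fun i => ?_
    have h1 := hfo i
    have h2 : ys i * ∑ j, z j / l2 z * xs i j = dt z (W i) / l2 z := by
      simp only [dt, hW, Finset.mul_sum, Finset.sum_div]
      exact Finset.sum_congr rfl fun j _ => by ring
    rw [h2, le_div_iff₀ hzpos]
    rw [← hzz] at h1
    nlinarith

lemma red_b {n p : ℕ} (f : ℝ → ℝ) (hf : Continuous f) (hf01 : ∀ x, f x ∈ Set.Icc (0:ℝ) 1)
    (θs : Fin p → ℝ) (r : ℝ)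
    (A : Fin p → Fin p → ℝ) (u : Fin p → ℝ) (hu : ∑ i, u i ^ 2 = 1)
    (hθ : ∀ i, ∑ j, θs j * A j i = r * u i)
    (S : Matrix (Fin p) (Fin p) ℝ) (hS : ∀ a b, S a b = ∑ i, A a i * A b i)
    (ν : Measure (Fin p → ℝ)) [IsProbabilityMeasure ν] (hν : IsCGauss ν S)
    (CC : ℝ) (hA : ∀ θ : Fin p → ℝ, ∑ i, (∑ j, θ j * A j i) ^ 2 ≤ CC * ∑ j, θ j ^ 2)
    (κ : ℝ) (hκ : 0 < κ) :
    dataLaw n p f θs ν {q | κ ≤ margin n p q.1 q.2}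
      ≤ ((Measure.pi fun _ : Fin n => mT f r).prod (gpi (Fin n × Fin p)))
        {q | ∃ (a : ℝ) (θ : Fin p → ℝ), a ^ 2 + l2 θ ^ 2 ≤ CC ∧
          ∀ i, κ / 2 < a * q.1 i + ∑ j, θ j * q.2 (i, j)} := by
  refine (measure_mono (margin_sub κ hκ)).trans ?_
  rw [dataLaw_law f hf hf01 θs r A u hu hθ S hS ν hν _ (Eb_meas n p _)]
  refine measure_mono ?_
  rintro ⟨t, G⟩ ⟨θ, hθ1, h⟩
  refine ⟨dt (fun i => ∑ j, θ j * A j i) u, Pj u (fun i => ∑ j, θ j * A j i), ?_, fun i => ?_⟩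
  · rw [l2_sq, dt_comm, Pj_sq u hu]
    refine (hA θ).trans ?_
    rw [← l2_sq, hθ1]; simp
  · have := h i
    have e := dt_Lmap A u θ (t i) (fun j => G (i, j))
    unfold dt at e
    simp only at this
    rw [e] at this
    exact this

lemma red_a {n p : ℕ} (hn : 0 < n) (f : ℝ → ℝ) (hf : Continuous f) (hf01 : ∀ x, f x ∈ Set.Icc (0:ℝ) 1)
    (θs : Fin p → ℝ) (r : ℝ)
    (A : Fin p → Fin p → ℝ) (u : Fin p → ℝ) (hu : ∑ i, u i ^ 2 = 1)
    (hθ : ∀ i, ∑ j, θs j * A j i = r * u i)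
    (S : Matrix (Fin p) (Fin p) ℝ) (hS : ∀ a b, S a b = ∑ i, A a i * A b i)
    (ν : Measure (Fin p → ℝ)) [IsProbabilityMeasure ν] (hν : IsCGauss ν S)
    (cc : ℝ) (hA : ∀ w : Fin p → ℝ, cc * ∑ i, w i ^ 2 ≤ ∑ j, (∑ i, A j i * w i) ^ 2)
    (κ : ℝ) (hκ : 0 < κ) :
    1 - ((Measure.pi fun _ : Fin n => mT f r).prod (gpi (Fin n × Fin p)))
        {q | ∃ l : Fin n → ℝ, (∀ i, 0 ≤ l i) ∧
          cc * (dt l q.1 ^ 2 + l2 (Pj u (fun j => ∑ i, l i * q.2 (i, j))) ^ 2) < κ ^ 2 * n * ∑ i, l i ^ 2}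
      ≤ dataLaw n p f θs ν {q | κ ≤ margin n p q.1 q.2} := by
  refine le_trans ?_ (measure_mono (margin_sup hn κ hκ))
  rw [dataLaw_law f hf hf01 θs r A u hu hθ S hS ν hν _ (Ea_meas n p _)]
  haveI := mT_prob f hf hf01 r
  have hm : Measurable (fun q : (Fin n → ℝ) × (Fin n × Fin p → ℝ) =>
      fun i => Lmap A u (q.1 i) (fun j => q.2 (i, j))) := by
    unfold Lmap dt; fun_prop
  have hms : MeasurableSet {q : (Fin n → ℝ) × (Fin n × Fin p → ℝ) |
      (fun i => Lmap A u (q.1 i) (fun j => q.2 (i, j))) ∈ Ea n p κ} := hm (Ea_meas n p κ)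
  rw [← compl_compl {q : (Fin n → ℝ) × (Fin n × Fin p → ℝ) |
      (fun i => Lmap A u (q.1 i) (fun j => q.2 (i, j))) ∈ Ea n p κ}, prob_compl_eq_one_sub hms.compl]
  refine tsub_le_tsub_left (measure_mono ?_) 1
  rintro ⟨t, G⟩ hq
  simp only [mem_compl_iff, mem_setOf_eq, Ea, not_forall, not_le] at hq
  obtain ⟨l, hl, h⟩ := hq
  refine ⟨l, hl, lt_of_le_of_lt ?_ h⟩
  simp only [Lmap_sum]
  rw [l2_sq]
  exact Lmap_low A u hu cc hA _ _

end Reduction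

section GordonApply

lemma mix_le {α β γ : Type*} [MeasurableSpace α] [MeasurableSpace β] [MeasurableSpace γ]
    (m : Measure α) (μ1 : Measure β) (μ2 : Measure γ) [SFinite m] [SFinite μ1] [SFinite μ2]
    (s : ENNReal) (B : Set (α × β)) (hB : MeasurableSet B) (C : Set (α × γ))
    (h : ∀ t, s * μ1 {w | (t, w) ∈ B} ≤ μ2 {q | (t, q) ∈ C}) :
    s * (m.prod μ1) B ≤ (m.prod μ2) C := by
  rw [Measure.prod_apply hB, ← measure_toMeasurable C,
    Measure.prod_apply (measurableSet_toMeasurable _ _),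
    ← lintegral_const_mul _ (measurable_measure_prodMk_left hB)]
  refine lintegral_mono fun t => (h t).trans (measure_mono ?_)
  intro q hq
  exact subset_toMeasurable _ _ hq

lemma l2_continuous {ι : Type*} [Fintype ι] : Continuous (l2 : (ι → ℝ) → ℝ) := by
  unfold l2; fun_prop

lemma dt_continuous {ι : Type*} [Fintype ι] : Continuous (fun q : (ι → ℝ) × (ι → ℝ) => dt q.1 q.2) := by
  unfold dt; fun_prop

lemma Pj_continuous {p : ℕ} (u : Fin p → ℝ) : Continuous (Pj u) := by
  unfold Pj dt; fun_prop

lemma dt_Pj {p : ℕ} (u : Fin p → ℝ) (hu : ∑ i, u i ^ 2 = 1) (x y : Fin p → ℝ) :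
    dt (Pj u x) (Pj u y) = dt (Pj u x) y := by
  have h : ∀ i, Pj u x i * Pj u y i = Pj u x i * y i - dt u y * (u i * x i) + (dt u x * dt u y) * u i ^ 2 :=
    fun i => by unfold Pj; ring
  simp only [dt] at h ⊢
  simp only [h, Finset.sum_add_distrib, Finset.sum_sub_distrib, ← Finset.mul_sum, hu]
  ring

lemma gordon_b {n p : ℕ} (t : Fin n → ℝ) (CC κ : ℝ) (hCC : 0 ≤ CC) :
    stdG (Iic 0) * gpi (Fin n × Fin p)
        {w | ∃ (a : ℝ) (θ : Fin p → ℝ), a ^ 2 + l2 θ ^ 2 ≤ CC ∧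
          ∀ i, κ < a * t i + ∑ j, θ j * w (i, j)}
      ≤ ((gpi (Fin p)).prod (gpi (Fin n)))
        {q | ∃ a r : ℝ, 0 ≤ r ∧ a ^ 2 + r ^ 2 ≤ CC ∧
          l2 (fun i => max (κ - a * t i + r * q.2 i) 0) ≤ r * l2 q.1} := by
  let U : Set (ℝ × (Fin p → ℝ)) := {x | x.1 ^ 2 + l2 x.2 ^ 2 ≤ CC}
  let V : Set (Fin n → ℝ) := {l | ∀ i, 0 ≤ l i}
  haveI : Nonempty U := ⟨⟨(0, 0), by simp [U, l2, hCC]⟩⟩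
  haveI : Nonempty V := ⟨⟨0, by simp [V]⟩⟩
  let D : ℕ → U := TopologicalSpace.denseSeq U
  let E : ℕ → V := TopologicalSpace.denseSeq V
  have hD : DenseRange D := TopologicalSpace.denseRange_denseSeq U
  have hE : DenseRange E := TopologicalSpace.denseRange_denseSeq V
  have key := gordon (n := n) (p := p) (fun x => fun j => -(D x.1).1.2 j) (fun x => (E x.2).1)
    (fun x => ∑ i, (E x.2).1 i * (κ - (D x.1).1.1 * t i)) (by
      intro a b hab
      simp only [hab]
      rw [l2_sq']; simp)
  have hneg : ∀ θ : Fin p → ℝ, l2 (fun j => -θ j) = l2 θ := fun θ => by simp [l2]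
  refine (mul_le_mul_right (measure_mono ?_) _).trans (key.trans (measure_mono ?_))
  · rintro w ⟨a, θ, hU, hw⟩
    have hopen : IsOpen {x : U | ∀ i, κ < x.1.1 * t i + ∑ j, x.1.2 j * w (i, j)} := by
      rw [setOf_forall]
      exact isOpen_iInter_of_finite fun i => isOpen_lt continuous_const (by fun_prop)
    obtain ⟨i, hi⟩ := hD.exists_mem_open hopen ⟨⟨(a, θ), hU⟩, hw⟩
    refine ⟨i, fun j => ?_⟩
    have hl := (E j).2
    simp only [Fintype.sum_prod_type]
    rw [← Finset.sum_add_distrib]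
    refine Finset.sum_nonpos fun k _ => ?_
    have h1 := hi k
    have h2 := hl k
    have h3 : ∑ y, (E j).1 k * -(D i).1.2 y * w (k, y) = - ((E j).1 k * ∑ y, (D i).1.2 y * w (k, y)) := by
      rw [Finset.mul_sum, ← Finset.sum_neg_distrib]
      exact Finset.sum_congr rfl fun y _ => by ring
    rw [h3]
    nlinarith
  · rintro ⟨g, h⟩ ⟨i, hi⟩
    set a := (D i).1.1 with ha
    set θ := (D i).1.2 with hθ
    have hU : a ^ 2 + l2 θ ^ 2 ≤ CC := (D i).2
    refine ⟨a, l2 θ, l2_nonneg _, hU, ?_⟩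
    set v : Fin n → ℝ := fun k => κ - a * t k + l2 θ * h k with hv
    have hall : ∀ l : V, l2 l.1 * dt (fun j => -θ j) g + l2 θ * dt l.1 h
        + ∑ k, l.1 k * (κ - a * t k) ≤ 0 := by
      intro l
      refine hE.induction_on (p := fun l : V => l2 l.1 * dt (fun j => -θ j) g + l2 θ * dt l.1 h
        + ∑ k, l.1 k * (κ - a * t k) ≤ 0) l (isClosed_le ?_ continuous_const) ?_
      · exact Continuous.comp (g := fun l : Fin n → ℝ => l2 l * dt (fun j => -θ j) g + l2 θ * dt l h
          + ∑ k, l k * (κ - a * t k)) (by unfold dt l2; fun_prop) continuous_subtype_val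
      · intro j
        have := hi j
        rw [hneg] at this
        exact this
    have h1 := hall ⟨fun k => max (v k) 0, fun k => le_max_right _ _⟩
    simp only at h1
    set L := l2 (fun k => max (v k) 0) with hL
    have hL0 : 0 ≤ L := l2_nonneg _
    have h2 : l2 θ * dt (fun k => max (v k) 0) h + ∑ k, max (v k) 0 * (κ - a * t k) = L * L := by
      rw [hL, l2_sq']
      unfold dt
      rw [Finset.mul_sum, ← Finset.sum_add_distrib]
      refine Finset.sum_congr rfl fun k _ => ?_
      have : max (v k) 0 * max (v k) 0 = max (v k) 0 * v k := by
        rcases le_total (v k) 0 with h | h <;> simp [h]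
      rw [this, hv]; ring
    have h3 : dt (fun j => -θ j) g = - dt θ g := by simp [dt]
    rw [h3] at h1
    have h4 := dt_le θ g
    rcases eq_or_lt_of_le hL0 with h0 | h0
    · rw [← h0]; exact mul_nonneg (l2_nonneg _) (l2_nonneg _)
    · refine le_trans ?_ h4
      by_contra hc
      push Not at hc
      nlinarith

lemma gordon_a {n p : ℕ} (hn : 0 < n) (u : Fin p → ℝ) (hu : ∑ i, u i ^ 2 = 1) (t : Fin n → ℝ)
    (cc κ c E : ℝ) (hcc : 0 < cc) (hE : 0 ≤ E) (hκE : κ ^ 2 * n * (1 + c ^ 2) ≤ cc * E ^ 2) :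
    stdG (Iic 0) * gpi (Fin n × Fin p)
        {w | ∃ l : Fin n → ℝ, (∀ i, 0 ≤ l i) ∧
          cc * (dt l t ^ 2 + l2 (Pj u (fun j => ∑ i, l i * w (i, j))) ^ 2) < κ ^ 2 * n * ∑ i, l i ^ 2}
      ≤ ((gpi (Fin p)).prod (gpi (Fin n)))
        {q | l2 (Pj u q.1) ≤ l2 (fun i => max (0 - c * t i - q.2 i) 0) + E} := by
  let V : Set (Fin n → ℝ) := {l | (∀ i, 0 ≤ l i) ∧ 0 < l2 l}
  haveI : Nonempty V := ⟨⟨fun _ => 1, by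
    refine ⟨by simp, ?_⟩
    simp [l2, hn]⟩⟩
  let D : ℕ → V := TopologicalSpace.denseSeq V
  have hD : DenseRange D := TopologicalSpace.denseRange_denseSeq V
  let T : ℕ → (Fin p → ℝ) := TopologicalSpace.denseSeq (Fin p → ℝ)
  have hT : DenseRange T := TopologicalSpace.denseRange_denseSeq _
  have key := gordon (n := n) (p := p) (fun x => Pj u (T x.2)) (fun x => (D x.1).1)
    (fun x => l2 (Pj u (T x.2)) * (c * dt (D x.1).1 t - E * l2 (D x.1).1)) (by
      intro a b hab
      simp only [hab]
      rw [l2_sq' (D b.1).1]; simp)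
  refine (mul_le_mul_right (measure_mono ?_) _).trans (key.trans (measure_mono ?_))
  · rintro w ⟨l, hl, hw⟩
    have hl2 : 0 < l2 l := by
      rcases eq_or_lt_of_le (l2_nonneg l) with h | h
      · exfalso
        have : ∑ i, l i ^ 2 = 0 := by rw [← l2_sq, ← h]; simp
        rw [this, mul_zero] at hw
        have : 0 ≤ cc * (dt l t ^ 2 + l2 (Pj u (fun j => ∑ i, l i * w (i, j))) ^ 2) := by positivity
        linarith
      · exact h
    have hopen : IsOpen {x : V | cc * (dt x.1 t ^ 2 + l2 (Pj u (fun j => ∑ i, x.1 i * w (i, j))) ^ 2)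
        < κ ^ 2 * n * ∑ i, x.1 i ^ 2} := by
      refine isOpen_lt ?_ ?_
      · exact Continuous.comp (g := fun x : Fin n → ℝ => cc * (dt x t ^ 2
          + l2 (Pj u (fun j => ∑ i, x i * w (i, j))) ^ 2)) (by unfold dt l2 Pj dt; fun_prop)
          continuous_subtype_val
      · exact Continuous.comp (g := fun x : Fin n → ℝ => κ ^ 2 * n * ∑ i, x i ^ 2) (by fun_prop)
          continuous_subtype_val
    obtain ⟨i, hi⟩ := hD.exists_mem_open hopen ⟨⟨l, hl, hl2⟩, hw⟩
    refine ⟨i, fun j => ?_⟩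
    set x := (D i).1 with hx
    have hi' : cc * (dt x t ^ 2 + l2 (Pj u (fun j => ∑ i, x i * w (i, j))) ^ 2)
        < κ ^ 2 * n * ∑ i, x i ^ 2 := hi
    set z : Fin p → ℝ := fun j => ∑ i, x i * w (i, j) with hz
    rw [← l2_sq x] at hi'
    have hx0 : 0 ≤ l2 x := l2_nonneg x
    have e1 : ∑ k : Fin n × Fin p, x k.1 * Pj u (T j) k.2 * w k = dt (Pj u (T j)) (Pj u z) := by
      rw [dt_Pj u hu, Fintype.sum_prod_type, Finset.sum_comm]
      unfold dt
      refine Finset.sum_congr rfl fun y _ => ?_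
      rw [hz, Finset.mul_sum]
      exact Finset.sum_congr rfl fun y _ => by ring
    have e2 := dt_le (Pj u (T j)) (Pj u z)
    have hb : l2 (Pj u z) + c * dt x t ≤ E * l2 x := by
      have hcs : (l2 (Pj u z) + c * dt x t) ^ 2 ≤ (1 + c ^ 2) * (dt x t ^ 2 + l2 (Pj u z) ^ 2) := by
        nlinarith [sq_nonneg (dt x t - c * l2 (Pj u z))]
      have h2 : cc * (l2 (Pj u z) + c * dt x t) ^ 2 ≤ cc * (E * l2 x) ^ 2 := by
        calc cc * (l2 (Pj u z) + c * dt x t) ^ 2 ≤ cc * ((1 + c ^ 2) * (dt x t ^ 2 + l2 (Pj u z) ^ 2)) :=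
              mul_le_mul_of_nonneg_left hcs hcc.le
          _ = (1 + c ^ 2) * (cc * (dt x t ^ 2 + l2 (Pj u z) ^ 2)) := by ring
          _ ≤ (1 + c ^ 2) * (κ ^ 2 * n * l2 x ^ 2) := mul_le_mul_of_nonneg_left hi'.le (by positivity)
          _ = (κ ^ 2 * n * (1 + c ^ 2)) * l2 x ^ 2 := by ring
          _ ≤ (cc * E ^ 2) * l2 x ^ 2 := mul_le_mul_of_nonneg_right hκE (by positivity)
          _ = _ := by ring
      exact (le_abs_self _).trans (abs_le_of_sq_le_sq (le_of_mul_le_mul_left h2 hcc) (mul_nonneg hE hx0))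
    show ∑ k : Fin n × Fin p, x k.1 * Pj u (T j) k.2 * w k + l2 (Pj u (T j)) * (c * dt x t - E * l2 x) ≤ 0
    rw [e1]
    have := l2_nonneg (Pj u (T j))
    nlinarith
  · rintro ⟨g, h⟩ ⟨i, hi⟩
    set x := (D i).1 with hx
    have hx1 : ∀ i, 0 ≤ x i := (D i).2.1
    have hx2 : 0 < l2 x := (D i).2.2
    have hall : ∀ θ : Fin p → ℝ, l2 x * dt (Pj u θ) g + l2 (Pj u θ) * dt x h
        + l2 (Pj u θ) * (c * dt x t - E * l2 x) ≤ 0 := by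
      intro θ
      refine hT.induction_on (p := fun θ : Fin p → ℝ => l2 x * dt (Pj u θ) g + l2 (Pj u θ) * dt x h
        + l2 (Pj u θ) * (c * dt x t - E * l2 x) ≤ 0) θ (isClosed_le ?_ continuous_const) ?_
      · unfold dt l2 Pj dt; fun_prop
      · intro j
        exact hi j
    have h1 := hall g
    rw [← dt_Pj u hu, ← l2_sq'] at h1
    show l2 (Pj u g) ≤ l2 (fun i => max (0 - c * t i - h i) 0) + E
    set v : Fin n → ℝ := fun i => max (0 - c * t i - h i) 0 with hv
    have h2 : - dt x h - c * dt x t ≤ dt x v := by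
      unfold dt
      rw [Finset.mul_sum, ← Finset.sum_neg_distrib, ← Finset.sum_sub_distrib]
      refine Finset.sum_le_sum fun k _ => ?_
      have := mul_le_mul_of_nonneg_left (le_max_left (0 - c * t k - h k) 0) (hx1 k)
      rw [hv]; simp only; linarith
    have h3 := dt_le x v
    rcases eq_or_lt_of_le (l2_nonneg (Pj u g)) with h0 | h0
    · rw [← h0]; exact add_nonneg (l2_nonneg _) hE
    · by_contra hc
      push Not at hc
      have h4 : l2 x * (l2 v + E) < l2 x * l2 (Pj u g) := mul_lt_mul_of_pos_left hc hx2
      have h5 : l2 (Pj u g) * (l2 x * l2 (Pj u g) + dt x h + c * dt x t - E * l2 x) ≤ 0 := by nlinarith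
      have h6 : 0 < l2 x * l2 (Pj u g) + dt x h + c * dt x t - E * l2 x := by nlinarith
      nlinarith

end GordonApply

section Bounds

instance instOpenPosStdG : stdG.IsOpenPosMeasure :=
  (gaussianReal_absolutelyContinuous' 0 (one_ne_zero)).isOpenPosMeasure

/-- joint law of the comparison variables `(t, g, h)` -/
def Mn (f : ℝ → ℝ) (r : ℝ) (n p : ℕ) :
    Measure ((Fin n → ℝ) × ((Fin p → ℝ) × (Fin n → ℝ))) :=
  (Measure.pi fun _ : Fin n => mT f r).prod ((gpi (Fin p)).prod (gpi (Fin n)))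

lemma bnd_b {n p : ℕ} (f : ℝ → ℝ) (hf : Continuous f) (hf01 : ∀ x, f x ∈ Set.Icc (0:ℝ) 1)
    (θs : Fin p → ℝ) (r : ℝ)
    (A : Fin p → Fin p → ℝ) (u : Fin p → ℝ) (hu : ∑ i, u i ^ 2 = 1)
    (hθ : ∀ i, ∑ j, θs j * A j i = r * u i)
    (S : Matrix (Fin p) (Fin p) ℝ) (hS : ∀ a b, S a b = ∑ i, A a i * A b i)
    (ν : Measure (Fin p → ℝ)) [IsProbabilityMeasure ν] (hν : IsCGauss ν S)
    (CC : ℝ) (hCC : 0 ≤ CC) (hA : ∀ θ : Fin p → ℝ, ∑ i, (∑ j, θ j * A j i) ^ 2 ≤ CC * ∑ j, θ j ^ 2)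
    (κ : ℝ) (hκ : 0 < κ) :
    stdG (Iic 0) * dataLaw n p f θs ν {q | κ ≤ margin n p q.1 q.2}
      ≤ Mn f r n p {q | ∃ a s : ℝ, 0 ≤ s ∧ a ^ 2 + s ^ 2 ≤ CC ∧
          l2 (fun i => max (κ / 2 - a * q.1 i + s * q.2.2 i) 0) ≤ s * l2 q.2.1} := by
  haveI := mT_prob f hf hf01 r
  refine (mul_le_mul_right (red_b f hf hf01 θs r A u hu hθ S hS ν hν CC hA κ hκ) _).trans ?_
  refine mix_le _ _ _ _ _ ?_ _ fun t => gordon_b t CC (κ / 2) hCC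
  refine IsOpen.measurableSet ?_
  have : {q : (Fin n → ℝ) × (Fin n × Fin p → ℝ) | ∃ (a : ℝ) (θ : Fin p → ℝ), a ^ 2 + l2 θ ^ 2 ≤ CC ∧
          ∀ i, κ / 2 < a * q.1 i + ∑ j, θ j * q.2 (i, j)}
      = ⋃ (a : ℝ) (θ : Fin p → ℝ) (_ : a ^ 2 + l2 θ ^ 2 ≤ CC), ⋂ i,
        {q : (Fin n → ℝ) × (Fin n × Fin p → ℝ) | κ / 2 < a * q.1 i + ∑ j, θ j * q.2 (i, j)} := by
    ext q; simp
  rw [this]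
  refine isOpen_iUnion fun a => isOpen_iUnion fun θ => isOpen_iUnion fun _ =>
    isOpen_iInter_of_finite fun i => isOpen_lt continuous_const (by fun_prop)

lemma bnd_a {n p : ℕ} (hn : 0 < n) (f : ℝ → ℝ) (hf : Continuous f) (hf01 : ∀ x, f x ∈ Set.Icc (0:ℝ) 1)
    (θs : Fin p → ℝ) (r : ℝ)
    (A : Fin p → Fin p → ℝ) (u : Fin p → ℝ) (hu : ∑ i, u i ^ 2 = 1)
    (hθ : ∀ i, ∑ j, θs j * A j i = r * u i)
    (S : Matrix (Fin p) (Fin p) ℝ) (hS : ∀ a b, S a b = ∑ i, A a i * A b i)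
    (ν : Measure (Fin p → ℝ)) [IsProbabilityMeasure ν] (hν : IsCGauss ν S)
    (cc : ℝ) (hcc : 0 < cc)
    (hA : ∀ w : Fin p → ℝ, cc * ∑ i, w i ^ 2 ≤ ∑ j, (∑ i, A j i * w i) ^ 2)
    (κ : ℝ) (hκ : 0 < κ) (c E : ℝ) (hE : 0 ≤ E) (hκE : κ ^ 2 * n * (1 + c ^ 2) ≤ cc * E ^ 2) :
    1 - (stdG (Iic 0))⁻¹ * Mn f r n p
        {q | l2 (Pj u q.2.1) ≤ l2 (fun i => max (0 - c * q.1 i - q.2.2 i) 0) + E}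
      ≤ dataLaw n p f θs ν {q | κ ≤ margin n p q.1 q.2} := by
  haveI := mT_prob f hf hf01 r
  refine le_trans ?_ (red_a hn f hf hf01 θs r A u hu hθ S hS ν hν cc hA κ hκ)
  refine tsub_le_tsub_left ?_ 1
  have hs0 : stdG (Iic 0) ≠ 0 := by
    exact ((measure_mono Iio_subset_Iic_self).trans_lt' (isOpen_Iio.measure_pos _ ⟨-1, by simp⟩)).ne'
  have h := mix_le (Measure.pi fun _ : Fin n => mT f r) (gpi (Fin n × Fin p))
    ((gpi (Fin p)).prod (gpi (Fin n))) (stdG (Iic 0))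
    {q | ∃ l : Fin n → ℝ, (∀ i, 0 ≤ l i) ∧
          cc * (dt l q.1 ^ 2 + l2 (Pj u (fun j => ∑ i, l i * q.2 (i, j))) ^ 2) < κ ^ 2 * n * ∑ i, l i ^ 2}
    ?_ {q | l2 (Pj u q.2.1) ≤ l2 (fun i => max (0 - c * q.1 i - q.2.2 i) 0) + E}
    (fun t => gordon_a hn u hu t cc κ c E hcc hE hκE)
  · rw [mul_comm (stdG (Iic 0))⁻¹, ← div_eq_mul_inv]
    rw [ENNReal.le_div_iff_mul_le (Or.inl hs0) (Or.inl (measure_ne_top _ _)), mul_comm]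
    exact h
  · refine IsOpen.measurableSet ?_
    have : {q : (Fin n → ℝ) × (Fin n × Fin p → ℝ) | ∃ l : Fin n → ℝ, (∀ i, 0 ≤ l i) ∧
          cc * (dt l q.1 ^ 2 + l2 (Pj u (fun j => ∑ i, l i * q.2 (i, j))) ^ 2) < κ ^ 2 * n * ∑ i, l i ^ 2}
      = ⋃ (l : Fin n → ℝ) (_ : ∀ i, 0 ≤ l i),
        {q : (Fin n → ℝ) × (Fin n × Fin p → ℝ) | cc * (dt l q.1 ^ 2
          + l2 (Pj u (fun j => ∑ i, l i * q.2 (i, j))) ^ 2) < κ ^ 2 * n * ∑ i, l i ^ 2} := by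
      ext q; simp
    rw [this]
    refine isOpen_iUnion fun l => isOpen_iUnion fun _ => isOpen_lt ?_ continuous_const
    unfold dt l2 Pj dt; fun_prop

end Bounds

section LLN

lemma cheb_pi {ι X : Type*} [Fintype ι] [MeasurableSpace X] (μ : Measure X) [IsProbabilityMeasure μ]
    (φ : ι → X → ℝ) (hφ : ∀ i, MemLp (φ i) 2 μ) (c : ℝ) (hc : 0 < c) :
    (Measure.pi fun _ : ι => μ) {x | c ≤ |∑ i, φ i (x i) - ∑ i, ∫ y, φ i y ∂μ|}
      ≤ ENNReal.ofReal ((∑ i, ∫ y, φ i y ^ 2 ∂μ) / c ^ 2) := by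
  have hm : ∀ i, MemLp (fun x : ι → X => φ i (x i)) 2 (Measure.pi fun _ : ι => μ) := fun i =>
    (hφ i).comp_measurePreserving (measurePreserving_eval (fun _ : ι => μ) i)
  have h := meas_ge_le_variance_div_sq (μ := Measure.pi fun _ : ι => μ)
    (X := fun x => ∑ i, φ i (x i)) (memLp_finsetSum _ fun i _ => hm i) hc
  have e1 : ∫ x, ∑ i, φ i (x i) ∂(Measure.pi fun _ : ι => μ) = ∑ i, ∫ y, φ i y ∂μ := by
    rw [integral_finsetSum _ fun i _ => (hm i).integrable one_le_two]
    refine Finset.sum_congr rfl fun i _ => ?_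
    exact integral_comp_eval (μ := fun _ : ι => μ) (hφ i).1
  rw [e1] at h
  refine h.trans (ENNReal.ofReal_le_ofReal ?_)
  gcongr
  have e2 := variance_sum_pi (μ := fun _ : ι => μ) (X := φ) hφ
  have e3 : (fun x : ι → X => ∑ i, φ i (x i)) = ∑ i, fun x : ι → X => φ i (x i) := by
    ext x; simp
  rw [e3, e2]
  exact Finset.sum_le_sum fun i _ => variance_le_expectation_sq (hφ i).1

end LLN

section LLN2

/-- density of `T` with respect to the Gaussian -/
def dd (f : ℝ → ℝ) (r t : ℝ) : ℝ := f (r * t) + (1 - f (-(r * t)))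

/-- limit expectation functional -/
def Iv (f : ℝ → ℝ) (r : ℝ) (φ : ℝ × ℝ → ℝ) : ℝ := ∫ q, dd f r q.1 * φ q ∂(stdG.prod stdG)

lemma dd_bd {f : ℝ → ℝ} (hf01 : ∀ x, f x ∈ Set.Icc (0:ℝ) 1) (r t : ℝ) :
    0 ≤ dd f r t ∧ dd f r t ≤ 2 := by
  have h1 := hf01 (r * t)
  have h2 := hf01 (-(r * t))
  unfold dd
  exact ⟨by linarith [h1.1, h2.2], by linarith [h1.2, h2.1]⟩

lemma dd_cont {f : ℝ → ℝ} (hf : Continuous f) (r : ℝ) : Continuous (dd f r) := by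
  unfold dd; fun_prop

/-- continuous with quadratic growth -/
def QG (φ : ℝ × ℝ → ℝ) : Prop :=
  Continuous φ ∧ ∃ C, 0 ≤ C ∧ ∀ q, |φ q| ≤ C * (1 + q.1 ^ 2 + q.2 ^ 2)

lemma integrable_pow_stdG (k : ℕ) : Integrable (fun x : ℝ => x ^ (2 * k)) stdG := by
  have h := (memLp_stdG ((2 * k : ℕ) : ENNReal) (ENNReal.natCast_ne_top _)).integrable_norm_pow'
  refine h.congr (ae_of_all _ fun x => ?_)
  simp [pow_mul]

lemma integrable_quad : Integrable (fun q : ℝ × ℝ => (1 + q.1 ^ 2 + q.2 ^ 2) ^ 2) (stdG.prod stdG) := by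
  have h1 : Integrable (fun q : ℝ × ℝ => q.1 ^ 4) (stdG.prod stdG) :=
    (integrable_pow_stdG 2).comp_fst stdG
  have h2 : Integrable (fun q : ℝ × ℝ => q.2 ^ 4) (stdG.prod stdG) :=
    (integrable_pow_stdG 2).comp_snd stdG
  refine Integrable.mono' (((integrable_const (1:ℝ)).add (h1.add h2)).const_mul 3) (by fun_prop)
    (ae_of_all _ fun q => ?_)
  rw [Real.norm_eq_abs, abs_of_nonneg (sq_nonneg _)]
  simp only [Pi.add_apply]
  nlinarith [sq_nonneg (q.1 ^ 2 - 1), sq_nonneg (q.2 ^ 2 - 1), sq_nonneg (q.1 ^ 2 - q.2 ^ 2)]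

lemma QG.integrable_sq {φ : ℝ × ℝ → ℝ} (h : QG φ) :
    Integrable (fun q => φ q ^ 2) (stdG.prod stdG) := by
  obtain ⟨hc, C, hC, hb⟩ := h
  refine Integrable.mono' (integrable_quad.const_mul (C ^ 2)) (by fun_prop) (ae_of_all _ fun q => ?_)
  rw [Real.norm_eq_abs, abs_of_nonneg (sq_nonneg _), ← mul_pow, ← sq_abs]
  exact pow_le_pow_left₀ (abs_nonneg _) (hb q) 2

lemma QG.integrable {φ : ℝ × ℝ → ℝ} (h : QG φ) : Integrable φ (stdG.prod stdG) :=
  ((memLp_two_iff_integrable_sq h.1.aestronglyMeasurable).2 h.integrable_sq).integrable one_le_two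

lemma mTprod_eq {f : ℝ → ℝ} (hf : Continuous f) (r : ℝ) :
    (mT f r).prod stdG = (stdG.prod stdG).withDensity (fun q => ENNReal.ofReal (dd f r q.1)) := by
  unfold mT
  rw [prod_withDensity_left (by fun_prop)]
  rfl

lemma mTprod_le {f : ℝ → ℝ} (hf : Continuous f) (hf01 : ∀ x, f x ∈ Set.Icc (0:ℝ) 1) (r : ℝ) :
    (mT f r).prod stdG ≤ (2:ENNReal) • (stdG.prod stdG) := by
  rw [mTprod_eq hf, ← withDensity_const]
  refine withDensity_mono (ae_of_all _ fun q => ?_)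
  refine (ENNReal.ofReal_le_ofReal (dd_bd hf01 r q.1).2).trans ?_
  simp

lemma mTprod_int {f : ℝ → ℝ} (hf : Continuous f) (hf01 : ∀ x, f x ∈ Set.Icc (0:ℝ) 1) (r : ℝ)
    (φ : ℝ × ℝ → ℝ) : ∫ q, φ q ∂((mT f r).prod stdG) = Iv f r φ := by
  rw [mTprod_eq hf, integral_withDensity_eq_integral_toReal_smul
    (by have := dd_cont hf r; fun_prop) (ae_of_all _ fun q => ENNReal.ofReal_lt_top)]
  unfold Iv
  refine integral_congr_ae (ae_of_all _ fun q => ?_)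
  simp [ENNReal.toReal_ofReal (dd_bd hf01 r q.1).1]

lemma lln_fix {f : ℝ → ℝ} (hf : Continuous f) (hf01 : ∀ x, f x ∈ Set.Icc (0:ℝ) 1) (r : ℝ)
    {φ : ℝ × ℝ → ℝ} (hφ : QG φ) {n : ℕ} (hn : 0 < n) (ε : ℝ) (hε : 0 < ε) :
    ((Measure.pi fun _ : Fin n => mT f r).prod (gpi (Fin n)))
      {q | ε ≤ |(∑ i, φ (q.1 i, q.2 i)) / n - Iv f r φ|}
      ≤ ENNReal.ofReal ((2 * ∫ q, φ q ^ 2 ∂(stdG.prod stdG)) / ε ^ 2 / n) := by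
  haveI := mT_prob f hf hf01 r
  have hle := mTprod_le hf hf01 r
  have hn' : (0:ℝ) < n := by exact_mod_cast hn
  have hsq : Integrable (fun q => φ q ^ 2) ((mT f r).prod stdG) :=
    (hφ.integrable_sq.smul_measure (c := 2) (by simp)).mono_measure hle
  have hL : MemLp φ 2 ((mT f r).prod stdG) :=
    (memLp_two_iff_integrable_sq hφ.1.aestronglyMeasurable).2 hsq
  have h := cheb_pi ((mT f r).prod stdG) (fun _ : Fin n => φ) (fun _ => hL) (ε * n) (by positivity)
  have mp := measurePreserving_arrowProdEquivProdArrow ℝ ℝ (Fin n) (fun _ => mT f r) (fun _ => stdG)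
  rw [← mp.map_eq, MeasurableEquiv.map_apply]
  refine le_trans (measure_mono ?_) (h.trans (ENNReal.ofReal_le_ofReal ?_))
  · intro x hx
    have hx' : ε ≤ |(∑ i, φ (x i)) / n - Iv f r φ| := hx
    show ε * n ≤ |∑ i, φ (x i) - ∑ i : Fin n, ∫ y, φ y ∂((mT f r).prod stdG)|
    rw [mTprod_int hf hf01]
    have e : ∑ i, φ (x i) - ∑ i : Fin n, Iv f r φ = ((∑ i, φ (x i)) / n - Iv f r φ) * n := by
      simp; field_simp
    rw [e, abs_mul, abs_of_pos hn']
    gcongr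
  · have h2 : ∫ q, φ q ^ 2 ∂((mT f r).prod stdG) ≤ 2 * ∫ q, φ q ^ 2 ∂(stdG.prod stdG) := by
      refine (integral_mono_measure hle (ae_of_all _ fun q => sq_nonneg _)
        (hφ.integrable_sq.smul_measure (c := 2) (by simp))).trans ?_
      rw [integral_smul_measure]; simp
    simp only [Finset.sum_const, Finset.card_univ, Fintype.card_fin, nsmul_eq_mul]
    calc (n * ∫ q, φ q ^ 2 ∂((mT f r).prod stdG)) / (ε * n) ^ 2
        = (∫ q, φ q ^ 2 ∂((mT f r).prod stdG)) / ε ^ 2 / n := by field_simp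
      _ ≤ _ := by gcongr

lemma Iv_tendsto {f : ℝ → ℝ} (hf : Continuous f) (hf01 : ∀ x, f x ∈ Set.Icc (0:ℝ) 1)
    {φ : ℝ × ℝ → ℝ} (hφ : QG φ) (ρn : ℕ → ℝ) (ρ : ℝ) (hρ : Tendsto ρn atTop (𝓝 ρ)) :
    Tendsto (fun n => Iv f (ρn n) φ) atTop (𝓝 (Iv f ρ φ)) := by
  unfold Iv
  refine tendsto_integral_of_dominated_convergence (fun q => 2 * |φ q|) (fun n => ?_)
    (hφ.integrable.abs.const_mul 2) (fun n => ae_of_all _ fun q => ?_) (ae_of_all _ fun q => ?_)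
  · have := dd_cont hf (ρn n)
    have := hφ.1
    exact Continuous.aestronglyMeasurable (by fun_prop)
  · rw [Real.norm_eq_abs, abs_mul, abs_of_nonneg (dd_bd hf01 _ _).1]
    exact mul_le_mul_of_nonneg_right (dd_bd hf01 _ _).2 (abs_nonneg _)
  · refine Tendsto.mul_const _ ?_
    have : Continuous fun r => dd f r q.1 := by unfold dd; fun_prop
    exact (this.tendsto ρ).comp hρ

lemma tendsto_ofReal_div (K : ℝ) : Tendsto (fun n : ℕ => ENNReal.ofReal (K / n)) atTop (𝓝 0) := by
  have h := (ENNReal.continuous_ofReal.tendsto 0).comp (tendsto_const_div_atTop_nhds_zero_nat K)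
  rw [ENNReal.ofReal_zero] at h
  exact h

lemma Mn_th {f : ℝ → ℝ} (hf : Continuous f) (hf01 : ∀ x, f x ∈ Set.Icc (0:ℝ) 1) (r : ℝ) (n p : ℕ)
    (C : Set ((Fin n → ℝ) × (Fin n → ℝ))) :
    Mn f r n p {q | (q.1, q.2.2) ∈ C} ≤ ((Measure.pi fun _ : Fin n => mT f r).prod (gpi (Fin n))) C := by
  haveI := mT_prob f hf hf01 r
  have mp := (MeasurePreserving.id (Measure.pi fun _ : Fin n => mT f r)).prod
    (measurePreserving_snd (μ := gpi (Fin p)) (ν := gpi (Fin n)))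
  rw [← mp.map_eq]
  exact Measure.le_map_apply mp.measurable.aemeasurable C

lemma Mn_g {f : ℝ → ℝ} (hf : Continuous f) (hf01 : ∀ x, f x ∈ Set.Icc (0:ℝ) 1) (r : ℝ) (n p : ℕ)
    (C : Set (Fin p → ℝ)) : Mn f r n p {q | q.2.1 ∈ C} ≤ gpi (Fin p) C := by
  haveI := mT_prob f hf hf01 r
  have mp := (measurePreserving_fst (μ := gpi (Fin p)) (ν := gpi (Fin n))).comp
    (measurePreserving_snd (μ := Measure.pi fun _ : Fin n => mT f r)
      (ν := (gpi (Fin p)).prod (gpi (Fin n))))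
  rw [← mp.map_eq]
  exact Measure.le_map_apply mp.measurable.aemeasurable C

lemma lln {f : ℝ → ℝ} (hf : Continuous f) (hf01 : ∀ x, f x ∈ Set.Icc (0:ℝ) 1)
    (ρn : ℕ → ℝ) (ρ : ℝ) (hρ : Tendsto ρn atTop (𝓝 ρ)) (p : ℕ → ℕ)
    {φ : ℝ × ℝ → ℝ} (hφ : QG φ) (ε : ℝ) (hε : 0 < ε) :
    Tendsto (fun n => Mn f (ρn n) n (p n)
      {q | ε ≤ |(∑ i, φ (q.1 i, q.2.2 i)) / n - Iv f ρ φ|}) atTop (𝓝 0) := by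
  have hI := Iv_tendsto hf hf01 hφ ρn ρ hρ
  have h1 : ∀ᶠ n in atTop, |Iv f (ρn n) φ - Iv f ρ φ| < ε / 2 := by
    have := (Metric.tendsto_nhds.1 hI) (ε / 2) (by positivity)
    simpa [Real.dist_eq] using this
  refine tendsto_of_tendsto_of_tendsto_of_le_of_le' tendsto_const_nhds
    (tendsto_ofReal_div ((2 * ∫ q, φ q ^ 2 ∂(stdG.prod stdG)) / (ε / 2) ^ 2))
    (Eventually.of_forall fun _ => zero_le) ?_
  filter_upwards [h1, eventually_gt_atTop 0] with n hn1 hn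
  refine le_trans (measure_mono ?_) ((Mn_th hf hf01 (ρn n) n (p n) _).trans
    (lln_fix hf hf01 (ρn n) hφ hn (ε / 2) (by positivity)))
  intro q hq
  have hq' : ε ≤ |(∑ i, φ (q.1 i, q.2.2 i)) / n - Iv f ρ φ| := hq
  show ε / 2 ≤ |(∑ i, φ (q.1 i, q.2.2 i)) / n - Iv f (ρn n) φ|
  have := abs_sub_le ((∑ i, φ (q.1 i, q.2.2 i)) / n) (Iv f (ρn n) φ) (Iv f ρ φ)
  linarith

lemma lln_g {f : ℝ → ℝ} (hf : Continuous f) (hf01 : ∀ x, f x ∈ Set.Icc (0:ℝ) 1)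
    (ρn : ℕ → ℝ) (p : ℕ → ℕ) (ψ : ℝ)
    (hp : Tendsto (fun n => (p n : ℝ) / (n : ℝ)) atTop (nhds ψ)) (ε : ℝ) (hε : 0 < ε) :
    Tendsto (fun n => Mn f (ρn n) n (p n)
      {q | ε ≤ |(∑ i, q.2.1 i ^ 2) / n - ψ|}) atTop (𝓝 0) := by
  set V : ℝ := ∫ y, (y ^ 2) ^ 2 ∂stdG with hV
  have hV0 : 0 ≤ V := integral_nonneg fun y => sq_nonneg _
  have hL : MemLp (fun y : ℝ => y ^ 2) 2 stdG := by
    rw [memLp_two_iff_integrable_sq (by fun_prop)]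
    refine (integrable_pow_stdG 2).congr (ae_of_all _ fun x => ?_)
    simp only; ring
  have h1 : ∀ᶠ n in atTop, |(p n : ℝ) / n - ψ| < ε / 2 := by
    have := (Metric.tendsto_nhds.1 hp) (ε / 2) (by positivity)
    simpa [Real.dist_eq] using this
  have h2 : ∀ᶠ n in atTop, (p n : ℝ) / n < ψ + 1 := by
    exact hp.eventually (gt_mem_nhds (by linarith))
  refine tendsto_of_tendsto_of_tendsto_of_le_of_le' tendsto_const_nhds
    (tendsto_ofReal_div ((ψ + 1) * V / (ε / 2) ^ 2))
    (Eventually.of_forall fun _ => zero_le) ?_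
  filter_upwards [h1, h2, eventually_gt_atTop 0] with n hn1 hn2 hn
  have hn' : (0:ℝ) < n := by exact_mod_cast hn
  have h := cheb_pi stdG (fun _ : Fin (p n) => fun y : ℝ => y ^ 2) (fun _ => hL) (ε / 2 * n) (by positivity)
  refine le_trans (measure_mono ?_) ((Mn_g hf hf01 (ρn n) n (p n) _).trans
    (h.trans (ENNReal.ofReal_le_ofReal ?_)))
  · intro q hq
    have hq' : ε ≤ |(∑ i, q.2.1 i ^ 2) / n - ψ| := hq
    show ε / 2 * n ≤ |∑ i, q.2.1 i ^ 2 - ∑ i : Fin (p n), ∫ y, y ^ 2 ∂stdG|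
    rw [integral_sq_stdG]
    have e : ∑ i, q.2.1 i ^ 2 - ∑ i : Fin (p n), (1:ℝ) = ((∑ i, q.2.1 i ^ 2) / n - p n / n) * n := by
      simp; field_simp
    rw [e, abs_mul, abs_of_pos hn']
    have := abs_sub_le ((∑ i, q.2.1 i ^ 2) / n) ((p n : ℝ) / n) ψ
    gcongr
    linarith
  · simp only [Finset.sum_const, Finset.card_univ, Fintype.card_fin, nsmul_eq_mul]
    calc (p n * V) / (ε / 2 * n) ^ 2 = ((p n : ℝ) / n) * V / (ε / 2) ^ 2 / n := by field_simp
      _ ≤ _ := by gcongr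

lemma lln_u {f : ℝ → ℝ} (hf : Continuous f) (hf01 : ∀ x, f x ∈ Set.Icc (0:ℝ) 1)
    (ρn : ℕ → ℝ) (p : ℕ → ℕ) (u : (n : ℕ) → Fin (p n) → ℝ) (hu : ∀ n, ∑ i, u n i ^ 2 = 1)
    (ε : ℝ) (hε : 0 < ε) :
    Tendsto (fun n => Mn f (ρn n) n (p n)
      {q | ε ≤ (dt (u n) q.2.1) ^ 2 / n}) atTop (𝓝 0) := by
  refine tendsto_of_tendsto_of_tendsto_of_le_of_le' tendsto_const_nhds
    (tendsto_ofReal_div (1 / ε))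
    (Eventually.of_forall fun _ => zero_le) ?_
  filter_upwards [eventually_gt_atTop 0] with n hn
  have hn' : (0:ℝ) < n := by exact_mod_cast hn
  have hL : ∀ i, MemLp (fun y : ℝ => u n i * y) 2 stdG := fun i =>
    (memLp_stdG 2 (by simp)).const_mul _
  have h := cheb_pi stdG (fun i : Fin (p n) => fun y : ℝ => u n i * y) hL (√(ε * n)) (by positivity)
  refine le_trans (measure_mono ?_) ((Mn_g hf hf01 (ρn n) n (p n) _).trans
    (h.trans (ENNReal.ofReal_le_ofReal ?_)))
  · intro q hq
    have hq' : ε ≤ (dt (u n) q.2.1) ^ 2 / n := hq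
    show √(ε * n) ≤ |∑ i, u n i * q.2.1 i - ∑ i : Fin (p n), ∫ y, u n i * y ∂stdG|
    have e0 : ∀ i, ∫ y, u n i * y ∂stdG = 0 := fun i => by
      rw [integral_const_mul (u n i) (fun y : ℝ => y), integral_id_stdG, mul_zero]
    simp only [e0]
    simp only [Finset.sum_const_zero, sub_zero]
    rw [← Real.sqrt_sq_eq_abs]
    refine Real.sqrt_le_sqrt ?_
    rw [le_div_iff₀ hn'] at hq'
    exact hq'
  · simp only [mul_pow, integral_const_mul, integral_sq_stdG, mul_one, hu]
    rw [Real.sq_sqrt (by positivity)]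
    apply le_of_eq; field_simp

end LLN2

section Limits

/-- the squared hinge -/
def ph (κ a b : ℝ) (q : ℝ × ℝ) : ℝ := (max (κ - a * q.1 - b * q.2) 0) ^ 2

lemma ph_cont (κ a b : ℝ) : Continuous (ph κ a b) := by unfold ph; fun_prop

lemma ph_nonneg (κ a b : ℝ) (q : ℝ × ℝ) : 0 ≤ ph κ a b q := sq_nonneg _

lemma ph_QG (κ a b : ℝ) : QG (ph κ a b) := by
  refine ⟨ph_cont κ a b, 3 * (κ ^ 2 + a ^ 2 + b ^ 2), by positivity, fun q => ?_⟩
  rw [abs_of_nonneg (ph_nonneg _ _ _ _)]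
  unfold ph
  have h1 : (max (κ - a * q.1 - b * q.2) 0) ^ 2 ≤ (κ - a * q.1 - b * q.2) ^ 2 := by
    rcases le_total (κ - a * q.1 - b * q.2) 0 with h | h
    · rw [max_eq_right h]; simpa using sq_nonneg _
    · rw [max_eq_left h]
  have h2 : (κ - a * q.1 - b * q.2) ^ 2 ≤ 3 * (κ ^ 2 + (a * q.1) ^ 2 + (b * q.2) ^ 2) := by
    nlinarith [sq_nonneg (κ + a * q.1), sq_nonneg (κ + b * q.2), sq_nonneg (a * q.1 - b * q.2)]
  have h3 : κ ^ 2 + (a * q.1) ^ 2 + (b * q.2) ^ 2 ≤ (κ ^ 2 + a ^ 2 + b ^ 2) * (1 + q.1 ^ 2 + q.2 ^ 2) := by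
    have e : (κ ^ 2 + a ^ 2 + b ^ 2) * (1 + q.1 ^ 2 + q.2 ^ 2) - (κ ^ 2 + (a * q.1) ^ 2 + (b * q.2) ^ 2)
      = κ ^ 2 * (q.1 ^ 2 + q.2 ^ 2) + a ^ 2 * (1 + q.2 ^ 2) + b ^ 2 * (1 + q.1 ^ 2) := by ring
    have : 0 ≤ κ ^ 2 * (q.1 ^ 2 + q.2 ^ 2) + a ^ 2 * (1 + q.2 ^ 2) + b ^ 2 * (1 + q.1 ^ 2) := by positivity
    linarith
  nlinarith

lemma mp_neg_stdG : MeasurePreserving (fun x : ℝ => -x) stdG stdG := ⟨by fun_prop, stdG_map_neg⟩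

lemma int_flip2 (F : ℝ × ℝ → ℝ) (hF : Continuous F) :
    ∫ q, F (q.1, -q.2) ∂(stdG.prod stdG) = ∫ q, F q ∂(stdG.prod stdG) := by
  have mp := (MeasurePreserving.id stdG).prod mp_neg_stdG
  conv_rhs => rw [← mp.map_eq]
  rw [integral_map mp.measurable.aemeasurable hF.aestronglyMeasurable]
  rfl

lemma int_flip1 (F : ℝ × ℝ → ℝ) (hF : Continuous F) :
    ∫ q, F (-q.1, q.2) ∂(stdG.prod stdG) = ∫ q, F q ∂(stdG.prod stdG) := by
  have mp := mp_neg_stdG.prod (MeasurePreserving.id stdG)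
  conv_rhs => rw [← mp.map_eq]
  rw [integral_map mp.measurable.aemeasurable hF.aestronglyMeasurable]
  rfl

lemma QG_mul_int {φ : ℝ × ℝ → ℝ} (hφ : QG φ) {w : ℝ × ℝ → ℝ} (hw : Continuous w)
    (hb : ∀ q, |w q| ≤ 2) : Integrable (fun q => w q * φ q) (stdG.prod stdG) := by
  have := hφ.1
  refine Integrable.mono' (hφ.integrable.abs.const_mul 2)
    (Continuous.aestronglyMeasurable (by fun_prop)) (ae_of_all _ fun q => ?_)
  rw [Real.norm_eq_abs, abs_mul]
  exact mul_le_mul_of_nonneg_right (hb q) (abs_nonneg _)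

lemma Fk_sq {f : ℝ → ℝ} (hf : Continuous f) (hf01 : ∀ x, f x ∈ Set.Icc (0:ℝ) 1) (ρ κ a b : ℝ) :
    (Fk (fun x => f (ρ * x)) κ a b) ^ 2 = Iv f ρ (ph κ a b) := by
  have hc := ph_cont κ a b
  have hc' := ph_cont κ (-a) b
  have hw1 : Continuous fun q : ℝ × ℝ => f (ρ * q.1) := by fun_prop
  have hw2 : Continuous fun q : ℝ × ℝ => 1 - f (ρ * q.1) := by fun_prop
  have hw3 : Continuous fun q : ℝ × ℝ => 1 - f (-(ρ * q.1)) := by fun_prop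
  have b1 : ∀ q : ℝ × ℝ, |f (ρ * q.1)| ≤ 2 := fun q => by
    have := hf01 (ρ * q.1); rw [abs_le]; exact ⟨by linarith [this.1], by linarith [this.2]⟩
  have b2 : ∀ q : ℝ × ℝ, |1 - f (ρ * q.1)| ≤ 2 := fun q => by
    have := hf01 (ρ * q.1); rw [abs_le]; exact ⟨by linarith [this.2], by linarith [this.1]⟩
  have b3 : ∀ q : ℝ × ℝ, |1 - f (-(ρ * q.1))| ≤ 2 := fun q => by
    have := hf01 (-(ρ * q.1)); rw [abs_le]; exact ⟨by linarith [this.2], by linarith [this.1]⟩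
  have i1 := QG_mul_int (ph_QG κ a b) hw1 b1
  have i2 := QG_mul_int (ph_QG κ (-a) b) hw2 b2
  have i3 := QG_mul_int (ph_QG κ a b) hw3 b3
  have e : (∫ g, ∫ z, (f (ρ * g) * (max (κ - a * g - b * z) 0) ^ 2
      + (1 - f (ρ * g)) * (max (κ + a * g - b * z) 0) ^ 2) ∂stdG ∂stdG) = Iv f ρ (ph κ a b) := by
    have h1 := integral_prod (μ := stdG) (ν := stdG) _ (i1.add i2)
    have h2 : ∀ q : ℝ × ℝ, ((fun q : ℝ × ℝ => f (ρ * q.1) * ph κ a b q)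
        + fun q : ℝ × ℝ => (1 - f (ρ * q.1)) * ph κ (-a) b q) q
        = f (ρ * q.1) * (max (κ - a * q.1 - b * q.2) 0) ^ 2
      + (1 - f (ρ * q.1)) * (max (κ + a * q.1 - b * q.2) 0) ^ 2 := fun q => by
      simp [ph]
    simp only [h2] at h1
    rw [← h1]
    simp only [← h2]
    rw [integral_add' i1 i2]
    rw [← int_flip1 (fun q => (1 - f (ρ * q.1)) * ph κ (-a) b q) (by fun_prop)]
    unfold Iv dd
    have h3 : ∀ q : ℝ × ℝ, (1 - f (ρ * (-q.1))) * ph κ (-a) b (-q.1, q.2)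
        = (1 - f (-(ρ * q.1))) * ph κ a b q := fun q => by simp [ph]
    simp only [h3]
    rw [← integral_add i1 i3]
    refine integral_congr_ae (ae_of_all _ fun q => ?_)
    simp only; ring
  unfold Fk
  rw [e, Real.sq_sqrt]
  exact integral_nonneg fun q => mul_nonneg (dd_bd hf01 _ _).1 (ph_nonneg _ _ _ _)

lemma Iv_nonneg {f : ℝ → ℝ} (hf01 : ∀ x, f x ∈ Set.Icc (0:ℝ) 1) (ρ κ a b : ℝ) :
    0 ≤ Iv f ρ (ph κ a b) :=
  integral_nonneg fun q => mul_nonneg (dd_bd hf01 _ _).1 (ph_nonneg _ _ _ _)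

lemma Iv_ph_lt {f : ℝ → ℝ} (hf : Continuous f) (hf01 : ∀ x, f x ∈ Set.Icc (0:ℝ) 1)
    (ρ κ a b : ℝ) (hκ : 0 < κ) : Iv f ρ (ph 0 a b) < Iv f ρ (ph κ a b) := by
  have hdc := dd_cont hf ρ
  have hb : ∀ q : ℝ × ℝ, |dd f ρ q.1| ≤ 2 := fun q => by
    rw [abs_of_nonneg (dd_bd hf01 _ _).1]; exact (dd_bd hf01 _ _).2
  have i1 := QG_mul_int (ph_QG κ a b) (w := fun q => dd f ρ q.1) (by fun_prop) hb
  have i0 := QG_mul_int (ph_QG 0 a b) (w := fun q => dd f ρ q.1) (by fun_prop) hb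
  have c1 := ph_cont κ a b
  have c0 := ph_cont 0 a b
  rw [← sub_pos]
  unfold Iv
  rw [← integral_sub i1 i0]
  have hc : Continuous fun q : ℝ × ℝ => dd f ρ q.1 * ph κ a b q - dd f ρ q.1 * ph 0 a b q := by fun_prop
  refine (integral_pos_iff_support_of_nonneg ?_ (i1.sub i0)).2 ?_
  · intro q
    simp only [Pi.zero_apply, Pi.sub_apply]
    rw [← mul_sub]
    refine mul_nonneg (dd_bd hf01 _ _).1 (sub_nonneg.2 ?_)
    unfold ph
    gcongr
  · refine hc.isOpen_support.measure_pos _ ⟨(0, 0), ?_⟩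
    simp [ph, dd, hκ.le, hκ.ne']

lemma Iv_ph_scale {f : ℝ → ℝ} (ρ a b : ℝ) (hb : 0 < b) :
    Iv f ρ (ph 0 a b) = b ^ 2 * Iv f ρ (ph 0 (a / b) 1) := by
  unfold Iv
  rw [← integral_const_mul]
  refine integral_congr_ae (ae_of_all _ fun q => ?_)
  have : max (0 - a * q.1 - b * q.2) 0 = b * max (0 - a / b * q.1 - 1 * q.2) 0 := by
    rw [mul_max_of_nonneg _ _ hb.le]
    congr 1
    · field_simp
      ring
    · simp
  simp only [ph, this]; ring

lemma Iv_ph_pos {f : ℝ → ℝ} (hf : Continuous f) (hf01 : ∀ x, f x ∈ Set.Icc (0:ℝ) 1)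
    (ρ κ ψ : ℝ) (hκ : 0 < κ) (h : ∀ a, ψ ≤ Iv f ρ (ph 0 a 1)) (a s : ℝ) (hs : 0 ≤ s) :
    s ^ 2 * ψ < Iv f ρ (ph κ a (-s)) := by
  have e : Iv f ρ (ph κ a (-s)) = Iv f ρ (ph κ a s) := by
    have hdc := dd_cont hf ρ
    have c1 := ph_cont κ a (-s)
    unfold Iv
    rw [← int_flip2 _ (by fun_prop)]
    refine integral_congr_ae (ae_of_all _ fun q => ?_)
    simp [ph]
  rw [e]
  rcases eq_or_lt_of_le hs with h0 | h0
  · rw [← h0]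
    have := Iv_ph_lt hf hf01 ρ κ a 0 hκ
    have := Iv_nonneg hf01 ρ 0 a 0
    simp; linarith
  · have h1 := Iv_ph_lt hf hf01 ρ κ a s hκ
    rw [Iv_ph_scale ρ a s h0] at h1
    have := h (a / s)
    nlinarith [sq_nonneg s, mul_le_mul_of_nonneg_left this (sq_nonneg s)]

lemma l2_mono {ι : Type*} [Fintype ι] (v w : ι → ℝ) (h : ∀ i, |v i| ≤ |w i|) : l2 v ≤ l2 w := by
  unfold l2
  exact Real.sqrt_le_sqrt (Finset.sum_le_sum fun i _ => sq_le_sq.2 (h i))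

lemma l2_add {ι : Type*} [Fintype ι] (v w : ι → ℝ) : l2 (fun i => v i + w i) ≤ l2 v + l2 w := by
  have h1 := dt_le v w
  have hv := l2_nonneg v
  have hw := l2_nonneg w
  have h0 := l2_sq (fun i => v i + w i)
  have e : ∑ i, (v i + w i) ^ 2 = l2 v ^ 2 + 2 * dt v w + l2 w ^ 2 := by
    rw [l2_sq, l2_sq, dt, Finset.mul_sum, ← Finset.sum_add_distrib, ← Finset.sum_add_distrib]
    exact Finset.sum_congr rfl fun i _ => by ring
  rw [e] at h0
  refine (le_abs_self _).trans (abs_le_of_sq_le_sq ?_ (add_nonneg hv hw))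
  rw [h0]; nlinarith

lemma l2_smul {ι : Type*} [Fintype ι] (c : ℝ) (v : ι → ℝ) : l2 (fun i => c * v i) = |c| * l2 v := by
  unfold l2
  simp only [mul_pow, ← Finset.mul_sum]
  rw [Real.sqrt_mul (sq_nonneg c), Real.sqrt_sq_eq_abs]

lemma l2_hinge_lip {n : ℕ} (κ a s a' s' : ℝ) (t h : Fin n → ℝ) :
    l2 (fun i => max (κ - a' * t i + s' * h i) 0)
      ≤ l2 (fun i => max (κ - a * t i + s * h i) 0) + (|a - a'| * l2 t + |s' - s| * l2 h) := by
  calc l2 (fun i => max (κ - a' * t i + s' * h i) 0)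
      = l2 (fun i => max (κ - a * t i + s * h i) 0
          + (max (κ - a' * t i + s' * h i) 0 - max (κ - a * t i + s * h i) 0)) := by
        congr 1; ext i; ring
    _ ≤ l2 (fun i => max (κ - a * t i + s * h i) 0)
        + l2 (fun i => max (κ - a' * t i + s' * h i) 0 - max (κ - a * t i + s * h i) 0) := l2_add _ _
    _ ≤ l2 (fun i => max (κ - a * t i + s * h i) 0)
        + l2 (fun i => (a - a') * t i + (s' - s) * h i) := by
        gcongr
        refine l2_mono _ _ fun i => ?_
        refine (abs_max_sub_max_le_abs _ _ _).trans (le_of_eq ?_)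
        congr 1; ring
    _ ≤ _ := by
        gcongr
        refine (l2_add _ _).trans ?_
        rw [l2_smul, l2_smul]

lemma tz_mono {Ω : ℕ → Type*} [∀ n, MeasurableSpace (Ω n)] (m : ∀ n, Measure (Ω n))
    (A B : ∀ n, Set (Ω n)) (h : ∀ᶠ n in atTop, A n ⊆ B n)
    (hB : Tendsto (fun n => m n (B n)) atTop (𝓝 0)) : Tendsto (fun n => m n (A n)) atTop (𝓝 0) :=
  tendsto_of_tendsto_of_tendsto_of_le_of_le' tendsto_const_nhds hB
    (Eventually.of_forall fun _ => zero_le) (h.mono fun _ hn => measure_mono hn)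

lemma tz_union {Ω : ℕ → Type*} [∀ n, MeasurableSpace (Ω n)] (m : ∀ n, Measure (Ω n))
    (A B : ∀ n, Set (Ω n)) (hA : Tendsto (fun n => m n (A n)) atTop (𝓝 0))
    (hB : Tendsto (fun n => m n (B n)) atTop (𝓝 0)) :
    Tendsto (fun n => m n (A n ∪ B n)) atTop (𝓝 0) := by
  have h := hA.add hB
  rw [add_zero] at h
  exact tendsto_of_tendsto_of_tendsto_of_le_of_le tendsto_const_nhds h
    (fun _ => zero_le) (fun n => measure_union_le _ _)

lemma tz_biUnion {Ω : ℕ → Type*} [∀ n, MeasurableSpace (Ω n)] (m : ∀ n, Measure (Ω n)) {X : Type*}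
    (T : Finset X) (A : X → ∀ n, Set (Ω n))
    (hA : ∀ x ∈ T, Tendsto (fun n => m n (A x n)) atTop (𝓝 0)) :
    Tendsto (fun n => m n (⋃ x ∈ T, A x n)) atTop (𝓝 0) := by
  have h := tendsto_finsetSum T hA
  rw [Finset.sum_const_zero] at h
  exact tendsto_of_tendsto_of_tendsto_of_le_of_le tendsto_const_nhds h
    (fun _ => zero_le) (fun n => measure_biUnion_finset_le _ _)

end Limits

section Parts

lemma prob_a {f : ℝ → ℝ} (hf : Continuous f) (hf01 : ∀ x, f x ∈ Set.Icc (0:ℝ) 1)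
    (ρn : ℕ → ℝ) (ρ : ℝ) (hρ : Tendsto ρn atTop (𝓝 ρ)) (p : ℕ → ℕ) (ψ : ℝ)
    (hp : Tendsto (fun n => (p n : ℝ) / (n : ℝ)) atTop (nhds ψ))
    (u : (n : ℕ) → Fin (p n) → ℝ) (hu : ∀ n, ∑ i, u n i ^ 2 = 1)
    (c : ℝ) (hc : Iv f ρ (ph 0 c 1) < ψ) :
    ∃ ε : ℝ, 0 < ε ∧ Tendsto (fun n => Mn f (ρn n) n (p n)
      {q | l2 (Pj (u n) q.2.1) ≤ l2 (fun i => max (0 - c * q.1 i - q.2.2 i) 0) + ε * √n})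
      atTop (𝓝 0) := by
  set J := Iv f ρ (ph 0 c 1) with hJ
  have hJ0 : 0 ≤ J := Iv_nonneg hf01 ρ 0 c 1
  set δ := (ψ - J) / 4 with hδ
  have hδ0 : 0 < δ := by rw [hδ]; linarith
  have hlt : √(J + δ) < √(ψ - 2 * δ) := Real.sqrt_lt_sqrt (by linarith) (by linarith)
  refine ⟨√(ψ - 2 * δ) - √(J + δ), by linarith, ?_⟩
  refine tz_mono (fun n => Mn f (ρn n) n (p n)) _ _ ?_
    (tz_union (fun n => Mn f (ρn n) n (p n)) _ _
      (tz_union (fun n => Mn f (ρn n) n (p n)) _ _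
        (lln hf hf01 ρn ρ hρ p (ph_QG 0 c 1) δ hδ0)
        (lln_g hf hf01 ρn p ψ hp δ hδ0))
      (lln_u hf hf01 ρn p u hu δ hδ0))
  filter_upwards [eventually_gt_atTop 0] with n hn
  have hn' : (0:ℝ) < n := by exact_mod_cast hn
  intro q hq
  by_contra hcon
  simp only [mem_union, mem_setOf_eq, not_or, not_le] at hcon
  obtain ⟨⟨h1, h2⟩, h3⟩ := hcon
  have hq' : l2 (Pj (u n) q.2.1) ≤ l2 (fun i => max (0 - c * q.1 i - q.2.2 i) 0)
    + (√(ψ - 2 * δ) - √(J + δ)) * √n := hq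
  have e1 : ∑ i, ph 0 c 1 (q.1 i, q.2.2 i) = ∑ i, (max (0 - c * q.1 i - q.2.2 i) 0) ^ 2 := by
    simp [ph]
  rw [e1] at h1
  have h1' : ∑ i, (max (0 - c * q.1 i - q.2.2 i) 0) ^ 2 < (J + δ) * n := by
    rw [← div_lt_iff₀ hn']; linarith [(abs_lt.1 h1).2]
  have h2' : (ψ - δ) * n < ∑ i, q.2.1 i ^ 2 := by
    rw [← lt_div_iff₀ hn']; linarith [(abs_lt.1 h2).1]
  have h3' : (dt (u n) q.2.1) ^ 2 < δ * n := by
    rw [← div_lt_iff₀ hn']; exact h3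
  have h4 := Pj_sq (u n) (hu n) q.2.1
  have g1 : l2 (fun i => max (0 - c * q.1 i - q.2.2 i) 0) ≤ √(J + δ) * √n := by
    rw [← Real.sqrt_mul' _ hn'.le]
    exact Real.sqrt_le_sqrt h1'.le
  have g2 : √(ψ - 2 * δ) * √n < l2 (Pj (u n) q.2.1) := by
    rw [← Real.sqrt_mul' _ hn'.le]
    have hpos : 0 ≤ ψ - 2 * δ := by linarith
    exact Real.sqrt_lt_sqrt (by positivity) (by linarith)
  linarith

/-- strict gap at a point `(a, s)` -/
def Dg (f : ℝ → ℝ) (ρ κ ψ : ℝ) (x : ℝ × ℝ) : ℝ := √(Iv f ρ (ph κ x.1 (-x.2))) - x.2 * √ψ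

lemma prob_center {f : ℝ → ℝ} (hf : Continuous f) (hf01 : ∀ x, f x ∈ Set.Icc (0:ℝ) 1)
    (ρn : ℕ → ℝ) (ρ : ℝ) (hρ : Tendsto ρn atTop (𝓝 ρ)) (p : ℕ → ℕ) (ψ : ℝ) (hψ : 0 < ψ)
    (hp : Tendsto (fun n => (p n : ℝ) / (n : ℝ)) atTop (nhds ψ)) (κ : ℝ)
    (x : ℝ × ℝ) (hx : 0 ≤ x.2) (hD : 0 < Dg f ρ κ ψ x) :
    Tendsto (fun n => Mn f (ρn n) n (p n)
      {q | l2 (fun i => max (κ - x.1 * q.1 i + x.2 * q.2.2 i) 0)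
        < x.2 * l2 q.2.1 + Dg f ρ κ ψ x / 2 * √n}) atTop (𝓝 0) := by
  set J := Iv f ρ (ph κ x.1 (-x.2)) with hJ
  set D := Dg f ρ κ ψ x with hDdef
  have hev : ∀ᶠ δ in 𝓝[>] (0:ℝ), D / 2 < √(J - δ) - x.2 * √(ψ + δ) := by
    refine nhdsWithin_le_nhds ?_
    have hcont : Continuous fun δ : ℝ => √(J - δ) - x.2 * √(ψ + δ) := by fun_prop
    have h0 : D / 2 < √(J - 0) - x.2 * √(ψ + 0) := by
      rw [sub_zero, add_zero]
      show D / 2 < D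
      linarith
    exact (hcont.tendsto 0).eventually (lt_mem_nhds h0)
  obtain ⟨δ, hδ, hδ0⟩ := (hev.and self_mem_nhdsWithin).exists
  have hδ0' : 0 < δ := hδ0
  refine tz_mono (fun n => Mn f (ρn n) n (p n)) _ _ ?_
    (tz_union (fun n => Mn f (ρn n) n (p n)) _ _
      (lln hf hf01 ρn ρ hρ p (ph_QG κ x.1 (-x.2)) δ hδ0')
      (lln_g hf hf01 ρn p ψ hp δ hδ0'))
  filter_upwards [eventually_gt_atTop 0] with n hn
  have hn' : (0:ℝ) < n := by exact_mod_cast hn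
  intro q hq
  by_contra hcon
  simp only [mem_union, mem_setOf_eq, not_or, not_le] at hcon
  obtain ⟨h1, h2⟩ := hcon
  have hq' : l2 (fun i => max (κ - x.1 * q.1 i + x.2 * q.2.2 i) 0)
        < x.2 * l2 q.2.1 + D / 2 * √n := hq
  have e1 : ∑ i, ph κ x.1 (-x.2) (q.1 i, q.2.2 i)
      = ∑ i, (max (κ - x.1 * q.1 i + x.2 * q.2.2 i) 0) ^ 2 := by
    simp [ph]
  rw [e1] at h1
  have h1' := (abs_lt.1 h1).1
  have h2' := (abs_lt.1 h2).2
  have g1 : √(J - δ) * √n ≤ l2 (fun i => max (κ - x.1 * q.1 i + x.2 * q.2.2 i) 0) := by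
    rw [← Real.sqrt_mul' _ hn'.le]
    refine Real.sqrt_le_sqrt ?_
    have : J - δ < (∑ i, (max (κ - x.1 * q.1 i + x.2 * q.2.2 i) 0) ^ 2) / n := by linarith
    rw [lt_div_iff₀ hn'] at this
    exact this.le
  have g2 : l2 q.2.1 ≤ √(ψ + δ) * √n := by
    rw [← Real.sqrt_mul' _ hn'.le]
    refine Real.sqrt_le_sqrt ?_
    have : (∑ i, q.2.1 i ^ 2) / n < ψ + δ := by linarith
    rw [div_lt_iff₀ hn'] at this
    exact this.le
  have g3 := mul_le_mul_of_nonneg_left g2 hx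
  have g4 := mul_lt_mul_of_pos_right hδ (Real.sqrt_pos.2 hn')
  nlinarith

lemma prob_b {f : ℝ → ℝ} (hf : Continuous f) (hf01 : ∀ x, f x ∈ Set.Icc (0:ℝ) 1)
    (ρn : ℕ → ℝ) (ρ : ℝ) (hρ : Tendsto ρn atTop (𝓝 ρ)) (p : ℕ → ℕ) (ψ : ℝ) (hψ : 0 < ψ)
    (hp : Tendsto (fun n => (p n : ℝ) / (n : ℝ)) atTop (nhds ψ)) (κ : ℝ) (hκ : 0 < κ)
    (h : ∀ a, ψ ≤ Iv f ρ (ph 0 a 1)) (CC : ℝ) :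
    Tendsto (fun n => Mn f (ρn n) n (p n)
      {q | ∃ a s : ℝ, 0 ≤ s ∧ a ^ 2 + s ^ 2 ≤ CC ∧
          l2 (fun i => max (κ - a * q.1 i + s * q.2.2 i) 0) ≤ s * l2 q.2.1}) atTop (𝓝 0) := by
  have hDpos : ∀ x : ℝ × ℝ, 0 ≤ x.2 → 0 < Dg f ρ κ ψ x := by
    intro x hx
    have h1 := Iv_ph_pos hf hf01 ρ κ ψ hκ h x.1 x.2 hx
    unfold Dg
    rw [sub_pos]
    refine Real.lt_sqrt_of_sq_lt ?_
    rw [mul_pow, Real.sq_sqrt hψ.le]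
    exact h1
  set φ : ℝ × ℝ → ℝ := fun q => q.1 ^ 2 + q.2 ^ 2 with hφ
  have hQ : QG φ := by
    refine ⟨by fun_prop, 1, zero_le_one, fun q => ?_⟩
    rw [abs_of_nonneg (by positivity)]
    simp only [hφ]; linarith
  set I := Iv f ρ φ with hI
  have hI0 : 0 ≤ I := integral_nonneg fun q => mul_nonneg (dd_bd hf01 _ _).1 (by positivity)
  set B : ℝ := √(I + 1) + √(ψ + 1) with hB
  have hB1 : 0 < √(I + 1) := Real.sqrt_pos.2 (by linarith)
  have hB2 : 0 < √(ψ + 1) := Real.sqrt_pos.2 (by linarith)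
  have hB0 : 0 < B := add_pos hB1 hB2
  let K : Set (ℝ × ℝ) := {x | 0 ≤ x.2 ∧ x.1 ^ 2 + x.2 ^ 2 ≤ CC}
  have hK : IsCompact K := by
    refine Metric.isCompact_of_isClosed_isBounded ?_ ?_
    · refine IsClosed.inter (s₁ := {x : ℝ × ℝ | 0 ≤ x.2}) (s₂ := {x : ℝ × ℝ | x.1 ^ 2 + x.2 ^ 2 ≤ CC})
        (isClosed_le (by fun_prop) (by fun_prop)) (isClosed_le (by fun_prop) (by fun_prop))
    · refine (Metric.isBounded_closedBall (x := (0 : ℝ × ℝ)) (r := √CC)).subset ?_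
      rintro x ⟨hx0, hx1⟩
      rw [mem_closedBall_zero_iff, Prod.norm_def, max_le_iff, Real.norm_eq_abs, Real.norm_eq_abs]
      exact ⟨Real.abs_le_sqrt (by nlinarith [sq_nonneg x.2]), Real.abs_le_sqrt (by nlinarith [sq_nonneg x.1])⟩
  obtain ⟨T, hTK, hT⟩ := hK.elim_nhds_subcover
    (fun x => Metric.ball x (if 0 < Dg f ρ κ ψ x then Dg f ρ κ ψ x / (6 * B) else 1))
    (fun x _ => Metric.ball_mem_nhds _ (by
      split_ifs with h0
      · positivity
      · exact one_pos))
  refine tz_mono (fun n => Mn f (ρn n) n (p n)) _ _ ?_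
    (tz_union (fun n => Mn f (ρn n) n (p n)) _ _
      (tz_union (fun n => Mn f (ρn n) n (p n)) _ _
        (lln hf hf01 ρn ρ hρ p hQ 1 one_pos)
        (lln_g hf hf01 ρn p ψ hp 1 one_pos))
      (tz_biUnion (fun n => Mn f (ρn n) n (p n)) T
        (fun x n => {q | l2 (fun i => max (κ - x.1 * q.1 i + x.2 * q.2.2 i) 0)
          < x.2 * l2 q.2.1 + Dg f ρ κ ψ x / 2 * √n})
        (fun x hx => prob_center hf hf01 ρn ρ hρ p ψ hψ hp κ x (hTK x hx).1 (hDpos x (hTK x hx).1))))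
  filter_upwards [eventually_gt_atTop 0] with n hn
  have hn' : (0:ℝ) < n := by exact_mod_cast hn
  have hsn : 0 < √(n:ℝ) := Real.sqrt_pos.2 hn'
  rintro q ⟨a, s, hs, has, hq⟩
  by_contra hcon
  simp only [mem_union, mem_setOf_eq, not_or, not_le, mem_iUnion, not_exists, not_lt] at hcon
  obtain ⟨⟨h1, h2⟩, h3⟩ := hcon
  obtain ⟨x, hxT, hxb⟩ : ∃ x ∈ T, (a, s) ∈ Metric.ball x
      (if 0 < Dg f ρ κ ψ x then Dg f ρ κ ψ x / (6 * B) else 1) := by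
    have := hT (show (a, s) ∈ K from ⟨hs, has⟩)
    simpa using this
  have hx := (hTK x hxT).1
  have hD := hDpos x hx
  set D := Dg f ρ κ ψ x with hDdef
  rw [if_pos hD, Metric.mem_ball, Prod.dist_eq, max_lt_iff, Real.dist_eq, Real.dist_eq] at hxb
  obtain ⟨hb1, hb2⟩ := hxb
  simp only at hb1 hb2
  have h3' := h3 x hxT
  have h1' := (abs_lt.1 h1).2
  have h2' := (abs_lt.1 h2).2
  have h1'' : ∑ i, φ (q.1 i, q.2.2 i) < (I + 1) * n := by
    rw [← div_lt_iff₀ hn']; linarith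
  have h2'' : ∑ i, q.2.1 i ^ 2 < (ψ + 1) * n := by
    rw [← div_lt_iff₀ hn']; linarith
  have hsplit : ∑ i, φ (q.1 i, q.2.2 i) = ∑ i, q.1 i ^ 2 + ∑ i, q.2.2 i ^ 2 := by
    simp only [hφ, Finset.sum_add_distrib]
  have t0 : 0 ≤ ∑ i, q.1 i ^ 2 := Finset.sum_nonneg fun i _ => sq_nonneg _
  have t1 : 0 ≤ ∑ i, q.2.2 i ^ 2 := Finset.sum_nonneg fun i _ => sq_nonneg _
  have lt : l2 q.1 ≤ B * √n := by
    have : l2 q.1 ≤ √(I + 1) * √n := by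
      rw [← Real.sqrt_mul' _ hn'.le]
      exact Real.sqrt_le_sqrt (by linarith)
    nlinarith
  have lh : l2 q.2.2 ≤ B * √n := by
    have : l2 q.2.2 ≤ √(I + 1) * √n := by
      rw [← Real.sqrt_mul' _ hn'.le]
      exact Real.sqrt_le_sqrt (by linarith)
    nlinarith
  have lg : l2 q.2.1 ≤ B * √n := by
    have : l2 q.2.1 ≤ √(ψ + 1) * √n := by
      rw [← Real.sqrt_mul' _ hn'.le]
      exact Real.sqrt_le_sqrt h2''.le
    nlinarith
  have lip := l2_hinge_lip κ a s x.1 x.2 q.1 q.2.2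
  set R := D / (6 * B) with hR
  have hR0 : 0 < R := by positivity
  have hRB : R * (B * √n) = D / 6 * √n := by rw [hR]; field_simp
  have m1 : |a - x.1| * l2 q.1 ≤ D / 6 * √n := by
    rw [← hRB]; exact mul_le_mul hb1.le lt (l2_nonneg _) hR0.le
  have m2 : |x.2 - s| * l2 q.2.2 ≤ D / 6 * √n := by
    rw [← hRB, abs_sub_comm]; exact mul_le_mul hb2.le lh (l2_nonneg _) hR0.le
  have m3 : (s - x.2) * l2 q.2.1 < D / 6 * √n := by
    rcases eq_or_lt_of_le (l2_nonneg q.2.1) with h0 | h0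
    · rw [← h0]; simp; positivity
    · rw [← hRB]
      calc (s - x.2) * l2 q.2.1 ≤ |s - x.2| * l2 q.2.1 := by gcongr; exact le_abs_self _
        _ < R * l2 q.2.1 := mul_lt_mul_of_pos_right hb2 h0
        _ ≤ _ := mul_le_mul_of_nonneg_left lg hR0.le
  nlinarith

end Parts

section Final

lemma quad_eq {p : ℕ} (A : Fin p → Fin p → ℝ) (S : Matrix (Fin p) (Fin p) ℝ)
    (hS : ∀ a b, S a b = ∑ i, A a i * A b i) (θ : Fin p → ℝ) :
    ∑ i, (∑ j, θ j * A j i) ^ 2 = ∑ a, ∑ b, θ a * S a b * θ b := by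
  have h1 : ∀ i, (∑ j, θ j * A j i) ^ 2 = ∑ a, ∑ b, θ a * (A a i * A b i) * θ b := fun i => by
    rw [sq, Finset.sum_mul_sum]
    exact Finset.sum_congr rfl fun a _ => Finset.sum_congr rfl fun b _ => by ring
  simp only [h1, hS]
  rw [Finset.sum_comm]
  refine Finset.sum_congr rfl fun a _ => ?_
  rw [Finset.sum_comm]
  refine Finset.sum_congr rfl fun b _ => ?_
  rw [Finset.mul_sum, Finset.sum_mul]

lemma quad_eq' {p : ℕ} (v : Fin p → Fin p → ℝ) (lam : Fin p → ℝ)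
    (hortho : ∀ i k, ∑ j, v i j * v k j = (if i = k then (1:ℝ) else 0)) (c : Fin p → ℝ) :
    ∑ j, (∑ i, c i * v i j) ^ 2 = ∑ i, c i ^ 2 := by
  have h1 : ∀ j, (∑ i, c i * v i j) ^ 2 = ∑ i, ∑ k, c i * c k * (v i j * v k j) := fun i => by
    rw [sq, Finset.sum_mul_sum]
    exact Finset.sum_congr rfl fun a _ => Finset.sum_congr rfl fun b _ => by ring
  simp only [h1]
  rw [Finset.sum_comm]
  refine Finset.sum_congr rfl fun i _ => ?_
  rw [Finset.sum_comm]
  simp only [← Finset.mul_sum, hortho]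
  simp [sq]

lemma spec_low {p : ℕ} (S : Matrix (Fin p) (Fin p) ℝ) (cc : ℝ)
    (hSlow : ∀ (a : Fin p → ℝ), cc * ∑ j, a j ^ 2 ≤ ∑ i, ∑ j, a i * S i j * a j)
    (lam : Fin p → ℝ) (v : Fin p → Fin p → ℝ)
    (hortho : ∀ i k, ∑ j, v i j * v k j = (if i = k then (1:ℝ) else 0))
    (hdecomp : ∀ a b, S a b = ∑ i, lam i * v i a * v i b) (k : Fin p) : cc ≤ lam k := by
  have h := hSlow (v k)
  have h0 : ∑ j, v k j ^ 2 = 1 := by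
    have := hortho k k
    simp only [if_true] at this
    rw [← this]
    exact Finset.sum_congr rfl fun j _ => by ring
  rw [h0, mul_one] at h
  refine h.trans (le_of_eq ?_)
  have h1 : ∀ a b, v k a * S a b * v k b = ∑ i, lam i * (v i a * v k a) * (v i b * v k b) := fun a b => by
    rw [hdecomp, Finset.mul_sum, Finset.sum_mul]
    exact Finset.sum_congr rfl fun i _ => by ring
  calc ∑ a, ∑ b, v k a * S a b * v k b
      = ∑ a, ∑ i, ∑ b, lam i * (v i a * v k a) * (v i b * v k b) := by
        refine Finset.sum_congr rfl fun a _ => ?_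
        simp only [h1]
        rw [Finset.sum_comm]
    _ = ∑ i, ∑ a, ∑ b, lam i * (v i a * v k a) * (v i b * v k b) := by rw [Finset.sum_comm]
    _ = ∑ i, lam i * (if i = k then (1:ℝ) else 0) * (if i = k then (1:ℝ) else 0) := by
        refine Finset.sum_congr rfl fun i _ => ?_
        simp only [← Finset.mul_sum, hortho]
        rw [← Finset.sum_mul, ← Finset.mul_sum, hortho]
    _ = lam k := by simp

lemma dataLaw_le_one {n p : ℕ} (f : ℝ → ℝ) (hf : Continuous f) (hf01 : ∀ x, f x ∈ Set.Icc (0:ℝ) 1)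
    (θs : Fin p → ℝ) (r : ℝ)
    (A : Fin p → Fin p → ℝ) (u : Fin p → ℝ) (hu : ∑ i, u i ^ 2 = 1)
    (hθ : ∀ i, ∑ j, θs j * A j i = r * u i)
    (S : Matrix (Fin p) (Fin p) ℝ) (hS : ∀ a b, S a b = ∑ i, A a i * A b i)
    (ν : Measure (Fin p → ℝ)) [IsProbabilityMeasure ν] (hν : IsCGauss ν S)
    (B : Set ((Fin n → Fin p → ℝ) × (Fin n → ℝ))) :
    dataLaw n p f θs ν B ≤ 1 := by
  have := mT_prob f hf hf01 r
  refine (measure_mono (t := {q | (fun i j => q.2 i * q.1 i j) ∈ (univ : Set (Fin n → Fin p → ℝ))})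
    (fun q _ => mem_univ _)).trans ?_
  rw [dataLaw_law f hf hf01 θs r A u hu hθ S hS ν hν univ MeasurableSet.univ]
  exact prob_le_one

lemma stdG_Iic_ne : stdG (Iic 0) ≠ 0 :=
  ((measure_mono Iio_subset_Iic_self).trans_lt' (isOpen_Iio.measure_pos _ ⟨-1, by simp⟩)).ne'

theorem main_aux
    (f : ℝ → ℝ) (hf : Continuous f) (hf01 : ∀ x, f x ∈ Set.Icc (0:ℝ) 1)
    (ψ : ℝ) (hψ : 0 < ψ)
    (p : ℕ → ℕ) (hp : Tendsto (fun n => (p n : ℝ) / (n : ℝ)) atTop (nhds ψ))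
    (S : (n : ℕ) → Matrix (Fin (p n)) (Fin (p n)) ℝ)
    (θs : (n : ℕ) → Fin (p n) → ℝ)
    (cc CC : ℝ) (hcc : 0 < cc) (hccCC : cc ≤ CC)
    (hSlow : ∀ n (a : Fin (p n) → ℝ), cc * ∑ j, a j ^ 2 ≤ ∑ i, ∑ j, a i * S n i j * a j)
    (hSup : ∀ n (a : Fin (p n) → ℝ), ∑ i, ∑ j, a i * S n i j * a j ≤ CC * ∑ j, a j ^ 2)
    (lam : (n : ℕ) → Fin (p n) → ℝ) (v : (n : ℕ) → Fin (p n) → Fin (p n) → ℝ)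
    (hortho : ∀ n i k, ∑ j, v n i j * v n k j = (if i = k then (1:ℝ) else 0))
    (hdecomp : ∀ n a b, S n a b = ∑ i, lam n i * v n i a * v n i b)
    (ρn : ℕ → ℝ) (hρn : ∀ n, ρn n = Real.sqrt (∑ i, ∑ j, θs n i * S n i j * θs n j))
    (hρnpos : ∀ n, 0 < ρn n)
    (ρ : ℝ) (hρlim : Tendsto ρn atTop (nhds ρ))
    (ν : (n : ℕ) → Measure (Fin (p n) → ℝ))
    (hνprob : ∀ n, IsProbabilityMeasure (ν n))
    (hνgauss : ∀ n, IsCGauss (ν n) (S n)) :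
    (psiStar0 (fun x => f (ρ * x)) < ψ →
      ∃ κbar : ℝ, 0 < κbar ∧
        Tendsto (fun n => dataLaw n (p n) f (θs n) (ν n)
            {q | κbar ≤ margin n (p n) q.1 q.2}) atTop (nhds 1))
    ∧ (ψ ≤ psiStar0 (fun x => f (ρ * x)) →
      ∀ κbar : ℝ, 0 < κbar →
        Tendsto (fun n => dataLaw n (p n) f (θs n) (ν n)
            {q | κbar ≤ margin n (p n) q.1 q.2}) atTop (nhds 0)) := by
  have hlam : ∀ n i, cc ≤ lam n i := fun n i =>
    spec_low (S n) cc (hSlow n) (lam n) (v n) (hortho n) (hdecomp n) i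
  let A : (n : ℕ) → Fin (p n) → Fin (p n) → ℝ := fun n j i => √(lam n i) * v n i j
  let u : (n : ℕ) → Fin (p n) → ℝ := fun n i => (∑ j, θs n j * A n j i) / ρn n
  have hS : ∀ n a b, S n a b = ∑ i, A n a i * A n b i := by
    intro n a b
    rw [hdecomp]
    refine Finset.sum_congr rfl fun i _ => ?_
    have : √(lam n i) * √(lam n i) = lam n i := Real.mul_self_sqrt (hcc.le.trans (hlam n i))
    show _ = (√(lam n i) * v n i a) * (√(lam n i) * v n i b)
    calc lam n i * v n i a * v n i b = (√(lam n i) * √(lam n i)) * v n i a * v n i b := by rw [this]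
      _ = _ := by ring
  have hθ : ∀ n i, ∑ j, θs n j * A n j i = ρn n * u n i := fun n i => by
    show _ = ρn n * ((∑ j, θs n j * A n j i) / ρn n)
    rw [mul_div_cancel₀ _ (hρnpos n).ne']
  have hu : ∀ n, ∑ i, u n i ^ 2 = 1 := fun n => by
    have h1 := quad_eq (A n) (S n) (hS n) (θs n)
    have h2 : ρn n ^ 2 = ∑ i, ∑ j, θs n i * S n i j * θs n j := by
      rw [hρn, Real.sq_sqrt]
      rw [← h1]
      exact Finset.sum_nonneg fun i _ => sq_nonneg _
    simp only [u, div_pow]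
    rw [← Finset.sum_div, h1, ← h2, div_self (pow_ne_zero _ (hρnpos n).ne')]
  have hAup : ∀ n (θ : Fin (p n) → ℝ), ∑ i, (∑ j, θ j * A n j i) ^ 2 ≤ CC * ∑ j, θ j ^ 2 := by
    intro n θ
    rw [quad_eq (A n) (S n) (hS n) θ]
    exact hSup n θ
  have hAlow : ∀ n (w : Fin (p n) → ℝ), cc * ∑ i, w i ^ 2 ≤ ∑ j, (∑ i, A n j i * w i) ^ 2 := by
    intro n w
    have h1 := quad_eq' (v n) (lam n) (hortho n) (fun i => √(lam n i) * w i)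
    have h2 : ∀ j, ∑ i, A n j i * w i = ∑ i, √(lam n i) * w i * v n i j := fun j =>
      Finset.sum_congr rfl fun i _ => by simp only [A]; ring
    simp only [h2]
    rw [h1, Finset.mul_sum]
    refine Finset.sum_le_sum fun i _ => ?_
    rw [mul_pow, Real.sq_sqrt (hcc.le.trans (hlam n i))]
    exact mul_le_mul_of_nonneg_right (hlam n i) (sq_nonneg _)
  have hFk : ∀ c, (Fk (fun x => f (ρ * x)) 0 c 1) ^ 2 = Iv f ρ (ph 0 c 1) := fun c =>
    Fk_sq hf hf01 ρ 0 c 1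
  have hs0 := stdG_Iic_ne
  constructor
  · intro hlt
    obtain ⟨c, hc⟩ := exists_lt_of_ciInf_lt hlt
    rw [hFk] at hc
    obtain ⟨ε, hε, hlim⟩ := prob_a hf hf01 ρn ρ hρlim p ψ hp u hu c hc
    have hκ : 0 < √(cc / (1 + c ^ 2)) * ε := mul_pos (Real.sqrt_pos.2 (by positivity)) hε
    refine ⟨√(cc / (1 + c ^ 2)) * ε, hκ, ?_⟩
    have hl : Tendsto (fun n => 1 - (stdG (Iic 0))⁻¹ * Mn f (ρn n) n (p n)
      {q | l2 (Pj (u n) q.2.1) ≤ l2 (fun i => max (0 - c * q.1 i - q.2.2 i) 0) + ε * √n})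
      atTop (𝓝 1) := by
      have h1 := ENNReal.Tendsto.const_mul (a := (stdG (Iic 0))⁻¹) hlim (Or.inr (ENNReal.inv_ne_top.2 hs0))
      rw [mul_zero] at h1
      have h2 := ENNReal.Tendsto.sub (tendsto_const_nhds (x := (1:ENNReal)) (f := atTop (α := ℕ))) h1
        (Or.inl ENNReal.one_ne_top)
      rw [tsub_zero] at h2
      exact h2
    refine tendsto_of_tendsto_of_tendsto_of_le_of_le' hl tendsto_const_nhds ?_ ?_
    · filter_upwards [eventually_gt_atTop 0] with n hn
      have := hνprob n
      refine bnd_a hn f hf hf01 (θs n) (ρn n) (A n) (u n) (hu n) (hθ n) (S n) (hS n) (ν n) (hνgauss n)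
        cc hcc (hAlow n) _ hκ c (ε * √n) (by positivity) (le_of_eq ?_)
      rw [mul_pow, mul_pow, Real.sq_sqrt (by positivity), Real.sq_sqrt (by positivity)]
      field_simp
    · refine Eventually.of_forall fun n => ?_
      have := hνprob n
      exact dataLaw_le_one f hf hf01 (θs n) (ρn n) (A n) (u n) (hu n) (hθ n) (S n) (hS n) (ν n) (hνgauss n) _
  · intro hle κ hκ
    have hall : ∀ a, ψ ≤ Iv f ρ (ph 0 a 1) := fun a => by
      rw [← hFk]
      refine hle.trans (ciInf_le ⟨0, ?_⟩ a)
      rintro _ ⟨b, rfl⟩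
      exact sq_nonneg _
    have hlim := prob_b hf hf01 ρn ρ hρlim p ψ hψ hp (κ / 2) (by positivity) hall CC
    have h1 := ENNReal.Tendsto.const_mul (a := (stdG (Iic 0))⁻¹) hlim (Or.inr (ENNReal.inv_ne_top.2 hs0))
    rw [mul_zero] at h1
    refine tendsto_of_tendsto_of_tendsto_of_le_of_le tendsto_const_nhds h1 (fun _ => zero_le) fun n => ?_
    have := hνprob n
    have h2 := bnd_b (n := n) f hf hf01 (θs n) (ρn n) (A n) (u n) (hu n) (hθ n) (S n) (hS n) (ν n)
      (hνgauss n) CC (hcc.le.trans hccCC) (hAup n) κ hκ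
    simp only
    rw [mul_comm (stdG (Iic 0))⁻¹, ← div_eq_mul_inv,
      ENNReal.le_div_iff_mul_le (Or.inl hs0) (Or.inl (measure_ne_top _ _)), mul_comm]
    exact h2

end Final

/-- The data are linearly separable with a margin which is bounded away from `0`
(with probability tending to one) if and only if `ψ > ψ*(0)`. -/
theorem statement_13
    (f : ℝ → ℝ) (hf : Continuous f) (hf01 : ∀ x, f x ∈ Set.Icc (0:ℝ) 1)
    (ψ : ℝ) (hψ : 0 < ψ)
    (p : ℕ → ℕ) (hp : Tendsto (fun n => (p n : ℝ) / (n : ℝ)) atTop (nhds ψ))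
    (S : (n : ℕ) → Matrix (Fin (p n)) (Fin (p n)) ℝ)
    (θs : (n : ℕ) → Fin (p n) → ℝ)
    -- (A1): uniformly bounded spectrum
    (cc CC : ℝ) (hcc : 0 < cc) (hccCC : cc ≤ CC)
    (hSsymm : ∀ n, (S n).IsSymm)
    (hSlow : ∀ n (a : Fin (p n) → ℝ), cc * ∑ j, a j ^ 2 ≤ ∑ i, ∑ j, a i * S n i j * a j)
    (hSup : ∀ n (a : Fin (p n) → ℝ), ∑ i, ∑ j, a i * S n i j * a j ≤ CC * ∑ j, a j ^ 2)
    -- (A2): spectral decomposition and convergence of the empirical spectral data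
    (lam : (n : ℕ) → Fin (p n) → ℝ) (v : (n : ℕ) → Fin (p n) → Fin (p n) → ℝ)
    (hortho : ∀ n i k, ∑ j, v n i j * v n k j = (if i = k then (1:ℝ) else 0))
    (hdecomp : ∀ n a b, S n a b = ∑ i, lam n i * v n i a * v n i b)
    (ρn : ℕ → ℝ) (hρn : ∀ n, ρn n = Real.sqrt (∑ i, ∑ j, θs n i * S n i j * θs n j))
    (hρnpos : ∀ n, 0 < ρn n)
    (μ : Measure (ℝ × ℝ)) [IsProbabilityMeasure μ]
    (hμpos : ∀ᵐ q ∂μ, 0 < q.1)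
    (hweak : ∀ φ : BoundedContinuousFunction (ℝ × ℝ) ℝ,
      Tendsto (fun n => ∫ q, φ q
          ∂(empMeas (p n) (fun i => (lam n i,
            Real.sqrt ((p n : ℝ) * lam n i) * (∑ j, v n i j * θs n j) / ρn n))))
        atTop (nhds (∫ q, φ q ∂μ)))
    (hsecond : Tendsto (fun n => ∫ q, q.1 ^ 2 + q.2 ^ 2
          ∂(empMeas (p n) (fun i => (lam n i,
            Real.sqrt ((p n : ℝ) * lam n i) * (∑ j, v n i j * θs n j) / ρn n))))
        atTop (nhds (∫ q, q.1 ^ 2 + q.2 ^ 2 ∂μ)))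
    (hμw2 : ∫ q, q.2 ^ 2 ∂μ = 1)
    (ρ : ℝ) (hρ : 0 < ρ) (hρlim : Tendsto ρn atTop (nhds ρ))
    (hρid : (ρ ^ 2)⁻¹ = ∫ q, q.2 ^ 2 / q.1 ∂μ)
    -- (A3): non-degeneracy
    (hnd : NonDeg (fun x => f (ρ * x)))
    -- the Gaussian feature law
    (ν : (n : ℕ) → Measure (Fin (p n) → ℝ))
    (hνprob : ∀ n, IsProbabilityMeasure (ν n))
    (hνgauss : ∀ n, IsCGauss (ν n) (S n))
    :
    (psiStar0 (fun x => f (ρ * x)) < ψ →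
      ∃ κbar : ℝ, 0 < κbar ∧
        Tendsto (fun n => dataLaw n (p n) f (θs n) (ν n)
            {q | κbar ≤ margin n (p n) q.1 q.2}) atTop (nhds 1))
    ∧ (ψ ≤ psiStar0 (fun x => f (ρ * x)) →
      ∀ κbar : ℝ, 0 < κbar →
        Tendsto (fun n => dataLaw n (p n) f (θs n) (ν n)
            {q | κbar ≤ margin n (p n) q.1 q.2}) atTop (nhds 0)) := by
  exact main_aux f hf hf01 ψ hψ p hp S θs cc CC hcc hccCC hSlow hSup lam v hortho hdecomp
    ρn hρn hρnpos ρ hρlim ν hνprob hνgauss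

end MaxMargin
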